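/- Let p : Fin n → EuclideanSpace ℝ (Fin d) be an injective family such that every p i is an extreme point of P := convexHull ℝ (Set.range p), and assume 0 ∈ interior P. Then there exists ε > 0 such that for every q : Fin n → EuclideanSpace ℝ (Fin d) satisfying: (1) ‖q i − p i‖ < ε for all i; (2) ‖q i − q j‖ ≤ ‖p i − p j‖ for every edge (i,j) of P; (3) ‖p i‖ ≤ ‖q i‖ for all i; there exists a linear isometry equivalence T : EuclideanSpace ℝ (Fin d) ≃ₗᵢ EuclideanSpace ℝ (Fin d) with T (p i) = q i for all i. -/

import Mathlib

/-- For `i ≠ j`, the pair `(i,j)` is an edge of the polytope `convexHull ℝ (Set.range p)`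
if the closed segment between `p i` and `p j` is an extreme subset of it. -/
def IsEdge {n d : ℕ} (p : Fin n → EuclideanSpace ℝ (Fin d)) (i j : Fin n) : Prop :=
  i ≠ j ∧ IsExtreme ℝ (convexHull ℝ (Set.range p)) (segment ℝ (p i) (p j))

/-!
The length constraints are resisted by a self-stress with one positive direction, so that the
polytope is prestress stable although its edge framework alone may be flexible.

Let `P°` be the polar body. The Hessian `M` of the volume of `P°` as a function of its support
numbers is supported on the vertices and edges of `P`, with positive weights on the edges. Moving
the origin keeps `P` in equilibrium: `∑ M i j • p j = 0`, and to first order the stress varies by a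
matrix `N x` with `∑ N x i j • p j = α i • x`, where the `α i` are the row sums of `M`; these are
positive. Every inward motion of edges and outward motion of vertices can only increase the energy
of a stress with these signs.

Write a nearby admissible configuration as `q = B p + s`, with `B` linear and `s` orthogonal to the
linear images of `p`. For `K = M + N x` the energies satisfy
`0 ≤ 2 ⟪B x, ∑ α i • s i⟫ + energy K s`. The matrix `M` has exactly one positive eigenvalue and
kernel spanned by the coordinates of `p`, whence
`energy M s ≤ 2 / (∑ α i) * ‖∑ α i • s i‖ ^ 2 - κ * ‖s‖ ^ 2`. Choosing
`x = -(∑ α i)⁻¹ • ∑ α i • s i` forces `s = 0`; then equality holds in all constraints, and the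
linear map `B` is an isometry.

The signature of `M` comes from a Bochner-type inequality: summing the second variations of the
facets bounds the second variation of the body, which by induction on the dimension confines the
eigenvalues of a normalized matrix to `(-∞, 0] ∪ {1}`, and Perron's theorem makes the top
eigenvalue simple.
-/

namespace PolytopeRigidity

open scoped RealInnerProductSpace Matrix Topology
open Module (finrank)

/-! ### Faces of a polytope and of its polar body -/

section Faces

variable {E : Type*} [NormedAddCommGroup E] [InnerProductSpace ℝ E]
variable {ι : Type*}

/-- The polar body of the convex hull of the points `p i`. -/
def polarBody (p : ι → E) : Set E := {z | ∀ i, ⟪p i, z⟫ ≤ 1}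

/-- The set of indices of the constraints of the polar body that are active at `z`. -/
noncomputable def activeSet [Fintype ι] (p : ι → E) (z : E) : Finset ι := {i | ⟪p i, z⟫ = 1}

/-- The points `p i`, `i ∈ S`, are exactly those lying on a proper face (possibly empty) of the
polytope with vertices `p i`. The face is encoded by its index set and witnessed by a point of the
relative interior of the dual face of the polar body, on which the constraints in `S` are active.
Thus larger `S` correspond to smaller dual faces, and `S = ∅` to the whole polar body. -/
def IsFace [Fintype ι] (p : ι → E) (S : Finset ι) : Prop := ∃ z ∈ polarBody p, activeSet p z = S

open Classical in
/-- A chosen point of the polar body whose active constraints are exactly those of the face `S`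
(and `0` if `S` is not a face). -/
noncomputable def facePoint [Fintype ι] (p : ι → E) (S : Finset ι) : E :=
  if h : IsFace p S then h.choose else 0

/-- The linear span of the points of `S`. Its orthogonal complement is the direction space of the
dual face of the polar body. -/
def faceSpan (p : ι → E) (S : Finset ι) : Submodule ℝ E := Submodule.span ℝ (p '' S)

/-- The dimension of the linear span of the points of `S`, i.e. the codimension of the dual face. -/
noncomputable def faceRank (p : ι → E) (S : Finset ι) : ℕ := finrank ℝ (faceSpan p S)

/-- The points `p i` positively span the space: no nonzero vector makes a nonpositive inner product
with all of them. -/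
def PositivelySpanning (p : ι → E) : Prop := ∀ w : E, w ≠ 0 → ∃ i, 0 < ⟪p i, w⟫

/-- `U` covers `S` in the face lattice: the dual face of `U` is a facet of the dual face of `S`. -/
structure IsCover [Fintype ι] (p : ι → E) (S U : Finset ι) : Prop where
  isFace_left : IsFace p S
  isFace_right : IsFace p U
  subset : S ⊆ U
  rank_eq : faceRank p U = faceRank p S + 1

variable {p : ι → E} {S T U : Finset ι} {w z : E} {i : ι}

lemma mem_faceSpan (hi : i ∈ S) : p i ∈ faceSpan p S := Submodule.subset_span ⟨i, hi, rfl⟩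

lemma faceSpan_mono (h : S ⊆ T) : faceSpan p S ≤ faceSpan p T :=
  Submodule.span_mono (Set.image_mono (Finset.coe_subset.2 h))

lemma mem_faceSpan_orthogonal : w ∈ (faceSpan p S)ᗮ ↔ ∀ i ∈ S, ⟪p i, w⟫ = 0 := by
  rw [← Submodule.span_singleton_le_iff_mem, faceSpan, ← Submodule.isOrtho_iff_le,
    Submodule.isOrtho_span]
  simp [real_inner_comm]

lemma inner_eq_zero_of_mem (hw : w ∈ (faceSpan p S)ᗮ) (hi : i ∈ S) : ⟪p i, w⟫ = 0 :=
  mem_faceSpan_orthogonal.1 hw i hi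

lemma faceSpan_orthogonal_anti (h : S ⊆ T) : (faceSpan p T)ᗮ ≤ (faceSpan p S)ᗮ :=
  Submodule.orthogonal_le (faceSpan_mono h)

lemma sub_mem_orthogonal_of_inner_eq_one {x y : E} (hx : ∀ i ∈ S, ⟪p i, x⟫ = 1)
    (hy : ∀ i ∈ S, ⟪p i, y⟫ = 1) : x - y ∈ (faceSpan p S)ᗮ :=
  mem_faceSpan_orthogonal.2 fun i hi => by rw [inner_sub_right, hx i hi, hy i hi, sub_self]

variable [Fintype ι]

@[simp]
lemma mem_activeSet : i ∈ activeSet p z ↔ ⟪p i, z⟫ = 1 := by simp [activeSet]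

lemma isFace_activeSet (hz : z ∈ polarBody p) : IsFace p (activeSet p z) := ⟨z, hz, rfl⟩

lemma isFace_empty : IsFace p ∅ := ⟨0, fun i => by simp, by simp [activeSet]⟩

lemma facePoint_mem (h : IsFace p S) : facePoint p S ∈ polarBody p := by
  rw [facePoint, dif_pos h]
  exact h.choose_spec.1

lemma activeSet_facePoint (h : IsFace p S) : activeSet p (facePoint p S) = S := by
  rw [facePoint, dif_pos h]
  exact h.choose_spec.2

lemma inner_facePoint_le (h : IsFace p S) (i : ι) : ⟪p i, facePoint p S⟫ ≤ 1 := facePoint_mem h i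

lemma inner_facePoint_eq_iff (h : IsFace p S) : ⟪p i, facePoint p S⟫ = 1 ↔ i ∈ S := by
  rw [← mem_activeSet, activeSet_facePoint h]

lemma inner_facePoint_eq (h : IsFace p S) (hi : i ∈ S) : ⟪p i, facePoint p S⟫ = 1 :=
  (inner_facePoint_eq_iff h).2 hi

lemma inner_facePoint_lt (h : IsFace p S) (hi : i ∉ S) : ⟪p i, facePoint p S⟫ < 1 :=
  (inner_facePoint_le h i).lt_of_ne (mt (inner_facePoint_eq_iff h).1 hi)

lemma facePoint_sub_mem (hS : IsFace p S) (hT : IsFace p T) (h : S ⊆ T) :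
    facePoint p T - facePoint p S ∈ (faceSpan p S)ᗮ :=
  sub_mem_orthogonal_of_inner_eq_one (fun _ hi => inner_facePoint_eq hT (h hi))
    fun _ hi => inner_facePoint_eq hS hi

lemma inner_facePoint_sub_pos (hS : IsFace p S) (hT : IsFace p T) (hi : i ∈ T) (hiS : i ∉ S) :
    0 < ⟪p i, facePoint p T - facePoint p S⟫ := by
  rw [inner_sub_right, inner_facePoint_eq hT hi]
  exact sub_pos.2 (inner_facePoint_lt hS hiS)

lemma inner_facePoint_sub_nonneg (hS : IsFace p S) (hT : IsFace p T) (hi : i ∈ T) :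
    0 ≤ ⟪p i, facePoint p T - facePoint p S⟫ := by
  rw [inner_sub_right, inner_facePoint_eq hT hi]
  exact sub_nonneg.2 (inner_facePoint_le hS i)

lemma mem_of_mem_faceSpan (hS : IsFace p S) (hT : IsFace p T) (h : S ⊆ T) (hi : i ∈ T)
    (hspan : p i ∈ faceSpan p S) : i ∈ S := by
  by_contra hiS
  exact (inner_facePoint_sub_pos hS hT hi hiS).ne'
    (Submodule.inner_right_of_mem_orthogonal hspan (facePoint_sub_mem hS hT h))

lemma exists_pos_forall_mul_lt {α : Type*} (s : Finset α) (f g : α → ℝ) (h : ∀ a ∈ s, 0 < f a) :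
    ∃ ε > 0, ∀ a ∈ s, ε * g a < f a := by
  have hev : ∀ᶠ ε in nhdsWithin (0 : ℝ) (Set.Ioi 0), ∀ a ∈ s, ε * g a < f a :=
    (Filter.eventually_all_finset s).2 fun a ha => nhdsWithin_le_nhds <|
      ContinuousAt.eventually_lt (by fun_prop) continuousAt_const (by simpa using h a ha)
  obtain ⟨ε, hε, hpos⟩ := (hev.and self_mem_nhdsWithin).exists
  exact ⟨ε, hpos, hε⟩

/- Move the face point of `T` slightly in the direction `w`. -/
lemma IsFace.filter_inner_eq_zero (hT : IsFace p T) (h : ∀ j ∈ T, ⟪p j, w⟫ ≤ 0) :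
    IsFace p {j ∈ T | ⟪p j, w⟫ = 0} := by
  classical
  obtain ⟨ε, hε, hlt⟩ := exists_pos_forall_mul_lt Tᶜ (fun i => 1 - ⟪p i, facePoint p T⟫)
    (fun i => ⟪p i, w⟫) fun i hi => sub_pos.2 (inner_facePoint_lt hT (Finset.mem_compl.1 hi))
  refine ⟨facePoint p T + ε • w, fun i => ?_, ?_⟩
  · rw [inner_add_right, inner_smul_right]
    by_cases hi : i ∈ T
    · linarith [inner_facePoint_le hT i, mul_nonpos_of_nonneg_of_nonpos hε.le (h i hi)]
    · linarith [hlt i (Finset.mem_compl.2 hi)]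
  · ext i
    rw [mem_activeSet, Finset.mem_filter, inner_add_right, inner_smul_right]
    by_cases hi : i ∈ T
    · simp [inner_facePoint_eq hT hi, hi, hε.ne']
    · simp only [hi, false_and, iff_false]
      linarith [hlt i (Finset.mem_compl.2 hi)]

lemma exists_exit_point (hp : PositivelySpanning p) (hS : IsFace p S) (hw : w ∈ (faceSpan p S)ᗮ)
    (h0 : w ≠ 0) : ∃ t > (0 : ℝ), facePoint p S + t • w ∈ polarBody p ∧
      S ⊂ activeSet p (facePoint p S + t • w) := by
  have hne : (Finset.univ.filter fun i => 0 < ⟪p i, w⟫).Nonempty :=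
    (hp w h0).imp fun i hi => by simpa using hi
  obtain ⟨j, hj, hmin⟩ :=
    Finset.exists_min_image _ (fun i => (1 - ⟪p i, facePoint p S⟫) / ⟪p i, w⟫) hne
  simp only [Finset.mem_filter, Finset.mem_univ, true_and] at hj hmin
  have hjS : j ∉ S := fun h => hj.ne' (inner_eq_zero_of_mem hw h)
  set t := (1 - ⟪p j, facePoint p S⟫) / ⟪p j, w⟫ with ht
  have htpos : 0 < t := div_pos (sub_pos.2 (inner_facePoint_lt hS hjS)) hj
  refine ⟨t, htpos, fun i => ?_, fun i hi => ?_, fun h => hjS (h ?_)⟩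
  · rw [inner_add_right, inner_smul_right]
    rcases le_or_gt ⟪p i, w⟫ 0 with hi | hi
    · linarith [inner_facePoint_le hS i, mul_nonpos_of_nonneg_of_nonpos htpos.le hi]
    · linarith [(le_div_iff₀ hi).1 (hmin i hi)]
  · rw [mem_activeSet, inner_add_right, inner_smul_right, inner_eq_zero_of_mem hw hi,
      inner_facePoint_eq hS hi, mul_zero, add_zero]
  · rw [mem_activeSet, inner_add_right, inner_smul_right, ht, div_mul_cancel₀ _ hj.ne']
    ring

/- On `T \ S` both functionals below are defined up to adding a common multiple of the points of
`S`, so the index maximizing the ratio `⟪p j, w⟫ / ⟪p j, z_T - z_S⟫` lies on a face above `S`. -/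
lemma exists_face_of_max_ratio (hS : IsFace p S) (hT : IsFace p T) (h : S ⊂ T)
    (hw : w ∈ (faceSpan p S)ᗮ) : ∃ (s : ℝ) (T' : Finset ι), IsFace p T' ∧ S ⊂ T' ∧ T' ⊆ T ∧
      (∀ j ∈ T', ⟪p j, w⟫ = s * ⟪p j, facePoint p T - facePoint p S⟫) ∧
      ∀ j ∈ T, ⟪p j, w⟫ ≤ s * ⟪p j, facePoint p T - facePoint p S⟫ := by
  classical
  set e := facePoint p T - facePoint p S
  have he : e ∈ (faceSpan p S)ᗮ := facePoint_sub_mem hS hT h.1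
  have hpos : ∀ i ∈ T, i ∉ S → 0 < ⟪p i, e⟫ := fun i => inner_facePoint_sub_pos hS hT
  obtain ⟨j, hj, hmax⟩ := Finset.exists_max_image (T \ S) (fun j => ⟪p j, w⟫ / ⟪p j, e⟫)
    (Finset.sdiff_nonempty.2 h.2)
  simp only [Finset.mem_sdiff, and_imp] at hj hmax
  set s := ⟪p j, w⟫ / ⟪p j, e⟫ with hs
  have hle : ∀ i ∈ T, ⟪p i, w⟫ ≤ s * ⟪p i, e⟫ := fun i hi => by
    by_cases hiS : i ∈ S
    · simp [inner_eq_zero_of_mem hw hiS, inner_eq_zero_of_mem he hiS]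
    · exact (div_le_iff₀ (hpos i hi hiS)).1 (hmax i hi hiS)
  have hiff : ∀ i, ⟪p i, w - s • e⟫ = 0 ↔ ⟪p i, w⟫ = s * ⟪p i, e⟫ := fun i => by
    rw [inner_sub_right, inner_smul_right, sub_eq_zero]
  refine ⟨s, {i ∈ T | ⟪p i, w - s • e⟫ = 0}, hT.filter_inner_eq_zero fun i hi => ?_,
    ⟨fun i hi => ?_, fun hsub => hj.2 (hsub ?_)⟩, Finset.filter_subset _ _, fun i hi => ?_, hle⟩
  · rw [inner_sub_right, inner_smul_right]
    exact sub_nonpos.2 (hle i hi)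
  · simp [h.1 hi, hiff, inner_eq_zero_of_mem hw hi, inner_eq_zero_of_mem he hi]
  · rw [Finset.mem_filter, hiff, hs, div_mul_cancel₀ _ (hpos j hj.1 hj.2).ne']
    exact ⟨hj.1, rfl⟩
  · exact (hiff i).1 (Finset.mem_filter.1 hi).2

variable [FiniteDimensional ℝ E]

lemma faceRank_lt (hS : IsFace p S) (hT : IsFace p T) (h : S ⊂ T) :
    faceRank p S < faceRank p T := by
  refine Submodule.finrank_lt_finrank_of_lt ((faceSpan_mono h.1).lt_of_ne fun he => h.2 ?_)
  exact fun j hj => mem_of_mem_faceSpan hS hT h.1 hj (he ▸ mem_faceSpan hj)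

lemma eq_of_faceRank_le (hS : IsFace p S) (hT : IsFace p T) (h : S ⊆ T)
    (hr : faceRank p T ≤ faceRank p S) : S = T := by
  by_contra hne
  exact (faceRank_lt hS hT (h.ssubset_of_ne hne)).not_ge hr

lemma exists_mem_orthogonal_of_finrank_lt {A B : Submodule ℝ E} (h : finrank ℝ A < finrank ℝ B) :
    ∃ k ∈ B, k ≠ 0 ∧ k ∈ Aᗮ := by
  have h1 := Submodule.finrank_add_finrank_orthogonal A
  have h2 := Submodule.finrank_sup_add_finrank_inf_eq B Aᗮ
  have h3 := Submodule.finrank_le (B ⊔ Aᗮ)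
  have hne : B ⊓ Aᗮ ≠ ⊥ := by
    rintro hbot
    rw [hbot, finrank_bot] at h2
    omega
  obtain ⟨k, hk, h0⟩ := Submodule.exists_mem_ne_zero_of_ne_bot hne
  exact ⟨k, hk.1, h0, hk.2⟩

lemma exists_isFace_between (hS : IsFace p S) (hT : IsFace p T) (h : S ⊂ T)
    (hr : faceRank p S + 1 < faceRank p T) : ∃ T', IsFace p T' ∧ S ⊂ T' ∧ T' ⊂ T := by
  set e := facePoint p T - facePoint p S with he
  have hfr : finrank ℝ ↥(faceSpan p S ⊔ Submodule.span ℝ {e}) < finrank ℝ (faceSpan p T) :=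
    calc _ ≤ finrank ℝ (faceSpan p S) + finrank ℝ (Submodule.span ℝ {e}) :=
          Submodule.finrank_add_le_finrank_add_finrank _ _
      _ ≤ faceRank p S + 1 := by
          gcongr
          · rfl
          · simpa using finrank_span_le_card (R := ℝ) ({e} : Set E)
      _ < _ := hr
  obtain ⟨k, hkT, hk0, hko⟩ := exists_mem_orthogonal_of_finrank_lt hfr
  have hkS : k ∈ (faceSpan p S)ᗮ := Submodule.orthogonal_le le_sup_left hko
  have hke : ⟪k, e⟫ = 0 := Submodule.inner_left_of_mem_orthogonal
    (Submodule.mem_sup_right (Submodule.mem_span_singleton_self e)) hko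
  obtain ⟨s, T', hT', hST', hTT, heq, -⟩ := exists_face_of_max_ratio hS hT h hkS
  refine ⟨T', hT', hST', hTT.ssubset_of_ne ?_⟩
  rintro rfl
  have hperp : k - s • e ∈ (faceSpan p T')ᗮ := mem_faceSpan_orthogonal.2 fun i hi => by
    rw [inner_sub_right, inner_smul_right, sub_eq_zero, heq i hi, he]
  have := Submodule.inner_right_of_mem_orthogonal hkT hperp
  rw [inner_sub_right, inner_smul_right, hke, mul_zero, sub_zero, inner_self_eq_zero] at this
  exact hk0 this

lemma exists_isCover_subset (hS : IsFace p S) (hT : IsFace p T) (h : S ⊂ T) :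
    ∃ U, IsCover p S U ∧ U ⊆ T := by
  induction T using Finset.strongInduction with
  | H T ih =>
    have hlt := faceRank_lt hS hT h
    by_cases hr : faceRank p T = faceRank p S + 1
    · exact ⟨T, ⟨hS, hT, h.1, hr⟩, subset_rfl⟩
    · obtain ⟨T', hT', hST', hTT⟩ := exists_isFace_between hS hT h (by omega)
      obtain ⟨U, hU, hUT⟩ := ih T' hTT hT' hST'
      exact ⟨U, hU, hUT.trans hTT.1⟩

end Faces

/-! ### Normals of dual facets -/

section Normals

variable {E : Type*} [NormedAddCommGroup E] [InnerProductSpace ℝ E]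
variable {ι : Type*} [Fintype ι] {p : ι → E} {S T U V X : Finset ι} {w z : E} {i : ι}

lemma IsCover.ssubset (h : IsCover p S U) : S ⊂ U := by
  refine h.subset.ssubset_of_ne ?_
  rintro rfl
  simpa using h.rank_eq

variable [FiniteDimensional ℝ E]

/-- The outer unit normal of the dual facet of `U`, within the affine span of the dual face
of `S`. -/
noncomputable def unitNormal (p : ι → E) (S U : Finset ι) : E :=
  NormedSpace.normalize ((faceSpan p U).starProjection (facePoint p U - facePoint p S))

/-- The distance from the chosen point of the dual face of `S` to the affine span of its facet
`U`. -/
noncomputable def height (p : ι → E) (S U : Finset ι) : ℝ :=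
  ⟪unitNormal p S U, facePoint p U - facePoint p S⟫

lemma unitNormal_mem : unitNormal p S U ∈ faceSpan p U :=
  Submodule.smul_mem _ _ (Submodule.starProjection_apply_mem _ _)

lemma unitNormal_inner_eq_zero (hw : w ∈ (faceSpan p U)ᗮ) : ⟪unitNormal p S U, w⟫ = 0 :=
  Submodule.inner_right_of_mem_orthogonal unitNormal_mem hw

lemma inner_unitNormal_eq_of_active (hU : IsFace p U) (hz : ∀ i ∈ U, ⟪p i, z⟫ = 1) :
    ⟪unitNormal p S U, z⟫ = ⟪unitNormal p S U, facePoint p U⟫ := by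
  have := unitNormal_inner_eq_zero (S := S)
    (sub_mem_orthogonal_of_inner_eq_one hz fun _ hi => inner_facePoint_eq hU hi)
  rwa [inner_sub_right, sub_eq_zero] at this

omit [Fintype ι] in
lemma inner_starProjection_faceSpan (hi : i ∈ U) :
    ⟪p i, (faceSpan p U).starProjection w⟫ = ⟪p i, w⟫ := by
  have := Submodule.inner_right_of_mem_orthogonal (mem_faceSpan (p := p) hi)
    (Submodule.sub_starProjection_mem_orthogonal w)
  rw [inner_sub_right] at this
  linarith

namespace IsCover

lemma inner_starProjection_pos (h : IsCover p S U) (hi : i ∈ U) (hiS : i ∉ S) :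
    0 < ⟪p i, (faceSpan p U).starProjection (facePoint p U - facePoint p S)⟫ := by
  rw [inner_starProjection_faceSpan hi]
  exact inner_facePoint_sub_pos h.isFace_left h.isFace_right hi hiS

lemma starProjection_ne_zero (h : IsCover p S U) :
    (faceSpan p U).starProjection (facePoint p U - facePoint p S) ≠ 0 := by
  obtain ⟨i, hi, hiS⟩ := Finset.exists_of_ssubset h.ssubset
  intro h0
  simpa [h0] using h.inner_starProjection_pos hi hiS

lemma norm_unitNormal (h : IsCover p S U) : ‖unitNormal p S U‖ = 1 :=
  NormedSpace.norm_normalize_eq_one_iff.2 h.starProjection_ne_zero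

lemma inner_unitNormal_self (h : IsCover p S U) : ⟪unitNormal p S U, unitNormal p S U⟫ = 1 := by
  rw [real_inner_self_eq_norm_sq, h.norm_unitNormal, one_pow]

lemma inner_unitNormal_pos (h : IsCover p S U) (hi : i ∈ U) (hiS : i ∉ S) :
    0 < ⟪p i, unitNormal p S U⟫ := by
  rw [unitNormal, NormedSpace.normalize, inner_smul_right]
  exact mul_pos (inv_pos.2 (norm_pos_iff.2 h.starProjection_ne_zero))
    (h.inner_starProjection_pos hi hiS)

lemma unitNormal_mem_orthogonal (h : IsCover p S U) : unitNormal p S U ∈ (faceSpan p S)ᗮ := by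
  refine Submodule.smul_mem _ _ (mem_faceSpan_orthogonal.2 fun i hi => ?_)
  rw [inner_starProjection_faceSpan (h.subset hi)]
  exact inner_eq_zero_of_mem (facePoint_sub_mem h.isFace_left h.isFace_right h.subset) hi

lemma faceSpan_sup_span_unitNormal (h : IsCover p S U) :
    faceSpan p S ⊔ Submodule.span ℝ {unitNormal p S U} = faceSpan p U := by
  refine Submodule.eq_of_le_of_finrank_le (sup_le (faceSpan_mono h.subset)
    ((Submodule.span_singleton_le_iff_mem _ _).2 unitNormal_mem)) ?_
  have hlt : faceSpan p S < faceSpan p S ⊔ Submodule.span ℝ {unitNormal p S U} := by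
    refine lt_of_le_of_ne le_sup_left fun he => ?_
    have hmem : unitNormal p S U ∈ faceSpan p S := by
      rw [he]
      exact Submodule.mem_sup_right (Submodule.mem_span_singleton_self _)
    have := Submodule.inner_right_of_mem_orthogonal hmem h.unitNormal_mem_orthogonal
    rw [h.inner_unitNormal_self] at this
    exact one_ne_zero this
  exact h.rank_eq.trans_le (Submodule.finrank_lt_finrank_of_lt hlt)

lemma inner_eq_mul (h : IsCover p S U) (hw : w ∈ (faceSpan p S)ᗮ) (hi : i ∈ U) :
    ⟪p i, w⟫ = ⟪p i, unitNormal p S U⟫ * ⟪unitNormal p S U, w⟫ := by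
  have hmem : p i ∈ faceSpan p S ⊔ Submodule.span ℝ {unitNormal p S U} := by
    rw [h.faceSpan_sup_span_unitNormal]
    exact mem_faceSpan hi
  obtain ⟨a, ha, b, hb, hab⟩ := Submodule.mem_sup.1 hmem
  obtain ⟨t, rfl⟩ := Submodule.mem_span_singleton.1 hb
  rw [← hab, inner_add_left, inner_add_left, Submodule.inner_right_of_mem_orthogonal ha hw,
    Submodule.inner_right_of_mem_orthogonal ha h.unitNormal_mem_orthogonal, real_inner_smul_left,
    real_inner_smul_left, h.inner_unitNormal_self]
  ring

lemma mem_orthogonal_of_inner_eq_zero (h : IsCover p S U) (hw : w ∈ (faceSpan p S)ᗮ)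
    (h0 : ⟪unitNormal p S U, w⟫ = 0) : w ∈ (faceSpan p U)ᗮ :=
  mem_faceSpan_orthogonal.2 fun i hi => by rw [h.inner_eq_mul hw hi, h0, mul_zero]

lemma sub_smul_mem_orthogonal (h : IsCover p S U) (hw : w ∈ (faceSpan p S)ᗮ) :
    w - ⟪unitNormal p S U, w⟫ • unitNormal p S U ∈ (faceSpan p U)ᗮ := by
  refine h.mem_orthogonal_of_inner_eq_zero
    (sub_mem hw (Submodule.smul_mem _ _ h.unitNormal_mem_orthogonal)) ?_
  rw [inner_sub_right, inner_smul_right, h.inner_unitNormal_self, mul_one, sub_self]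

lemma inner_sub_facePoint (h : IsCover p S U) (hT : IsFace p T) (hUT : U ⊆ T) :
    ⟪unitNormal p S U, facePoint p T - facePoint p S⟫ = height p S U := by
  rw [height, inner_sub_right, inner_sub_right,
    inner_unitNormal_eq_of_active h.isFace_right fun i hi => inner_facePoint_eq hT (hUT hi)]

lemma height_pos (h : IsCover p S U) : 0 < height p S U := by
  obtain ⟨i, hi, hiS⟩ := Finset.exists_of_ssubset h.ssubset
  have hpos := inner_facePoint_sub_pos h.isFace_left h.isFace_right hi hiS
  rw [h.inner_eq_mul (facePoint_sub_mem h.isFace_left h.isFace_right h.subset) hi] at hpos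
  exact (mul_pos_iff_of_pos_left (h.inner_unitNormal_pos hi hiS)).1 hpos

lemma inner_unitNormal_le (h : IsCover p S U) (hz : z ∈ polarBody p)
    (hzS : ∀ i ∈ S, ⟪p i, z⟫ = 1) :
    ⟪unitNormal p S U, z⟫ ≤ ⟪unitNormal p S U, facePoint p U⟫ := by
  obtain ⟨i, hi, hiS⟩ := Finset.exists_of_ssubset h.ssubset
  have heq := h.inner_eq_mul (sub_mem_orthogonal_of_inner_eq_one
    (fun i hi => inner_facePoint_eq h.isFace_right (h.subset hi)) hzS) hi
  rw [inner_sub_right, inner_sub_right, inner_facePoint_eq h.isFace_right hi] at heq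
  refine sub_nonneg.1 (nonneg_of_mul_nonneg_right ?_ (h.inner_unitNormal_pos hi hiS))
  linarith [hz i]

lemma inner_unitNormal_lt (h : IsCover p S U) (hT : IsFace p T) (hST : S ⊆ T) (hUT : ¬U ⊆ T) :
    ⟪unitNormal p S U, facePoint p T⟫ < ⟪unitNormal p S U, facePoint p U⟫ := by
  have hTS : ∀ i ∈ S, ⟪p i, facePoint p T⟫ = 1 := fun i hi => inner_facePoint_eq hT (hST hi)
  refine (h.inner_unitNormal_le (facePoint_mem hT) hTS).lt_of_ne fun he => hUT fun j hj => ?_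
  have := h.inner_eq_mul (sub_mem_orthogonal_of_inner_eq_one
    (fun i hi => inner_facePoint_eq h.isFace_right (h.subset hi)) hTS) hj
  rw [inner_sub_right, inner_sub_right, inner_facePoint_eq h.isFace_right hj, he, sub_self,
    mul_zero] at this
  exact (inner_facePoint_eq_iff hT).1 (by linarith)

lemma not_subset (h : IsCover p S U) (h' : IsCover p S V) (hne : U ≠ V) : ¬U ⊆ V := fun hs =>
  hne <| eq_of_faceRank_le h.isFace_right h'.isFace_right hs (by rw [h.rank_eq, h'.rank_eq])

end IsCover

lemma exists_isCover_exit (hp : PositivelySpanning p) (hS : IsFace p S)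
    (hw : w ∈ (faceSpan p S)ᗮ) (h0 : w ≠ 0) :
    ∃ t > (0 : ℝ), facePoint p S + t • w ∈ polarBody p ∧
      ∃ U, IsCover p S U ∧ t * ⟪unitNormal p S U, w⟫ = height p S U := by
  obtain ⟨t, ht, hmem, hss⟩ := exists_exit_point hp hS hw h0
  obtain ⟨U, hU, hUT⟩ := exists_isCover_subset hS (isFace_activeSet hmem) hss
  refine ⟨t, ht, hmem, U, hU, ?_⟩
  rw [height, inner_sub_right, ← inner_unitNormal_eq_of_active hU.isFace_right
    fun i hi => mem_activeSet.1 (hUT hi), inner_add_right, inner_smul_right, add_sub_cancel_left]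

lemma exists_isCover_inner_pos (hp : PositivelySpanning p) (hS : IsFace p S)
    (hw : w ∈ (faceSpan p S)ᗮ) (h0 : w ≠ 0) : ∃ U, IsCover p S U ∧ 0 < ⟪unitNormal p S U, w⟫ := by
  obtain ⟨t, ht, -, U, hU, he⟩ := exists_isCover_exit hp hS hw h0
  exact ⟨U, hU, (mul_pos_iff_of_pos_left ht).1 (he ▸ hU.height_pos)⟩

lemma eq_zero_of_forall_inner_le_zero (hp : PositivelySpanning p) (hS : IsFace p S)
    (hw : w ∈ (faceSpan p S)ᗮ) (h : ∀ U, IsCover p S U → ⟪unitNormal p S U, w⟫ ≤ 0) : w = 0 := by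
  by_contra h0
  obtain ⟨U, hU, hpos⟩ := exists_isCover_inner_pos hp hS hw h0
  exact hpos.not_ge (h U hU)

omit [Fintype ι] in
lemma exists_ne_zero_mem_orthogonal (hr : faceRank p S < finrank ℝ E) :
    ∃ w ∈ (faceSpan p S)ᗮ, w ≠ 0 := by
  obtain ⟨w, -, h0, hw⟩ := exists_mem_orthogonal_of_finrank_lt (A := faceSpan p S) (B := ⊤)
    (by rwa [finrank_top])
  exact ⟨w, hw, h0⟩

lemma exists_isCover (hp : PositivelySpanning p) (hS : IsFace p S)
    (hr : faceRank p S < finrank ℝ E) : ∃ U, IsCover p S U := by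
  obtain ⟨w, hw, h0⟩ := exists_ne_zero_mem_orthogonal hr
  exact (exists_isCover_inner_pos hp hS hw h0).imp fun _ h => h.1

lemma add_mem_polarBody (hp : PositivelySpanning p) (hS : IsFace p S) (hw : w ∈ (faceSpan p S)ᗮ)
    (h : ∀ U, IsCover p S U → ⟪unitNormal p S U, w⟫ ≤ height p S U) :
    facePoint p S + w ∈ polarBody p := by
  rcases eq_or_ne w 0 with rfl | h0
  · simpa using facePoint_mem hS
  obtain ⟨t, ht, hmem, U, hU, he⟩ := exists_isCover_exit hp hS hw h0
  have hpos : 0 < ⟪unitNormal p S U, w⟫ := (mul_pos_iff_of_pos_left ht).1 (he ▸ hU.height_pos)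
  have ht1 : 1 ≤ t := by
    by_contra! hc
    exact ((mul_lt_of_lt_one_left hpos hc).trans_eq' he).not_ge (h U hU)
  intro i
  have hi := hmem i
  rw [inner_add_right] at hi ⊢
  rw [inner_smul_right] at hi
  rcases le_or_gt ⟪p i, w⟫ 0 with hneg | hneg
  · linarith [inner_facePoint_le hS i]
  · linarith [le_mul_of_one_le_left hneg.le ht1]

lemma inner_nonpos_of_forall_isCover (hS : IsFace p S) (hT : IsFace p T) (hST : S ⊆ T)
    (hw : w ∈ (faceSpan p S)ᗮ)
    (h : ∀ U, IsCover p S U → U ⊆ T → ⟪unitNormal p S U, w⟫ ≤ 0) : ∀ j ∈ T, ⟪p j, w⟫ ≤ 0 := by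
  rcases eq_or_ne S T with rfl | hne
  · exact fun j hj => (inner_eq_zero_of_mem hw hj).le
  obtain ⟨s, T', hT', hST', hTT, heq, hle⟩ :=
    exists_face_of_max_ratio hS hT (hST.ssubset_of_ne hne) hw
  obtain ⟨U, hU, hUT⟩ := exists_isCover_subset hS hT' hST'
  obtain ⟨i, hi, hiS⟩ := Finset.exists_of_ssubset hU.ssubset
  have hs : s ≤ 0 := by
    have hw_nonpos : ⟪p i, w⟫ ≤ 0 := by
      rw [hU.inner_eq_mul hw hi]
      exact mul_nonpos_of_nonneg_of_nonpos (hU.inner_unitNormal_pos hi hiS).le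
        (h U hU (hUT.trans hTT))
    rw [heq i (hUT hi)] at hw_nonpos
    exact nonpos_of_mul_nonpos_left hw_nonpos
      (inner_facePoint_sub_pos hS hT (hTT (hUT hi)) hiS)
  exact fun j hj => (hle j hj).trans
    (mul_nonpos_of_nonpos_of_nonneg hs (inner_facePoint_sub_nonneg hS hT hj))

end Normals

/-! ### The diamond property -/

section Diamond

variable {E : Type*} [NormedAddCommGroup E] [InnerProductSpace ℝ E]
variable {ι : Type*} [Fintype ι] {p : ι → E} {S U V W X : Finset ι}

/-- A flag of three faces of consecutive ranks; the dual face of `W` is a codimension two face of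
the dual face of `S`, and the one of `U` is a facet between them. -/
structure IsFlag (p : ι → E) (S U W : Finset ι) : Prop where
  lower : IsCover p S U
  upper : IsCover p U W

variable [FiniteDimensional ℝ E]

/-- The cosine of the angle between the outer normals of the dual facets `U` and `V`. -/
noncomputable def dihedralCos (p : ι → E) (S U V : Finset ι) : ℝ :=
  ⟪unitNormal p S U, unitNormal p S V⟫

/-- The sine of the angle between the outer normals of the dual facets `U` and `V` meeting in the
dual face of `W`. -/
noncomputable def dihedralSin (p : ι → E) (S U V W : Finset ι) : ℝ :=
  ⟪unitNormal p U W, unitNormal p S V⟫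

lemma dihedralCos_comm (S U V : Finset ι) : dihedralCos p S U V = dihedralCos p S V U :=
  real_inner_comm _ _

namespace IsFlag

omit [FiniteDimensional ℝ E] in
lemma of_subset (h : IsCover p S U) (hW : IsFace p W) (hr : faceRank p W = faceRank p S + 2)
    (hUW : U ⊆ W) : IsFlag p S U W :=
  ⟨h, h.isFace_right, hW, hUW, by rw [hr, h.rank_eq]⟩

omit [FiniteDimensional ℝ E] in
lemma rank_eq (h : IsFlag p S U W) : faceRank p W = faceRank p S + 2 := by
  rw [h.upper.rank_eq, h.lower.rank_eq]

omit [FiniteDimensional ℝ E] in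
lemma subset (h : IsFlag p S U W) : S ⊆ W := h.lower.subset.trans h.upper.subset

lemma upper_normal_mem (h : IsFlag p S U W) : unitNormal p U W ∈ (faceSpan p S)ᗮ :=
  faceSpan_orthogonal_anti h.lower.subset h.upper.unitNormal_mem_orthogonal

lemma inner_normals (h : IsFlag p S U W) : ⟪unitNormal p S U, unitNormal p U W⟫ = 0 :=
  unitNormal_inner_eq_zero h.upper.unitNormal_mem_orthogonal

lemma inner_normals' (h : IsFlag p S U W) : ⟪unitNormal p U W, unitNormal p S U⟫ = 0 := by
  rw [real_inner_comm, h.inner_normals]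

lemma exists_ne (h : IsFlag p S U W) : ∃ V, IsFlag p S V W ∧ V ≠ U := by
  have hS := h.lower.isFace_left
  have hW := h.upper.isFace_right
  obtain ⟨s, T, hT, hST, hTW, heq, hle⟩ :=
    exists_face_of_max_ratio hS hW (h.lower.ssubset.trans h.upper.ssubset) h.upper_normal_mem
  obtain ⟨V, hV, hVT⟩ := exists_isCover_subset hS hT hST
  refine ⟨V, of_subset hV hW h.rank_eq (hVT.trans hTW), ?_⟩
  rintro rfl
  obtain ⟨i, hi, hiS⟩ := Finset.exists_of_ssubset hV.ssubset
  have hs : s = 0 := by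
    have := heq i (hVT hi)
    rw [inner_eq_zero_of_mem h.upper.unitNormal_mem_orthogonal hi] at this
    exact (mul_eq_zero.1 this.symm).resolve_right
      (inner_facePoint_sub_pos hS hW (hTW (hVT hi)) hiS).ne'
  obtain ⟨j, hj, hjV⟩ := Finset.exists_of_ssubset h.upper.ssubset
  have := hle j hj
  rw [hs, zero_mul] at this
  exact (h.upper.inner_unitNormal_pos hj hjV).not_ge this

lemma eq_add_of_mem (h : IsFlag p S U W) {x : E} (hx : x ∈ (faceSpan p S)ᗮ)
    (hxW : x ∈ faceSpan p W) :
    x = ⟪unitNormal p S U, x⟫ • unitNormal p S U + ⟪unitNormal p U W, x⟫ • unitNormal p U W := by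
  set a := ⟪unitNormal p S U, x⟫ • unitNormal p S U with ha
  set b := ⟪unitNormal p U W, x⟫ • unitNormal p U W
  have hb : ⟪unitNormal p U W, x - a⟫ = ⟪unitNormal p U W, x⟫ := by
    rw [inner_sub_right, ha, inner_smul_right, h.inner_normals', mul_zero, sub_zero]
  have horth : x - a - b ∈ (faceSpan p W)ᗮ := by
    have := h.upper.sub_smul_mem_orthogonal (h.lower.sub_smul_mem_orthogonal hx)
    rwa [← ha, hb] at this
  have hmem : x - a - b ∈ faceSpan p W :=
    sub_mem (sub_mem hxW (Submodule.smul_mem _ _ (faceSpan_mono h.upper.subset unitNormal_mem)))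
      (Submodule.smul_mem _ _ unitNormal_mem)
  have := Submodule.inner_right_of_mem_orthogonal hmem horth
  rwa [inner_self_eq_zero, sub_sub, sub_eq_zero] at this

section Pair

variable (hU : IsFlag p S U W) (hV : IsFlag p S V W) (hne : U ≠ V)
include hU hV

lemma unitNormal_eq : unitNormal p S V =
    dihedralCos p S U V • unitNormal p S U + dihedralSin p S U V W • unitNormal p U W :=
  hU.eq_add_of_mem hV.lower.unitNormal_mem_orthogonal
    (faceSpan_mono hV.upper.subset unitNormal_mem)

lemma cos_sq_add_sin_sq : dihedralCos p S U V ^ 2 + dihedralSin p S U V W ^ 2 = 1 := by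
  have h := hV.lower.inner_unitNormal_self
  rw [hU.unitNormal_eq hV] at h
  simp only [inner_add_left, inner_add_right, real_inner_smul_left, inner_smul_right,
    hU.lower.inner_unitNormal_self, hU.upper.inner_unitNormal_self, hU.inner_normals,
    hU.inner_normals'] at h
  linarith

include hne

lemma sin_pos : 0 < dihedralSin p S U V W := by
  obtain ⟨i, hi, hiU⟩ := Finset.not_subset.1 (hV.lower.not_subset hU.lower hne.symm)
  have hpos := hU.upper.inner_unitNormal_pos (hV.upper.subset hi) hiU
  rw [hV.lower.inner_eq_mul hU.upper_normal_mem hi] at hpos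
  rw [dihedralSin, real_inner_comm]
  exact (mul_pos_iff_of_pos_left
    (hV.lower.inner_unitNormal_pos hi fun h => hiU (hU.lower.subset h))).1 hpos

lemma sin_comm : dihedralSin p S U V W = dihedralSin p S V U W := by
  have hUV := hU.cos_sq_add_sin_sq hV
  have hVU := hV.cos_sq_add_sin_sq hU
  rw [dihedralCos_comm] at hUV
  exact (pow_left_inj₀ (hU.sin_pos hV hne).le (hV.sin_pos hU hne.symm).le two_ne_zero).1
    (by linarith)

lemma upper_unitNormal_eq : unitNormal p V W =
    dihedralSin p S U V W • unitNormal p S U - dihedralCos p S U V • unitNormal p U W := by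
  have heq := hV.unitNormal_eq hU
  rw [hU.unitNormal_eq hV, dihedralCos_comm, ← hU.sin_comm hV hne] at heq
  refine smul_right_injective E (hU.sin_pos hV hne).ne' (?_ : _ • _ = _ • _)
  rw [← sub_eq_iff_eq_add'.2 heq]
  match_scalars
  · linear_combination -hU.cos_sq_add_sin_sq hV
  · ring

/- The pairs of normals at the two facets containing the dual face of `W` are obtained from one
another by a rotation followed by a reflection of the normal plane. -/
lemma normals_bilinear_comm (z w : E) :
    ⟪unitNormal p U W, z⟫ * ⟪unitNormal p S U, w⟫ + ⟪unitNormal p V W, z⟫ * ⟪unitNormal p S V, w⟫ =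
    ⟪unitNormal p S U, z⟫ * ⟪unitNormal p U W, w⟫ +
      ⟪unitNormal p S V, z⟫ * ⟪unitNormal p V W, w⟫ := by
  rw [hU.upper_unitNormal_eq hV hne, hU.unitNormal_eq hV]
  simp only [inner_add_left, inner_sub_left, real_inner_smul_left]
  linear_combination (⟪unitNormal p S U, z⟫ * ⟪unitNormal p U W, w⟫ -
    ⟪unitNormal p U W, z⟫ * ⟪unitNormal p S U, w⟫) * hU.cos_sq_add_sin_sq hV

lemma eq_or_eq (hX : IsFlag p S X W) : X = U ∨ X = V := by
  by_contra! hc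
  have hVX := hV.sin_pos hX hc.2.symm
  have hXV := hX.sin_pos hV hc.2
  rw [dihedralSin, hU.upper_unitNormal_eq hV hne, hU.unitNormal_eq hX] at hVX
  rw [dihedralSin, hU.upper_unitNormal_eq hX hc.1.symm, hU.unitNormal_eq hV] at hXV
  simp only [inner_add_right, inner_sub_left, real_inner_smul_left, inner_smul_right,
    hU.lower.inner_unitNormal_self, hU.upper.inner_unitNormal_self, hU.inner_normals,
    hU.inner_normals'] at hVX hXV
  linarith

lemma inner_upper_le {w : E} {c : ℝ} (hw : ⟪unitNormal p S U, w⟫ = c * height p S U)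
    (hle : ⟪unitNormal p S V, w⟫ ≤ c * height p S V) :
    ⟪unitNormal p U W, w⟫ ≤ c * ⟪unitNormal p U W, facePoint p W - facePoint p S⟫ := by
  rw [← hV.lower.inner_sub_facePoint hV.upper.isFace_right hV.upper.subset,
    hU.unitNormal_eq hV, inner_add_left, inner_add_left, real_inner_smul_left,
    real_inner_smul_left, real_inner_smul_left, real_inner_smul_left, hw,
    hU.lower.inner_sub_facePoint hU.upper.isFace_right hU.upper.subset] at hle
  exact le_of_mul_le_mul_left (by linarith) (hU.sin_pos hV hne)

end Pair

end IsFlag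

open Classical in
/-- The facet of the dual face of `S` that shares with the facet `U` the ridge `W`
(and `U` itself if `S`, `U`, `W` is not a flag). -/
noncomputable def adjacent (p : ι → E) (S U W : Finset ι) : Finset ι :=
  if h : IsFlag p S U W then h.exists_ne.choose else U

namespace IsFlag

lemma adjacent (h : IsFlag p S U W) : IsFlag p S (adjacent p S U W) W := by
  rw [PolytopeRigidity.adjacent, dif_pos h]
  exact h.exists_ne.choose_spec.1

lemma ne_adjacent (h : IsFlag p S U W) : U ≠ PolytopeRigidity.adjacent p S U W := by
  rw [PolytopeRigidity.adjacent, dif_pos h]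
  exact h.exists_ne.choose_spec.2.symm

lemma eq_adjacent (h : IsFlag p S U W) (hV : IsFlag p S V W) (hne : V ≠ U) :
    V = PolytopeRigidity.adjacent p S U W :=
  (h.eq_or_eq h.adjacent h.ne_adjacent hV).resolve_left hne

lemma adjacent_adjacent (h : IsFlag p S U W) :
    PolytopeRigidity.adjacent p S (PolytopeRigidity.adjacent p S U W) W = U :=
  (h.adjacent.eq_adjacent h h.ne_adjacent).symm

end IsFlag

end Diamond

/-! ### Connectivity of the facets through ridges -/

section Connectivity

variable {E : Type*} [NormedAddCommGroup E] [InnerProductSpace ℝ E] [FiniteDimensional ℝ E]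
variable {ι : Type*} [Fintype ι] {p : ι → E} {S U V X U₀ U₁ : Finset ι} {w : E}

lemma exists_max_ratio_isCover {P : Finset ι → Prop} (hcov : ∀ U, P U → IsCover p S U)
    (hP : P U₀) (w : E) : ∃ (U : Finset ι) (c : ℝ), P U ∧
      ⟪unitNormal p S U, w⟫ = c * height p S U ∧
      ∀ V, P V → ⟪unitNormal p S V, w⟫ ≤ c * height p S V := by
  classical
  obtain ⟨U, hU, hmax⟩ := Finset.exists_max_image (Finset.univ.filter P)
    (fun U => ⟪unitNormal p S U, w⟫ / height p S U) ⟨U₀, by simpa using hP⟩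
  simp only [Finset.mem_filter, Finset.mem_univ, true_and] at hU hmax
  exact ⟨U, _, hU, (div_mul_cancel₀ _ (hcov U hU).height_pos.ne').symm,
    fun V hV => (div_le_iff₀ (hcov V hV).height_pos).1 (hmax V hV)⟩

lemma IsCover.lt_one_of_inner_eq (hU : IsCover p S U) (hV : IsCover p S V) (hne : U ≠ V) {c : ℝ}
    (hc : ⟪unitNormal p S U, facePoint p V - facePoint p S⟫ = c * height p S U) : c < 1 := by
  have hlt := hU.inner_unitNormal_lt hV.isFace_right hV.subset (hU.not_subset hV hne)
  have hpos := hU.height_pos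
  rw [inner_sub_right] at hc
  rw [height, inner_sub_right] at hc hpos
  by_contra! h1
  linarith [le_mul_of_one_le_left hpos.le h1]

lemma IsCover.inner_unitNormal_le_mul_height (hp : PositivelySpanning p) (hU : IsCover p S U)
    (hV : IsCover p S V) {c : ℝ} (hc : 0 < c) (hw : w ∈ (faceSpan p U)ᗮ)
    (hle : ∀ W, IsCover p U W → ⟪unitNormal p U W, w⟫ ≤ c * height p U W) :
    ⟪unitNormal p S V, c • (facePoint p U - facePoint p S) + w⟫ ≤ c * height p S V := by
  have hmem : facePoint p U + c⁻¹ • w ∈ polarBody p :=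
    add_mem_polarBody hp hU.isFace_right (Submodule.smul_mem _ c⁻¹ hw) fun W hW => by
      rw [inner_smul_right, inv_mul_le_iff₀ hc]
      exact hle W hW
  have hle' := hV.inner_unitNormal_le hmem fun i hi => by
    rw [inner_add_right, inner_smul_right, inner_eq_zero_of_mem hw (hU.subset hi),
      inner_facePoint_eq hU.isFace_right (hU.subset hi), mul_zero, add_zero]
  have hdecomp : c • (facePoint p U - facePoint p S) + w =
      c • (facePoint p U + c⁻¹ • w - facePoint p S) := by
    rw [add_sub_right_comm, smul_add, smul_inv_smul₀ hc.ne']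
  rw [hdecomp, inner_smul_right, height, inner_sub_right, inner_sub_right]
  exact mul_le_mul_of_nonneg_left (sub_le_sub_right hle' _) hc.le

/- Among the facets in the closed class `P`, take one maximizing `⟪n_U, w⟫ / H_U`, where `w` points
from the dual face of `S` to its facet `U₁`; this local maximum is global, so it is `U₁`. -/
theorem adjacent_induction (hp : PositivelySpanning p) (hS : IsFace p S)
    (hr : faceRank p S + 2 ≤ finrank ℝ E) (P : Finset ι → Prop)
    (hP : ∀ U W, IsFlag p S U W → P U → P (adjacent p S U W))
    (h₀ : IsCover p S U₀) (hP₀ : P U₀) (h₁ : IsCover p S U₁) : P U₁ := by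
  set w := facePoint p U₁ - facePoint p S with hw
  have hwS : w ∈ (faceSpan p S)ᗮ := facePoint_sub_mem hS h₁.isFace_right h₁.subset
  have hw₁ : ⟪unitNormal p S U₁, w⟫ = height p S U₁ := rfl
  obtain ⟨U, c, ⟨hU, hPU⟩, heq, hmax⟩ := exists_max_ratio_isCover
    (P := fun U => IsCover p S U ∧ P U) (fun U h => h.1) ⟨h₀, hP₀⟩ w
  rcases eq_or_ne U U₁ with rfl | hne
  · exact hPU
  exfalso
  have hc1 : c < 1 := hU.lt_one_of_inner_eq h₁ hne heq
  set u := w - c • (facePoint p U - facePoint p S) with hu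
  have huU : u ∈ (faceSpan p U)ᗮ := by
    refine hU.mem_orthogonal_of_inner_eq_zero (sub_mem hwS
      (Submodule.smul_mem _ _ (facePoint_sub_mem hS hU.isFace_right hU.subset))) ?_
    rw [inner_sub_right, inner_smul_right, heq, height, sub_self]
  have hule : ∀ W, IsCover p U W → ⟪unitNormal p U W, u⟫ ≤ c * height p U W := fun W hW => by
    have hflag : IsFlag p S U W := ⟨hU, hW⟩
    have := hflag.inner_upper_le hflag.adjacent hflag.ne_adjacent heq
      (hmax _ ⟨hflag.adjacent.lower, hP U W hflag hPU⟩)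
    simp only [hu, height, inner_sub_right, inner_smul_right] at this ⊢
    linarith
  have hc0 : 0 < c := by
    by_contra! hc0
    have hu0 : u = 0 := eq_zero_of_forall_inner_le_zero hp hU.isFace_right huU fun W hW =>
      (hule W hW).trans (mul_nonpos_of_nonpos_of_nonneg hc0 hW.height_pos.le)
    obtain ⟨W, hW⟩ := exists_isCover hp hU.isFace_right (by have := hU.rank_eq; omega)
    have hWc := hule W hW
    rw [hu0, inner_zero_right] at hWc
    have : c = 0 := hc0.antisymm (nonneg_of_mul_nonneg_left hWc hW.height_pos)
    rw [this, zero_smul, sub_zero] at hu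
    rw [← hu, hu0, inner_zero_right] at hw₁
    exact h₁.height_pos.ne hw₁
  have hle := hU.inner_unitNormal_le_mul_height hp h₁ hc0 huU hule
  rw [hu, add_sub_cancel, hw₁] at hle
  exact (mul_lt_of_lt_one_left h₁.height_pos hc1).not_ge hle

theorem adjacent_induction_subset (hS : IsFace p S) (hX : IsFace p X) (P : Finset ι → Prop)
    (hP : ∀ U W, IsFlag p S U W → W ⊆ X → P U → P (adjacent p S U W))
    (h₀ : IsCover p S U₀) (h₀X : U₀ ⊆ X) (hP₀ : P U₀) (h₁ : IsCover p S U₁) (h₁X : U₁ ⊆ X) :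
    P U₁ := by
  have hSX := h₀.subset.trans h₀X
  set w := facePoint p U₁ - facePoint p S with hw
  have hwS : w ∈ (faceSpan p S)ᗮ := facePoint_sub_mem hS h₁.isFace_right h₁.subset
  obtain ⟨U, c, ⟨hU, hUX, hPU⟩, heq, hmax⟩ := exists_max_ratio_isCover
    (P := fun U => IsCover p S U ∧ U ⊆ X ∧ P U) (fun U h => h.1) ⟨h₀, h₀X, hP₀⟩ w
  rcases eq_or_ne U U₁ with rfl | hne
  · exact hPU
  exfalso
  have hc1 : c < 1 := hU.lt_one_of_inner_eq h₁ hne heq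
  set e := facePoint p X - facePoint p S with he
  have huU : w - c • e ∈ (faceSpan p U)ᗮ := by
    refine hU.mem_orthogonal_of_inner_eq_zero
      (sub_mem hwS (Submodule.smul_mem _ _ (facePoint_sub_mem hS hX hSX))) ?_
    rw [inner_sub_right, inner_smul_right, heq, hU.inner_sub_facePoint hX hUX, sub_self]
  have hle : ∀ j ∈ X, ⟪p j, w - c • e⟫ ≤ 0 :=
    inner_nonpos_of_forall_isCover hU.isFace_right hX hUX huU fun W hW hWX => by
      have hflag : IsFlag p S U W := ⟨hU, hW⟩
      have := hflag.inner_upper_le hflag.adjacent hflag.ne_adjacent heq (hmax _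
        ⟨hflag.adjacent.lower, hflag.adjacent.upper.subset.trans hWX, hP U W hflag hWX hPU⟩)
      have he' : ⟪unitNormal p U W, e⟫ = ⟪unitNormal p U W, facePoint p W - facePoint p S⟫ := by
        rw [he, inner_sub_right, inner_unitNormal_eq_of_active hW.isFace_right
          fun i hi => inner_facePoint_eq hX (hWX hi), ← inner_sub_right]
      rw [inner_sub_right, inner_smul_right, he']
      exact sub_nonpos.2 this
  obtain ⟨j, hj, hjS⟩ := Finset.exists_of_ssubset h₁.ssubset
  have hjle := hle j (h₁X hj)
  rw [inner_sub_right, inner_smul_right, hw, he, inner_sub_right, inner_sub_right,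
    inner_facePoint_eq h₁.isFace_right hj, inner_facePoint_eq hX (h₁X hj), sub_nonpos] at hjle
  exact (mul_lt_of_lt_one_left (sub_pos.2 (inner_facePoint_lt hS hjS)) hc1).not_ge hjle

end Connectivity

/-! ### Sums over flags -/

section FlagSum

variable {E : Type*} [NormedAddCommGroup E] [InnerProductSpace ℝ E]
variable {ι : Type*} [Fintype ι] {p : ι → E} {S U X : Finset ι}

open Classical in
/-- The covers of `S` contained in `X`; for `X = Finset.univ`, all the facets of the dual face
of `S`. -/
noncomputable def coversIn (p : ι → E) (X S : Finset ι) : Finset (Finset ι) :=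
  Finset.univ.filter fun U => IsCover p S U ∧ U ⊆ X

@[simp]
lemma mem_coversIn : U ∈ coversIn p X S ↔ IsCover p S U ∧ U ⊆ X := by
  simp [coversIn]

lemma mem_coversIn_univ : U ∈ coversIn p Finset.univ S ↔ IsCover p S U := by
  simp

/-- The sum of `f U W` over all flags `S`, `U`, `W` with `W ⊆ X`. -/
noncomputable def flagSum (p : ι → E) (X S : Finset ι) (f : Finset ι → Finset ι → ℝ) : ℝ :=
  ∑ U ∈ coversIn p X S, ∑ W ∈ coversIn p X U, f U W

variable {f g : Finset ι → Finset ι → ℝ}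

lemma flagSum_eq_sum_sigma (X S : Finset ι) (f : Finset ι → Finset ι → ℝ) :
    flagSum p X S f = ∑ x ∈ (coversIn p X S).sigma (coversIn p X), f x.1 x.2 := by
  rw [flagSum, Finset.sum_sigma]

lemma mem_sigma_coversIn {x : (_ : Finset ι) × Finset ι} :
    x ∈ (coversIn p X S).sigma (coversIn p X) ↔ IsFlag p S x.1 x.2 ∧ x.2 ⊆ X := by
  rw [Finset.mem_sigma, mem_coversIn, mem_coversIn]
  exact ⟨fun h => ⟨⟨h.1.1, h.2.1⟩, h.2.2⟩,
    fun h => ⟨⟨h.1.lower, h.1.upper.subset.trans h.2⟩, h.1.upper, h.2⟩⟩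

lemma flagSum_add (X S : Finset ι) (f g : Finset ι → Finset ι → ℝ) :
    flagSum p X S (fun U W => f U W + g U W) = flagSum p X S f + flagSum p X S g := by
  simp only [flagSum, Finset.sum_add_distrib]

lemma flagSum_sub (X S : Finset ι) (f g : Finset ι → Finset ι → ℝ) :
    flagSum p X S (fun U W => f U W - g U W) = flagSum p X S f - flagSum p X S g := by
  simp only [flagSum, Finset.sum_sub_distrib]

lemma flagSum_const_mul (X S : Finset ι) (c : ℝ) (f : Finset ι → Finset ι → ℝ) :
    flagSum p X S (fun U W => c * f U W) = c * flagSum p X S f := by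
  simp only [flagSum, Finset.mul_sum]

lemma flagSum_congr (h : ∀ U W, IsFlag p S U W → W ⊆ X → f U W = g U W) :
    flagSum p X S f = flagSum p X S g := by
  rw [flagSum_eq_sum_sigma, flagSum_eq_sum_sigma]
  exact Finset.sum_congr rfl fun x hx =>
    h _ _ (mem_sigma_coversIn.1 hx).1 (mem_sigma_coversIn.1 hx).2

lemma flagSum_nonneg (h : ∀ U W, IsFlag p S U W → W ⊆ X → 0 ≤ f U W) : 0 ≤ flagSum p X S f := by
  rw [flagSum_eq_sum_sigma]
  exact Finset.sum_nonneg fun x hx =>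
    h _ _ (mem_sigma_coversIn.1 hx).1 (mem_sigma_coversIn.1 hx).2

lemma eq_zero_of_flagSum_eq_zero (h : ∀ U W, IsFlag p S U W → W ⊆ X → 0 ≤ f U W)
    (h0 : flagSum p X S f = 0) {U W : Finset ι} (hW : IsFlag p S U W) (hWX : W ⊆ X) :
    f U W = 0 := by
  rw [flagSum_eq_sum_sigma] at h0
  exact (Finset.sum_eq_zero_iff_of_nonneg fun x hx =>
    h _ _ (mem_sigma_coversIn.1 hx).1 (mem_sigma_coversIn.1 hx).2).1 h0 ⟨U, W⟩
      (mem_sigma_coversIn.2 ⟨hW, hWX⟩)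

variable [FiniteDimensional ℝ E]

lemma flagSum_adjacent (X S : Finset ι) (f : Finset ι → Finset ι → ℝ) :
    flagSum p X S (fun U W => f (adjacent p S U W) W) = flagSum p X S f := by
  rw [flagSum_eq_sum_sigma, flagSum_eq_sum_sigma]
  refine Finset.sum_nbij' (fun x => ⟨adjacent p S x.1 x.2, x.2⟩)
    (fun x => ⟨adjacent p S x.1 x.2, x.2⟩) ?_ ?_ ?_ ?_ fun _ _ => rfl <;> intro x hx <;>
    rw [mem_sigma_coversIn] at hx
  · exact mem_sigma_coversIn.2 ⟨hx.1.adjacent, hx.2⟩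
  · exact mem_sigma_coversIn.2 ⟨hx.1.adjacent, hx.2⟩
  · simp only [hx.1.adjacent_adjacent]
  · simp only [hx.1.adjacent_adjacent]

lemma flagSum_congr_of_symm (h : ∀ U W, IsFlag p S U W → W ⊆ X →
    f U W + f (adjacent p S U W) W = g U W + g (adjacent p S U W) W) :
    flagSum p X S f = flagSum p X S g := by
  have hsum : flagSum p X S (fun U W => f U W + f (adjacent p S U W) W) =
      flagSum p X S fun U W => g U W + g (adjacent p S U W) W := flagSum_congr h
  rw [flagSum_add, flagSum_add, flagSum_adjacent X S f, flagSum_adjacent X S g] at hsum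
  linarith

lemma flagSum_normals_comm (g : Finset ι → ℝ) (z w : Finset ι → E) :
    flagSum p X S (fun U W => g W * (⟪unitNormal p U W, z W⟫ * ⟪unitNormal p S U, w W⟫)) =
    flagSum p X S (fun U W => g W * (⟪unitNormal p S U, z W⟫ * ⟪unitNormal p U W, w W⟫)) :=
  flagSum_congr_of_symm fun U W h _ => by
    linear_combination g W * h.normals_bilinear_comm h.adjacent h.ne_adjacent (z W) (w W)

/- Exchange the two normals of each flag by `flagSum_normals_comm`: the ridge `W` has height
`height p S U` over the dual face of `S` in the direction of the normal of `U`. -/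
lemma sum_mul_inner_unitNormal (g : Finset ι → ℝ) (w : E) :
    ∑ U ∈ coversIn p Finset.univ S, (∑ W ∈ coversIn p Finset.univ U, height p U W * g W +
        ∑ W ∈ coversIn p Finset.univ U,
          g W * ⟪unitNormal p U W, facePoint p U - facePoint p S⟫) * ⟪unitNormal p S U, w⟫ =
      ∑ U ∈ coversIn p Finset.univ S, height p S U *
        ∑ W ∈ coversIn p Finset.univ U, g W * ⟪unitNormal p U W, w⟫ := by
  have hrot := flagSum_normals_comm (p := p) (X := Finset.univ) (S := S) g
    (fun W => facePoint p W - facePoint p S) fun _ => w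
  convert hrot using 1
  · refine Finset.sum_congr rfl fun U _ => ?_
    rw [← Finset.sum_add_distrib, Finset.sum_mul]
    refine Finset.sum_congr rfl fun W _ => ?_
    beta_reduce
    rw [height, ← sub_add_sub_cancel (facePoint p W) (facePoint p U) (facePoint p S),
      inner_add_right]
    ring
  · refine Finset.sum_congr rfl fun U hU => ?_
    rw [Finset.mul_sum]
    refine Finset.sum_congr rfl fun W hW => ?_
    rw [mem_coversIn_univ] at hU hW
    beta_reduce
    rw [hU.inner_sub_facePoint hW.isFace_right hW.subset]
    ring

end FlagSum

/-! ### One-dimensional dual faces -/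

section Edge

variable {E : Type*} [NormedAddCommGroup E] [InnerProductSpace ℝ E] [FiniteDimensional ℝ E]
variable {ι : Type*} [Fintype ι] {p : ι → E} {S U V : Finset ι} {w : E}

lemma IsCover.eq_of_unitNormal_eq (hU : IsCover p S U) (hV : IsCover p S V)
    (h : unitNormal p S U = unitNormal p S V) : U = V := by
  by_contra hne
  have hVU := hU.inner_unitNormal_lt hV.isFace_right hV.subset (hU.not_subset hV hne)
  have hUV := hV.inner_unitNormal_lt hU.isFace_right hU.subset (hV.not_subset hU (Ne.symm hne))
  rw [h] at hVU
  exact lt_asymm hUV hVU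

omit [Fintype ι] in
lemma eq_zero_of_mem_faceSpan_orthogonal (hr : faceRank p S = finrank ℝ E)
    (hw : w ∈ (faceSpan p S)ᗮ) : w = 0 := by
  rwa [Submodule.eq_top_of_finrank_eq hr, Submodule.top_orthogonal_eq_bot,
    Submodule.mem_bot] at hw

lemma IsCover.eq_smul_unitNormal (h : IsCover p S U) (hr : faceRank p S + 1 = finrank ℝ E)
    (hw : w ∈ (faceSpan p S)ᗮ) : w = ⟪unitNormal p S U, w⟫ • unitNormal p S U :=
  sub_eq_zero.1 (eq_zero_of_mem_faceSpan_orthogonal (h.rank_eq.trans hr)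
    (h.sub_smul_mem_orthogonal hw))

lemma IsCover.unitNormal_eq_or_eq_neg (hU : IsCover p S U) (hV : IsCover p S V)
    (hr : faceRank p S + 1 = finrank ℝ E) :
    unitNormal p S V = unitNormal p S U ∨ unitNormal p S V = -unitNormal p S U := by
  have heq := hU.eq_smul_unitNormal hr hV.unitNormal_mem_orthogonal
  have hsq : ⟪unitNormal p S U, unitNormal p S V⟫ * ⟪unitNormal p S U, unitNormal p S V⟫ = 1 := by
    have hself := hV.inner_unitNormal_self
    nth_rewrite 1 [heq] at hself
    rwa [real_inner_smul_left] at hself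
  rcases mul_self_eq_one_iff.1 hsq with h | h <;> rw [h] at heq
  · exact .inl (heq.trans (one_smul _ _))
  · exact .inr (heq.trans (neg_one_smul _ _))

lemma exists_coversIn_eq_pair [DecidableEq ι] (hp : PositivelySpanning p) (hS : IsFace p S)
    (hr : faceRank p S + 1 = finrank ℝ E) : ∃ U V, IsCover p S U ∧ IsCover p S V ∧ U ≠ V ∧
      coversIn p Finset.univ S = {U, V} ∧ unitNormal p S V = -unitNormal p S U := by
  obtain ⟨U, hU⟩ := exists_isCover hp hS (by omega)
  have hn0 : -unitNormal p S U ≠ 0 :=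
    neg_ne_zero.2 (norm_ne_zero_iff.1 (hU.norm_unitNormal ▸ one_ne_zero))
  obtain ⟨V, hV, hpos⟩ := exists_isCover_inner_pos hp hS (neg_mem hU.unitNormal_mem_orthogonal) hn0
  rw [inner_neg_right] at hpos
  have hVU : unitNormal p S V = -unitNormal p S U := by
    refine (hU.unitNormal_eq_or_eq_neg hV hr).resolve_left fun h => ?_
    rw [h, hU.inner_unitNormal_self] at hpos
    linarith
  refine ⟨U, V, hU, hV, ?_, ?_, hVU⟩
  · rintro rfl
    rw [hU.inner_unitNormal_self] at hpos
    linarith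
  ext X
  rw [mem_coversIn_univ, Finset.mem_insert, Finset.mem_singleton]
  refine ⟨fun hX => ?_, by rintro (rfl | rfl) <;> assumption⟩
  rcases hU.unitNormal_eq_or_eq_neg hX hr with h | h
  · exact .inl (hX.eq_of_unitNormal_eq hU h)
  · exact .inr (hX.eq_of_unitNormal_eq hV (h.trans hVU.symm))

end Edge

/-! ### Volumes and first moments of dual faces -/

section Volume

variable {E : Type*} [NormedAddCommGroup E] [InnerProductSpace ℝ E] [FiniteDimensional ℝ E]
variable {ι : Type*} [Fintype ι] {p : ι → E} {S : Finset ι}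

/-- The `m`-dimensional volume of the dual face of `S`, when that face has dimension `m`,
computed by decomposing it into the pyramids over its facets. -/
noncomputable def faceVolume (p : ι → E) : ℕ → Finset ι → ℝ
  | 0, _ => 1
  | m + 1, S => (∑ U ∈ coversIn p Finset.univ S, height p S U * faceVolume p m U) / (m + 1)

lemma succ_mul_faceVolume (m : ℕ) (S : Finset ι) : ((m : ℝ) + 1) * faceVolume p (m + 1) S =
    ∑ U ∈ coversIn p Finset.univ S, height p S U * faceVolume p m U := by
  rw [faceVolume]
  field_simp

lemma faceVolume_pos (hp : PositivelySpanning p) {m : ℕ} (hS : IsFace p S)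
    (hr : faceRank p S + m = finrank ℝ E) : 0 < faceVolume p m S := by
  induction m generalizing S with
  | zero => exact one_pos
  | succ m ih =>
    refine div_pos (Finset.sum_pos (fun U hU => ?_) ?_) (by positivity)
    · rw [mem_coversIn_univ] at hU
      exact mul_pos hU.height_pos (ih hU.isFace_right (by rw [hU.rank_eq]; omega))
    · obtain ⟨U, hU⟩ := exists_isCover hp hS (by omega)
      exact ⟨U, mem_coversIn_univ.2 hU⟩

theorem minkowski_relation (hp : PositivelySpanning p) {m : ℕ} (hS : IsFace p S)
    (hr : faceRank p S + (m + 1) = finrank ℝ E) (w : E) :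
    ∑ U ∈ coversIn p Finset.univ S, faceVolume p m U * ⟪unitNormal p S U, w⟫ = 0 := by
  classical
  induction m generalizing S w with
  | zero =>
    obtain ⟨U, V, -, -, hne, hUV, hn⟩ := exists_coversIn_eq_pair hp hS hr
    simp [hUV, Finset.sum_pair hne, hn, faceVolume]
  | succ m ih =>
    have hdiv := sum_mul_inner_unitNormal (p := p) (S := S) (faceVolume p m) w
    have hfacet : ∀ U ∈ coversIn p Finset.univ S, ∀ y,
        ∑ W ∈ coversIn p Finset.univ U, faceVolume p m W * ⟪unitNormal p U W, y⟫ = 0 := by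
      intro U hU y
      rw [mem_coversIn_univ] at hU
      exact ih hU.isFace_right (by rw [hU.rank_eq]; omega) y
    have hleft : ∀ U ∈ coversIn p Finset.univ S,
        (∑ W ∈ coversIn p Finset.univ U, height p U W * faceVolume p m W +
          ∑ W ∈ coversIn p Finset.univ U, faceVolume p m W *
            ⟪unitNormal p U W, facePoint p U - facePoint p S⟫) * ⟪unitNormal p S U, w⟫ =
        ((m : ℝ) + 1) * (faceVolume p (m + 1) U * ⟪unitNormal p S U, w⟫) := fun U hU => by
      rw [hfacet U hU, add_zero, ← succ_mul_faceVolume, mul_assoc]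
    have hright : ∀ U ∈ coversIn p Finset.univ S, height p S U *
        ∑ W ∈ coversIn p Finset.univ U, faceVolume p m W * ⟪unitNormal p U W, w⟫ = 0 :=
      fun U hU => by rw [hfacet U hU, mul_zero]
    rw [Finset.sum_congr rfl hleft, ← Finset.mul_sum, Finset.sum_eq_zero hright] at hdiv
    exact (mul_eq_zero.1 hdiv).resolve_left (by positivity)

/- The volume as a sum of cones over the facets does not depend on the apex. -/
lemma sum_faceVolume_mul_inner_sub (hp : PositivelySpanning p) {m : ℕ} (hS : IsFace p S)
    (hr : faceRank p S + (m + 1) = finrank ℝ E) (x : E) :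
    ∑ U ∈ coversIn p Finset.univ S, faceVolume p m U * ⟪unitNormal p S U, facePoint p U - x⟫ =
      ((m : ℝ) + 1) * faceVolume p (m + 1) S := by
  rw [succ_mul_faceVolume, ← add_zero (∑ U ∈ _, height p S U * _),
    ← minkowski_relation hp hS hr (facePoint p S - x), ← Finset.sum_add_distrib]
  refine Finset.sum_congr rfl fun U _ => ?_
  rw [height, inner_sub_right, inner_sub_right, inner_sub_right]
  ring

/-- The integral of the position vector over the dual face of `S`, when that face has dimension
`m`. -/
noncomputable def faceMoment (p : ι → E) : ℕ → Finset ι → E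
  | 0, S => facePoint p S
  | m + 1, S => ((m : ℝ) + 2)⁻¹ • (∑ U ∈ coversIn p Finset.univ S, height p S U • faceMoment p m U +
      faceVolume p (m + 1) S • facePoint p S)

lemma add_two_mul_inner_faceMoment (x : E) (m : ℕ) (S : Finset ι) :
    ((m : ℝ) + 2) * ⟪x, faceMoment p (m + 1) S⟫ =
      ∑ U ∈ coversIn p Finset.univ S, height p S U * ⟪x, faceMoment p m U⟫ +
        faceVolume p (m + 1) S * ⟪x, facePoint p S⟫ := by
  have hm : (m : ℝ) + 2 ≠ 0 := by positivity
  simp only [faceMoment, inner_smul_right, inner_add_right, inner_sum, mul_inv_cancel_left₀ hm]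

lemma sum_inner_facePoint_mul_inner_unitNormal (hp : PositivelySpanning p) (x : E)
    (hS : IsFace p S) (hr : faceRank p S + 1 = finrank ℝ E) {w : E} (hw : w ∈ (faceSpan p S)ᗮ) :
    ∑ U ∈ coversIn p Finset.univ S, ⟪x, facePoint p U⟫ * ⟪unitNormal p S U, w⟫ =
      faceVolume p 1 S * ⟪x, w⟫ := by
  classical
  obtain ⟨U, V, hU, hV, hne, hUV, hn⟩ := exists_coversIn_eq_pair hp hS hr
  have hsub : facePoint p U - facePoint p V ∈ (faceSpan p S)ᗮ := by
    simpa using sub_mem (facePoint_sub_mem hS hU.isFace_right hU.subset)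
      (facePoint_sub_mem hS hV.isFace_right hV.subset)
  have hvol : faceVolume p 1 S = ⟪unitNormal p S U, facePoint p U - facePoint p V⟫ := by
    simp only [faceVolume, hUV, Finset.sum_pair hne, height, hn, inner_neg_left, inner_sub_right]
    push_cast
    ring
  have hx : ∀ y ∈ (faceSpan p S)ᗮ, ⟪x, y⟫ = ⟪unitNormal p S U, y⟫ * ⟪x, unitNormal p S U⟫ :=
    fun y hy => by
      nth_rewrite 1 [hU.eq_smul_unitNormal hr hy]
      exact inner_smul_right _ _ _
  have hxsub := hx _ hsub
  rw [inner_sub_right] at hxsub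
  rw [hUV, Finset.sum_pair hne, hn, inner_neg_left, hvol, hx w hw]
  linear_combination ⟪unitNormal p S U, w⟫ * hxsub

lemma IsCover.sum_inner_faceMoment_mul_inner_unitNormal (hU : IsCover p S U) {x : E} {m : ℕ}
    (hdiv : ∀ z ∈ (faceSpan p U)ᗮ,
      ∑ W ∈ coversIn p Finset.univ U, ⟪x, faceMoment p m W⟫ * ⟪unitNormal p U W, z⟫ =
        faceVolume p (m + 1) U * ⟪x, z⟫)
    {y : E} (hy : y ∈ (faceSpan p S)ᗮ) :
    ∑ W ∈ coversIn p Finset.univ U, ⟪x, faceMoment p m W⟫ * ⟪unitNormal p U W, y⟫ =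
      faceVolume p (m + 1) U * (⟪x, y⟫ - ⟪unitNormal p S U, y⟫ * ⟪x, unitNormal p S U⟫) := by
  rw [← inner_smul_right, ← inner_sub_right, ← hdiv _ (hU.sub_smul_mem_orthogonal hy)]
  refine Finset.sum_congr rfl fun W hW => ?_
  rw [inner_sub_right, inner_smul_right,
    IsFlag.inner_normals' ⟨hU, mem_coversIn_univ.1 hW⟩, mul_zero, sub_zero]

/- The divergence theorem for the function `⟪x, ·⟫` on the dual face of `S`. -/
theorem sum_inner_faceMoment_mul_inner_unitNormal (hp : PositivelySpanning p) (x : E) {m : ℕ}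
    (hS : IsFace p S) (hr : faceRank p S + (m + 1) = finrank ℝ E) {w : E}
    (hw : w ∈ (faceSpan p S)ᗮ) :
    ∑ U ∈ coversIn p Finset.univ S, ⟪x, faceMoment p m U⟫ * ⟪unitNormal p S U, w⟫ =
      faceVolume p (m + 1) S * ⟪x, w⟫ := by
  induction m generalizing S w with
  | zero => exact sum_inner_facePoint_mul_inner_unitNormal hp x hS hr hw
  | succ m ih =>
    have hfacet := fun U (hU : U ∈ coversIn p Finset.univ S) y (hy : y ∈ (faceSpan p S)ᗮ) =>
      (mem_coversIn_univ.1 hU).sum_inner_faceMoment_mul_inner_unitNormal (x := x) (m := m)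
        (fun z hz => ih (mem_coversIn_univ.1 hU).isFace_right
          (by rw [(mem_coversIn_univ.1 hU).rank_eq]; omega) hz) hy
    have hdiv := sum_mul_inner_unitNormal (p := p) (S := S) (fun U => ⟪x, faceMoment p m U⟫) w
    have hleft : ∀ U ∈ coversIn p Finset.univ S,
        ∑ W ∈ coversIn p Finset.univ U, height p U W * ⟪x, faceMoment p m W⟫ +
          ∑ W ∈ coversIn p Finset.univ U,
            ⟪x, faceMoment p m W⟫ * ⟪unitNormal p U W, facePoint p U - facePoint p S⟫ =
        ((m : ℝ) + 2) * ⟪x, faceMoment p (m + 1) U⟫ - faceVolume p (m + 1) U *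
          (⟪x, facePoint p S⟫ + height p S U * ⟪x, unitNormal p S U⟫) := by
      intro U hU
      have hUS := mem_coversIn_univ.1 hU
      rw [hfacet U hU _ (facePoint_sub_mem hS hUS.isFace_right hUS.subset),
        add_two_mul_inner_faceMoment, height, inner_sub_right x]
      ring
    have hmink := minkowski_relation hp hS hr w
    have hvol := succ_mul_faceVolume (p := p) (m + 1) S
    push_cast at hvol
    have hcollect : ((m : ℝ) + 2) * ∑ U ∈ coversIn p Finset.univ S,
        ⟪x, faceMoment p (m + 1) U⟫ * ⟪unitNormal p S U, w⟫ =
        ⟪x, facePoint p S⟫ * ∑ U ∈ coversIn p Finset.univ S,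
          faceVolume p (m + 1) U * ⟪unitNormal p S U, w⟫ +
        (∑ U ∈ coversIn p Finset.univ S, height p S U * faceVolume p (m + 1) U) * ⟪x, w⟫ := by
      rw [← sub_eq_zero] at hdiv ⊢
      rw [← hdiv, Finset.mul_sum, Finset.mul_sum, Finset.sum_mul, ← Finset.sum_add_distrib,
        ← Finset.sum_sub_distrib, ← Finset.sum_sub_distrib]
      refine Finset.sum_congr rfl fun U hU => ?_
      rw [hleft U hU, hfacet U hU w hw]
      ring
    rw [hmink, ← hvol] at hcollect
    have hm : (m : ℝ) + 2 ≠ 0 := by positivity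
    exact mul_left_cancel₀ hm (by linear_combination hcollect)

end Volume

/-! ### Variations of the support numbers -/

section Variation

variable {E : Type*} [NormedAddCommGroup E] [InnerProductSpace ℝ E] [FiniteDimensional ℝ E]
variable {ι : Type*} [Fintype ι] {p : ι → E} {g : Finset ι → ℝ} {S U W : Finset ι} {m : ℕ}

namespace IsFlag

lemma sin_adjacent_pos (h : IsFlag p S U W) :
    0 < dihedralSin p S U (PolytopeRigidity.adjacent p S U W) W :=
  h.sin_pos h.adjacent h.ne_adjacent

lemma inner_unitNormal_adjacent (h : IsFlag p S U W) (w : E) :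
    ⟪unitNormal p S (PolytopeRigidity.adjacent p S U W), w⟫ =
      dihedralCos p S U (PolytopeRigidity.adjacent p S U W) * ⟪unitNormal p S U, w⟫ +
      dihedralSin p S U (PolytopeRigidity.adjacent p S U W) W * ⟪unitNormal p U W, w⟫ := by
  rw [h.unitNormal_eq h.adjacent, inner_add_left, real_inner_smul_left, real_inner_smul_left]

end IsFlag

/-- If the facets of the dual face of `S` move with normal velocities `Y`, the normal velocity
of the ridge `W` within the moving facet `U`. -/
noncomputable def inducedVelocity (p : ι → E) (S U W : Finset ι) : (Finset ι → ℝ) →ₗ[ℝ] ℝ :=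
  (dihedralSin p S U (adjacent p S U W) W)⁻¹ •
    (LinearMap.proj (adjacent p S U W) -
      dihedralCos p S U (adjacent p S U W) • LinearMap.proj U)

lemma inducedVelocity_apply (S U W : Finset ι) (Y : Finset ι → ℝ) : inducedVelocity p S U W Y =
    (dihedralSin p S U (adjacent p S U W) W)⁻¹ *
      (Y (adjacent p S U W) - dihedralCos p S U (adjacent p S U W) * Y U) :=
  rfl

lemma IsFlag.apply_adjacent (h : IsFlag p S U W) (Y : Finset ι → ℝ) :
    Y (PolytopeRigidity.adjacent p S U W) =
      dihedralCos p S U (PolytopeRigidity.adjacent p S U W) * Y U +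
      dihedralSin p S U (PolytopeRigidity.adjacent p S U W) W * inducedVelocity p S U W Y := by
  rw [inducedVelocity_apply, mul_inv_cancel_left₀ h.sin_adjacent_pos.ne', add_sub_cancel]

lemma IsFlag.inducedVelocity_adjacent (h : IsFlag p S U W) (Y : Finset ι → ℝ) :
    inducedVelocity p S (PolytopeRigidity.adjacent p S U W) W Y =
      (dihedralSin p S U (PolytopeRigidity.adjacent p S U W) W)⁻¹ *
      (Y U - dihedralCos p S U (PolytopeRigidity.adjacent p S U W) *
        Y (PolytopeRigidity.adjacent p S U W)) := by
  rw [inducedVelocity_apply, h.adjacent_adjacent, dihedralCos_comm,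
    ← h.sin_comm h.adjacent h.ne_adjacent]

lemma IsFlag.inducedVelocity_eq_inner (h : IsFlag p S U W) {Y : Finset ι → ℝ} {w : E}
    (hU : Y U = ⟪unitNormal p S U, w⟫)
    (hV : Y (PolytopeRigidity.adjacent p S U W) =
      ⟪unitNormal p S (PolytopeRigidity.adjacent p S U W), w⟫) :
    inducedVelocity p S U W Y = ⟪unitNormal p U W, w⟫ := by
  rw [inducedVelocity_apply, hU, hV, h.inner_unitNormal_adjacent, add_sub_cancel_left,
    inv_mul_cancel_left₀ h.sin_adjacent_pos.ne']

lemma IsFlag.inner_unitNormal_adjacent_eq (h : IsFlag p S U W) {Y : Finset ι → ℝ} {w : E}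
    (hU : ⟪unitNormal p S U, w⟫ = Y U) (hW : ⟪unitNormal p U W, w⟫ = inducedVelocity p S U W Y) :
    ⟪unitNormal p S (PolytopeRigidity.adjacent p S U W), w⟫ =
      Y (PolytopeRigidity.adjacent p S U W) := by
  rw [h.inner_unitNormal_adjacent, hU, hW, ← h.apply_adjacent]

lemma IsFlag.inducedVelocity_height (h : IsFlag p S U W) :
    inducedVelocity p S U W (height p S) = ⟪unitNormal p U W, facePoint p W - facePoint p S⟫ :=
  h.inducedVelocity_eq_inner
    (h.lower.inner_sub_facePoint h.upper.isFace_right h.upper.subset).symm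
    (h.adjacent.lower.inner_sub_facePoint h.upper.isFace_right h.adjacent.upper.subset).symm

/-- For `g` the volume of ridges, the rate of change of the volume of the facet `U`. -/
noncomputable def facetVariation (p : ι → E) (g : Finset ι → ℝ) (S U : Finset ι) :
    (Finset ι → ℝ) →ₗ[ℝ] ℝ :=
  ∑ W ∈ coversIn p Finset.univ U, g W • inducedVelocity p S U W

lemma facetVariation_apply (g : Finset ι → ℝ) (S U : Finset ι) (Y : Finset ι → ℝ) :
    facetVariation p g S U Y =
      ∑ W ∈ coversIn p Finset.univ U, g W * inducedVelocity p S U W Y := by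
  simp [facetVariation]

/-- For `g` the volume of ridges, the second derivative of the volume of the dual face of `S`
with respect to its support numbers. -/
noncomputable def variationForm (p : ι → E) (g : Finset ι → ℝ) (S : Finset ι) :
    LinearMap.BilinForm ℝ (Finset ι → ℝ) :=
  ∑ U ∈ coversIn p Finset.univ S,
    LinearMap.BilinForm.linMulLin (LinearMap.proj U) (facetVariation p g S U)

lemma variationForm_apply (g : Finset ι → ℝ) (S : Finset ι) (Y Z : Finset ι → ℝ) :
    variationForm p g S Y Z = ∑ U ∈ coversIn p Finset.univ S, Y U * facetVariation p g S U Z := by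
  simp [variationForm]

lemma variationForm_eq_flagSum (Y Z : Finset ι → ℝ) : variationForm p g S Y Z =
    flagSum p Finset.univ S fun U W => g W * (Y U * inducedVelocity p S U W Z) := by
  rw [variationForm_apply, flagSum]
  refine Finset.sum_congr rfl fun U _ => ?_
  rw [facetVariation_apply, Finset.mul_sum]
  exact Finset.sum_congr rfl fun W _ => mul_left_comm _ _ _

lemma variationForm_comm (Y Z : Finset ι → ℝ) :
    variationForm p g S Y Z = variationForm p g S Z Y := by
  rw [variationForm_eq_flagSum, variationForm_eq_flagSum]
  refine flagSum_congr_of_symm fun U W h _ => ?_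
  simp only [h.inducedVelocity_adjacent, inducedVelocity_apply]
  ring

lemma variationForm_add_smul (Y Z : Finset ι → ℝ) (c : ℝ) :
    variationForm p g S (Y + c • Z) (Y + c • Z) = variationForm p g S Y Y +
      2 * c * variationForm p g S Y Z + c ^ 2 * variationForm p g S Z Z := by
  simp only [map_add, map_smul, LinearMap.add_apply, LinearMap.smul_apply, smul_eq_mul,
    variationForm_comm Z Y]
  ring

lemma facetVariation_congr {Y Z : Finset ι → ℝ} (h : ∀ U, IsCover p S U → Y U = Z U)
    (hU : IsCover p S U) : facetVariation p g S U Y = facetVariation p g S U Z := by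
  rw [facetVariation_apply, facetVariation_apply]
  refine Finset.sum_congr rfl fun W hW => ?_
  rw [inducedVelocity_apply, inducedVelocity_apply, h U hU,
    h _ (IsFlag.adjacent ⟨hU, mem_coversIn_univ.1 hW⟩).lower]

lemma facetVariation_inner (hU : IsCover p S U) (w : E) :
    facetVariation p g S U (fun V => ⟪unitNormal p S V, w⟫) =
      ∑ W ∈ coversIn p Finset.univ U, g W * ⟪unitNormal p U W, w⟫ := by
  rw [facetVariation_apply]
  refine Finset.sum_congr rfl fun W hW => ?_
  rw [IsFlag.inducedVelocity_eq_inner ⟨hU, mem_coversIn_univ.1 hW⟩ rfl rfl]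

lemma facetVariation_faceVolume_inner (hp : PositivelySpanning p)
    (hr : faceRank p S + (m + 2) = finrank ℝ E) (hU : IsCover p S U) (w : E) :
    facetVariation p (faceVolume p m) S U (fun V => ⟪unitNormal p S V, w⟫) = 0 := by
  rw [facetVariation_inner hU]
  exact minkowski_relation hp hU.isFace_right (by rw [hU.rank_eq]; omega) w

lemma facetVariation_faceVolume_height (hp : PositivelySpanning p)
    (hr : faceRank p S + (m + 2) = finrank ℝ E) (hU : IsCover p S U) :
    facetVariation p (faceVolume p m) S U (height p S) =
      ((m : ℝ) + 1) * faceVolume p (m + 1) U := by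
  rw [← sum_faceVolume_mul_inner_sub hp hU.isFace_right (by rw [hU.rank_eq]; omega)
    (facePoint p S), facetVariation_apply]
  refine Finset.sum_congr rfl fun W hW => ?_
  rw [IsFlag.inducedVelocity_height ⟨hU, mem_coversIn_univ.1 hW⟩]

/-- The derivative of the volume of the dual face of `S`, of dimension `m + 2`, with respect to its
support numbers. -/
noncomputable def volumeVariation (p : ι → E) (m : ℕ) (S : Finset ι) : (Finset ι → ℝ) →ₗ[ℝ] ℝ :=
  ∑ U ∈ coversIn p Finset.univ S, faceVolume p (m + 1) U • LinearMap.proj U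

lemma volumeVariation_apply (m : ℕ) (S : Finset ι) (Y : Finset ι → ℝ) :
    volumeVariation p m S Y = ∑ U ∈ coversIn p Finset.univ S, faceVolume p (m + 1) U * Y U := by
  simp [volumeVariation]

lemma variationForm_height_right (hp : PositivelySpanning p)
    (hr : faceRank p S + (m + 2) = finrank ℝ E) (Y : Finset ι → ℝ) :
    variationForm p (faceVolume p m) S Y (height p S) =
      ((m : ℝ) + 1) * volumeVariation p m S Y := by
  rw [variationForm_apply, volumeVariation_apply, Finset.mul_sum]
  refine Finset.sum_congr rfl fun U hU => ?_
  rw [facetVariation_faceVolume_height hp hr (mem_coversIn_univ.1 hU)]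
  ring

lemma volumeVariation_height (m : ℕ) (S : Finset ι) :
    volumeVariation p m S (height p S) = ((m : ℝ) + 2) * faceVolume p (m + 2) S := by
  have := succ_mul_faceVolume (p := p) (m + 1) S
  push_cast at this
  rw [show (m : ℝ) + 2 = m + 1 + 1 by ring, this, volumeVariation_apply]
  exact Finset.sum_congr rfl fun U _ => mul_comm _ _

lemma variationForm_height_height_pos (hp : PositivelySpanning p) (hS : IsFace p S)
    (hr : faceRank p S + (m + 2) = finrank ℝ E) :
    0 < variationForm p (faceVolume p m) S (height p S) (height p S) := by
  rw [variationForm_height_right hp hr, volumeVariation_height]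
  have := faceVolume_pos hp hS hr
  positivity

/- The ground state identity (Jacobi's factorization `Y = F · (Y / F)`). -/
lemma variationForm_self_eq {F : Finset ι → ℝ} (hF : ∀ U, IsCover p S U → F U ≠ 0)
    (Y : Finset ι → ℝ) : variationForm p g S Y Y =
      -(1 / 2) * flagSum p Finset.univ S (fun U W => g W *
        (F U * F (adjacent p S U W) / dihedralSin p S U (adjacent p S U W) W *
          (Y U / F U - Y (adjacent p S U W) / F (adjacent p S U W)) ^ 2)) +
      ∑ U ∈ coversIn p Finset.univ S, (Y U / F U) ^ 2 * (F U * facetVariation p g S U F) := by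
  have hdiag : ∑ U ∈ coversIn p Finset.univ S, (Y U / F U) ^ 2 * (F U * facetVariation p g S U F) =
      flagSum p Finset.univ S
        (fun U W => g W * ((Y U / F U) ^ 2 * (F U * inducedVelocity p S U W F))) := by
    refine Finset.sum_congr rfl fun U _ => ?_
    rw [facetVariation_apply, Finset.mul_sum, Finset.mul_sum]
    exact Finset.sum_congr rfl fun W _ => by ring
  rw [hdiag, variationForm_eq_flagSum, ← flagSum_const_mul, ← flagSum_add]
  refine flagSum_congr_of_symm fun U W h _ => ?_
  rw [h.inducedVelocity_adjacent, h.inducedVelocity_adjacent, h.adjacent_adjacent,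
    ← h.sin_comm h.adjacent h.ne_adjacent, inducedVelocity_apply, inducedVelocity_apply]
  have hFU := hF U h.lower
  have hFV := hF _ h.adjacent.lower
  have hsin := h.sin_adjacent_pos.ne'
  field_simp
  ring

/-- The Minkowski second inequality for the dual face of `S`, in infinitesimal form: the volume is
concave to second order along the variations that preserve it to first order. -/
def IsHyperbolic (p : ι → E) (m : ℕ) (S : Finset ι) : Prop :=
  ∀ Y : Finset ι → ℝ, volumeVariation p m S Y = 0 → variationForm p (faceVolume p m) S Y Y ≤ 0

/-- The only variations that preserve all facet volumes of the dual face of `S` to first order are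
the translations. -/
def HasTranslationKernel (p : ι → E) (m : ℕ) (S : Finset ι) : Prop :=
  ∀ Y : Finset ι → ℝ, (∀ U, IsCover p S U → facetVariation p (faceVolume p m) S U Y = 0) →
    ∃ w ∈ (faceSpan p S)ᗮ, ∀ U, IsCover p S U → Y U = ⟪unitNormal p S U, w⟫

/- A symmetric form that is nonpositive on some hyperplane and positive at `h` is nonpositive on the
orthogonal complement of `h`. -/
lemma IsHyperbolic.of_hyperplane (hp : PositivelySpanning p) (hS : IsFace p S)
    (hr : faceRank p S + (m + 2) = finrank ℝ E) (l : (Finset ι → ℝ) →ₗ[ℝ] ℝ)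
    (h : ∀ Y, l Y = 0 → variationForm p (faceVolume p m) S Y Y ≤ 0) : IsHyperbolic p m S := by
  intro Y hY
  have hpos := variationForm_height_height_pos hp hS hr
  have hl : l (height p S) ≠ 0 := fun h0 => (h _ h0).not_gt hpos
  have hle := h (Y + (-(l Y / l (height p S))) • height p S) (by
    rw [map_add, map_smul, smul_eq_mul]
    field_simp
    ring)
  rw [variationForm_add_smul, variationForm_height_right hp hr, hY] at hle
  linarith [mul_nonneg (sq_nonneg (-(l Y / l (height p S)))) hpos.le]

end Variation

/-! ### Polygons -/

section Polygon

variable {E : Type*} [NormedAddCommGroup E] [InnerProductSpace ℝ E]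
variable {ι : Type*} [Fintype ι] {p : ι → E} {f : E} {S T U W U' W' : Finset ι}


lemma IsFace.eq_of_facePoint_eq (hT : IsFace p T) (hW : IsFace p W)
    (h : facePoint p T = facePoint p W) : T = W := by
  rw [← activeSet_facePoint hT, h, activeSet_facePoint hW]

variable [FiniteDimensional ℝ E]

/-- The flag `S ⊂ U ⊂ W` is a crossing for `f` if `f` changes from positive to negative on the unit
normals when passing from `U` to the other facet through `W`. -/
structure IsCrossing (p : ι → E) (f : E) (S U W : Finset ι) : Prop where
  isFlag : IsFlag p S U W
  pos : 0 < ⟪unitNormal p S U, f⟫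
  neg : ⟪unitNormal p S (adjacent p S U W), f⟫ < 0

/-- The combination of the normals of the facets `U` and `V` that is orthogonal to `f`. -/
noncomputable def crossingVector (p : ι → E) (f : E) (S U V : Finset ι) : E :=
  ⟪unitNormal p S U, f⟫ • unitNormal p S V - ⟪unitNormal p S V, f⟫ • unitNormal p S U

lemma inner_crossingVector_left (f : E) (S U V : Finset ι) (w : E) : ⟪crossingVector p f S U V, w⟫ =
    ⟪unitNormal p S U, f⟫ * ⟪unitNormal p S V, w⟫ -
      ⟪unitNormal p S V, f⟫ * ⟪unitNormal p S U, w⟫ := by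
  rw [crossingVector, inner_sub_left, real_inner_smul_left, real_inner_smul_left]

lemma inner_crossingVector_self (U V : Finset ι) : ⟪crossingVector p f S U V, f⟫ = 0 := by
  rw [inner_crossingVector_left, mul_comm, sub_self]

lemma IsFlag.crossingVector_mem (h : IsFlag p S U W) :
    crossingVector p f S U (PolytopeRigidity.adjacent p S U W) ∈ (faceSpan p S)ᗮ :=
  sub_mem (Submodule.smul_mem _ _ h.adjacent.lower.unitNormal_mem_orthogonal)
    (Submodule.smul_mem _ _ h.lower.unitNormal_mem_orthogonal)

lemma IsFlag.crossingVector_ne_zero (h : IsFlag p S U W) (hf : ⟪unitNormal p S U, f⟫ ≠ 0) :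
    crossingVector p f S U (PolytopeRigidity.adjacent p S U W) ≠ 0 := by
  intro h0
  have := inner_crossingVector_left (p := p) f S U
    (PolytopeRigidity.adjacent p S U W) (unitNormal p U W)
  rw [h0, inner_zero_left, h.inner_unitNormal_adjacent (unitNormal p U W), h.inner_normals,
    h.upper.inner_unitNormal_self, mul_zero, zero_add, mul_one, mul_zero, sub_zero] at this
  exact mul_ne_zero hf h.sin_adjacent_pos.ne' this.symm

lemma IsCover.inner_unitNormal_sub_nonpos (hU : IsCover p S U) (hW : IsFace p W) (hUW : U ⊆ W)
    (hT : IsFace p T) (hST : S ⊆ T) :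
    ⟪unitNormal p S U, facePoint p T - facePoint p W⟫ ≤ 0 := by
  rw [inner_sub_right, inner_unitNormal_eq_of_active hU.isFace_right fun i hi =>
    inner_facePoint_eq hW (hUW hi), sub_nonpos]
  exact hU.inner_unitNormal_le (facePoint_mem hT) fun i hi => inner_facePoint_eq hT (hST hi)

lemma IsCrossing.inner_crossingVector_nonpos (h : IsCrossing p f S U W) (hT : IsFace p T)
    (hST : S ⊆ T) :
    ⟪crossingVector p f S U (adjacent p S U W), facePoint p T - facePoint p W⟫ ≤ 0 := by
  have hW := h.isFlag.upper.isFace_right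
  have hadj := h.isFlag.adjacent
  rw [inner_crossingVector_left]
  have hU := h.isFlag.lower.inner_unitNormal_sub_nonpos hW h.isFlag.upper.subset hT hST
  have hV := hadj.lower.inner_unitNormal_sub_nonpos hW hadj.upper.subset hT hST
  linarith [mul_nonpos_of_nonneg_of_nonpos h.pos.le hV, mul_nonneg_of_nonpos_of_nonpos h.neg.le hU]

/- The vertex `W` of a crossing is the unique point of the polygon where the linear functional
`crossingVector` is maximal. -/
lemma IsCrossing.eq_of_inner_crossingVector_nonneg (hr : faceRank p S + 2 = finrank ℝ E)
    (h : IsCrossing p f S U W) (hT : IsFace p T) (hST : S ⊆ T)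
    (hle : 0 ≤ ⟪crossingVector p f S U (adjacent p S U W), facePoint p T - facePoint p W⟫) :
    T = W := by
  have hflag := h.isFlag
  have hW := hflag.upper.isFace_right
  set y := facePoint p T - facePoint p W
  have hU := hflag.lower.inner_unitNormal_sub_nonpos hW hflag.upper.subset hT hST
  have hV := hflag.adjacent.lower.inner_unitNormal_sub_nonpos hW hflag.adjacent.upper.subset hT hST
  rw [inner_crossingVector_left] at hle
  have hU0 : ⟪unitNormal p S U, y⟫ = 0 := hU.antisymm <|
    nonneg_of_mul_nonneg_right (by linarith [mul_nonpos_of_nonneg_of_nonpos h.pos.le hV])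
      (neg_pos.2 h.neg)
  have hV0 : ⟪unitNormal p S (adjacent p S U W), y⟫ = 0 := hV.antisymm <|
    nonneg_of_mul_nonneg_right (by rw [hU0] at hle; linarith) h.pos
  rw [hflag.inner_unitNormal_adjacent, hU0, mul_zero, zero_add] at hV0
  have hyS : y ∈ (faceSpan p S)ᗮ :=
    sub_mem_orthogonal_of_inner_eq_one (fun i hi => inner_facePoint_eq hT (hST hi))
      fun i hi => inner_facePoint_eq hW (hflag.subset hi)
  have hyW := hflag.upper.mem_orthogonal_of_inner_eq_zero
    (hflag.lower.mem_orthogonal_of_inner_eq_zero hyS hU0)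
    ((mul_eq_zero.1 hV0).resolve_left hflag.sin_adjacent_pos.ne')
  have hy := eq_zero_of_mem_faceSpan_orthogonal (by rw [hflag.rank_eq, hr]) hyW
  exact hT.eq_of_facePoint_eq hW (sub_eq_zero.1 hy)

lemma IsCrossing.eq_of_crossingVector_eq_smul (hr : faceRank p S + 2 = finrank ℝ E)
    (h : IsCrossing p f S U W) (h' : IsCrossing p f S U' W') {c : ℝ} (hc : 0 ≤ c)
    (hsmul : crossingVector p f S U (adjacent p S U W) =
      c • crossingVector p f S U' (adjacent p S U' W')) : U = U' ∧ W = W' := by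
  have hle := h'.inner_crossingVector_nonpos h.isFlag.upper.isFace_right h.isFlag.subset
  obtain rfl : W' = W := h.eq_of_inner_crossingVector_nonneg hr h'.isFlag.upper.isFace_right
    h'.isFlag.subset (by
      rw [hsmul, real_inner_smul_left, ← neg_sub, inner_neg_right, mul_neg]
      exact neg_nonneg.2 (mul_nonpos_of_nonneg_of_nonpos hc hle))
  refine ⟨?_, rfl⟩
  by_contra hne
  have hpos := h.pos
  rw [h'.isFlag.eq_adjacent h.isFlag hne] at hpos
  exact hpos.not_gt h'.neg

lemma IsFlag.exists_eq_smul_of_inner_eq_zero (hr : faceRank p S + 2 = finrank ℝ E)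
    (h : IsFlag p S U W) (hf : ⟪unitNormal p S U, f⟫ ≠ 0) :
    ∃ k : E, ∀ x ∈ (faceSpan p S)ᗮ, ⟪x, f⟫ = 0 → ∃ c : ℝ, x = c • k := by
  refine ⟨⟪unitNormal p S U, f⟫ • unitNormal p U W - ⟪unitNormal p U W, f⟫ • unitNormal p S U,
    fun x hx hxf => ⟨⟪unitNormal p U W, x⟫ / ⟪unitNormal p S U, f⟫, ?_⟩⟩
  have htop : faceSpan p W = ⊤ := Submodule.eq_top_of_finrank_eq (h.rank_eq.trans hr)
  have hdecomp := h.eq_add_of_mem hx (htop ▸ Submodule.mem_top)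
  have hxf' := congrArg (fun y => ⟪y, f⟫) hdecomp
  simp only [inner_add_left, real_inner_smul_left, hxf] at hxf'
  have hcoef : ⟪unitNormal p S U, x⟫ =
      -(⟪unitNormal p U W, x⟫ / ⟪unitNormal p S U, f⟫ * ⟪unitNormal p U W, f⟫) := by
    field_simp
    linarith
  rw [smul_sub, smul_smul, smul_smul, div_mul_cancel₀ _ hf]
  nth_rewrite 1 [hdecomp]
  rw [hcoef]
  module

lemma exists_forall_inner_unitNormal_ne_zero (p : ι → E) (S : Finset ι) :
    ∃ f : E, ∀ U, IsCover p S U → ⟪unitNormal p S U, f⟫ ≠ 0 := by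
  obtain ⟨f, hf⟩ := Module.Dual.exists_forall_ne_zero_of_forall_exists
    (fun U : {U // IsCover p S U} => (innerₛₗ ℝ (unitNormal p S U) : E →ₗ[ℝ] ℝ))
    fun U => ⟨unitNormal p S U, by
      rw [innerₛₗ_apply_apply, U.2.inner_unitNormal_self]
      exact one_ne_zero⟩
  exact ⟨f, fun U hU => hf ⟨U, hU⟩⟩

lemma variationForm_add_smul_inner (hp : PositivelySpanning p) {m : ℕ}
    (hr : faceRank p S + (m + 2) = finrank ℝ E) (Y : Finset ι → ℝ) (c : ℝ) (w : E) :
    variationForm p (faceVolume p m) S (Y + c • fun U => ⟪unitNormal p S U, w⟫)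
      (Y + c • fun U => ⟪unitNormal p S U, w⟫) = variationForm p (faceVolume p m) S Y Y := by
  have hzero : ∀ Z, variationForm p (faceVolume p m) S Z (fun U => ⟪unitNormal p S U, w⟫) = 0 := by
    intro Z
    rw [variationForm_apply]
    exact Finset.sum_eq_zero fun U hU => by
      rw [facetVariation_faceVolume_inner hp hr (mem_coversIn_univ.1 hU), mul_zero]
  rw [variationForm_add_smul, hzero, hzero, mul_zero, mul_zero, add_zero, add_zero]

/- In the ground state identity for `F U = ⟪unitNormal p S U, f⟫`, only the flags across which `F`
changes sign contribute with the wrong sign. -/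
lemma variationForm_self_nonpos_of_crossing (hp : PositivelySpanning p)
    (hr : faceRank p S + 2 = finrank ℝ E) (hf : ∀ U, IsCover p S U → ⟪unitNormal p S U, f⟫ ≠ 0)
    {Y : Finset ι → ℝ} (hY : ∀ U W, IsCrossing p f S U W →
      ⟪unitNormal p S U, f⟫ * Y (adjacent p S U W) =
        ⟪unitNormal p S (adjacent p S U W), f⟫ * Y U) :
    variationForm p (faceVolume p 0) S Y Y ≤ 0 := by
  set F : Finset ι → ℝ := fun U => ⟪unitNormal p S U, f⟫
  have hground : ∑ U ∈ coversIn p Finset.univ S,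
      (Y U / F U) ^ 2 * (F U * facetVariation p (faceVolume p 0) S U F) = 0 :=
    Finset.sum_eq_zero fun U hU => by
      rw [facetVariation_faceVolume_inner hp hr (mem_coversIn_univ.1 hU), mul_zero, mul_zero]
  rw [variationForm_self_eq hf, hground, add_zero]
  refine mul_nonpos_of_nonpos_of_nonneg (by norm_num) (flagSum_nonneg fun U W h _ => ?_)
  have hU := hf U h.lower
  have hV := hf _ h.adjacent.lower
  have hvertex : F U * F (adjacent p S U W) < 0 →
      Y U / F U - Y (adjacent p S U W) / F (adjacent p S U W) = 0 := by
    intro hneg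
    rw [sub_eq_zero, div_eq_div_iff hU hV]
    rcases mul_neg_iff.1 hneg with ⟨hUpos, hVneg⟩ | ⟨hUneg, hVpos⟩
    · linarith [hY U W ⟨h, hUpos, hVneg⟩]
    · have := hY _ W ⟨h.adjacent, hVpos, by rwa [h.adjacent_adjacent]⟩
      rw [h.adjacent_adjacent] at this
      linarith
  have hsin := h.sin_adjacent_pos
  rw [faceVolume, one_mul]
  rcases le_or_gt 0 (F U * F (adjacent p S U W)) with hpos | hneg
  · positivity
  · rw [hvertex hneg]
    simp

lemma exists_dual_forall_eq_of_apply_eq_zero {α V : Type*} [AddCommGroup V] [Module ℝ V]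
    {s : Set α} {c : α → ℝ} (hc : ∀ x ∈ s, c x ≠ 0)
    (huniq : ∀ x ∈ s, ∀ y ∈ s, 0 < c x * c y → x = y) (φ : α → V →ₗ[ℝ] ℝ) :
    ∃ l : V →ₗ[ℝ] ℝ, ∀ v, l v = 0 → ∃ e, ∀ x ∈ s, φ x v = e := by
  by_cases hs : s.Subsingleton
  · refine ⟨0, fun v _ => ?_⟩
    rcases s.eq_empty_or_nonempty with rfl | ⟨x, hx⟩
    · exact ⟨0, by simp⟩
    · exact ⟨φ x v, fun y hy => by rw [hs hy hx]⟩
  obtain ⟨x, hx, y, hy, hne⟩ := Set.not_subsingleton_iff.1 hs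
  refine ⟨φ x - φ y, fun v hv => ⟨φ x v, fun z hz => ?_⟩⟩
  rw [LinearMap.sub_apply, sub_eq_zero] at hv
  have hxy : c x * c y < 0 := lt_of_le_of_ne
    (not_lt.1 fun h => hne (huniq x hx y hy h)) (mul_ne_zero (hc x hx) (hc y hy))
  rcases lt_or_ge 0 (c z * c x) with hzx | hzx
  · rw [huniq z hz x hx hzx]
  · rw [huniq z hz y hy ?_, hv]
    have hzx' := lt_of_le_of_ne hzx (mul_ne_zero (hc z hz) (hc x hx))
    rcases lt_or_gt_of_ne (hc x hx) with hneg | hpos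
    · exact mul_pos (pos_of_mul_neg_left hzx' hneg.le) (pos_of_mul_neg_right hxy hneg.le)
    · exact mul_pos_of_neg_of_neg (neg_of_mul_neg_left hzx' hpos.le)
        (neg_of_mul_neg_right hxy hpos.le)

lemma exists_dual_forall_isCrossing (hp : PositivelySpanning p) (hS : IsFace p S)
    (hr : faceRank p S + 2 = finrank ℝ E) (hf : ∀ U, IsCover p S U → ⟪unitNormal p S U, f⟫ ≠ 0) :
    ∃ (l : (Finset ι → ℝ) →ₗ[ℝ] ℝ) (k : E), ∀ Y, l Y = 0 → ∃ e : ℝ, ∀ U W, IsCrossing p f S U W →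
      ⟪unitNormal p S U, f⟫ * Y (adjacent p S U W) -
        ⟪unitNormal p S (adjacent p S U W), f⟫ * Y U =
          e * ⟪crossingVector p f S U (adjacent p S U W), k⟫ := by
  obtain ⟨U₀, hU₀⟩ := exists_isCover hp hS (by omega)
  obtain ⟨W₀, hW₀⟩ := exists_isCover hp hU₀.isFace_right (by rw [hU₀.rank_eq]; omega)
  obtain ⟨k, hk⟩ := IsFlag.exists_eq_smul_of_inner_eq_zero hr ⟨hU₀, hW₀⟩ (hf U₀ hU₀)
  have hline : ∀ U W, IsFlag p S U W →
      ∃ c : ℝ, crossingVector p f S U (adjacent p S U W) = c • k :=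
    fun U W h => hk _ h.crossingVector_mem (inner_crossingVector_self _ _)
  choose! c hc using hline
  have hne : ∀ U W, IsFlag p S U W → c U W ≠ 0 ∧ k ≠ 0 := fun U W h => by
    rw [← smul_ne_zero_iff, ← hc U W h]
    exact h.crossingVector_ne_zero (hf U h.lower)
  let crossings : Set (Finset ι × Finset ι) := {x | IsCrossing p f S x.1 x.2}
  have huniq : ∀ x ∈ crossings, ∀ y ∈ crossings, 0 < c x.1 x.2 * c y.1 y.2 → x = y :=
    fun x hx y hy hxy =>
    Prod.ext_iff.2 <| IsCrossing.eq_of_crossingVector_eq_smul hr hx hy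
      (c := c x.1 x.2 / c y.1 y.2) (div_pos_iff.2 (mul_pos_iff.1 hxy)).le <| by
        rw [hc _ _ hx.isFlag, hc _ _ hy.isFlag, smul_smul, div_mul_cancel₀ _ (hne _ _ hy.isFlag).1]
  let slope (x : Finset ι × Finset ι) : (Finset ι → ℝ) →ₗ[ℝ] ℝ := (c x.1 x.2 * ⟪k, k⟫)⁻¹ •
    (⟪unitNormal p S x.1, f⟫ • LinearMap.proj (adjacent p S x.1 x.2) -
      ⟪unitNormal p S (adjacent p S x.1 x.2), f⟫ • LinearMap.proj x.1)
  obtain ⟨l, hl⟩ := exists_dual_forall_eq_of_apply_eq_zero (s := crossings)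
    (c := fun x => c x.1 x.2) (fun x hx => (hne _ _ hx.isFlag).1) huniq slope
  refine ⟨l, k, fun Y hY => ?_⟩
  obtain ⟨e, he⟩ := hl Y hY
  refine ⟨e, fun U W h => ?_⟩
  have hq : c U W * ⟪k, k⟫ ≠ 0 :=
    mul_ne_zero (hne U W h.isFlag).1 (inner_self_ne_zero.2 (hne U W h.isFlag).2)
  rw [hc U W h.isFlag, real_inner_smul_left, mul_comm e, ← inv_mul_eq_iff_eq_mul₀ hq]
  exact he (U, W) h

/- A variation `Y` can be translated along the direction orthogonal to `f` so that it becomes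
proportional to `⟪·, f⟫` at one crossing; there are at most two crossings, so one more linear
condition takes care of the other one. -/
theorem isHyperbolic_zero (hp : PositivelySpanning p) (hS : IsFace p S)
    (hr : faceRank p S + 2 = finrank ℝ E) : IsHyperbolic p 0 S := by
  obtain ⟨f, hf⟩ := exists_forall_inner_unitNormal_ne_zero p S
  obtain ⟨l, k, hl⟩ := exists_dual_forall_isCrossing hp hS hr hf
  refine IsHyperbolic.of_hyperplane hp hS hr l fun Y hY => ?_
  obtain ⟨e, he⟩ := hl Y hY
  rw [← variationForm_add_smul_inner hp hr Y (-e) k]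
  refine variationForm_self_nonpos_of_crossing hp hr hf fun U W h => ?_
  have hslope := he U W h
  rw [inner_crossingVector_left] at hslope
  simp only [Pi.add_apply, Pi.smul_apply, smul_eq_mul]
  linear_combination hslope

lemma inner_eq_inducedVelocity_of_facetVariation_eq_zero (hp : PositivelySpanning p)
    (hr : faceRank p S + 2 = finrank ℝ E) (hU : IsCover p S U) {Y : Finset ι → ℝ}
    (hY : facetVariation p (faceVolume p 0) S U Y = 0) {w : E} (hW : IsCover p U W)
    (hw : ⟪unitNormal p U W, w⟫ = inducedVelocity p S U W Y) (hW' : IsCover p U W') :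
    ⟪unitNormal p U W', w⟫ = inducedVelocity p S U W' Y := by
  classical
  obtain ⟨A, B, -, -, hne, hAB, hn⟩ :=
    exists_coversIn_eq_pair hp hU.isFace_right (by rw [hU.rank_eq]; omega)
  rw [facetVariation_apply, hAB, Finset.sum_pair hne, faceVolume, faceVolume, one_mul,
    one_mul, add_eq_zero_iff_neg_eq] at hY
  have hBA : ⟪unitNormal p U B, w⟫ = inducedVelocity p S U B Y ↔
      ⟪unitNormal p U A, w⟫ = inducedVelocity p S U A Y := by
    rw [hn, inner_neg_left, ← hY, neg_inj]
  have hmem : ∀ {V}, IsCover p U V → V = A ∨ V = B := fun hV => by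
    simpa [hAB] using mem_coversIn_univ.2 hV
  rcases hmem hW with rfl | rfl <;> rcases hmem hW' with rfl | rfl
  exacts [hw, hBA.2 hw, hBA.1 hw, hw]

theorem hasTranslationKernel_zero (hp : PositivelySpanning p) (hS : IsFace p S)
    (hr : faceRank p S + 2 = finrank ℝ E) : HasTranslationKernel p 0 S := by
  intro Y hY
  obtain ⟨U₀, hU₀⟩ := exists_isCover hp hS (by omega)
  obtain ⟨W₀, hW₀⟩ := exists_isCover hp hU₀.isFace_right (by rw [hU₀.rank_eq]; omega)
  have h₀ : IsFlag p S U₀ W₀ := ⟨hU₀, hW₀⟩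
  refine ⟨Y U₀ • unitNormal p S U₀ + inducedVelocity p S U₀ W₀ Y • unitNormal p U₀ W₀,
    add_mem (Submodule.smul_mem _ _ hU₀.unitNormal_mem_orthogonal)
      (Submodule.smul_mem _ _ h₀.upper_normal_mem), fun U₁ hU₁ => ?_⟩
  set w := Y U₀ • unitNormal p S U₀ + inducedVelocity p S U₀ W₀ Y • unitNormal p U₀ W₀
  refine ((adjacent_induction hp hS hr.le (fun U => IsCover p S U ∧ ⟪unitNormal p S U, w⟫ = Y U ∧
    ∀ W, IsCover p U W → ⟪unitNormal p U W, w⟫ = inducedVelocity p S U W Y) ?_ hU₀ ?_ hU₁).2.1).symm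
  · rintro U W h ⟨-, hYU, hYW⟩
    have hV := h.inner_unitNormal_adjacent_eq hYU (hYW W h.upper)
    refine ⟨h.adjacent.lower, hV, fun W' hW' => ?_⟩
    refine inner_eq_inducedVelocity_of_facetVariation_eq_zero hp hr h.adjacent.lower
      (hY _ h.adjacent.lower) h.adjacent.upper ?_ hW'
    rw [h.adjacent.inducedVelocity_eq_inner hV.symm (by rw [h.adjacent_adjacent, hYU])]
  · refine ⟨hU₀, ?_, fun W hW =>
      inner_eq_inducedVelocity_of_facetVariation_eq_zero hp hr hU₀ (hY _ hU₀) hW₀ ?_ hW⟩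
    · rw [inner_add_right, inner_smul_right, inner_smul_right, hU₀.inner_unitNormal_self,
        h₀.inner_normals, mul_one, mul_zero, add_zero]
    · rw [inner_add_right, inner_smul_right, inner_smul_right, hW₀.inner_unitNormal_self,
        h₀.inner_normals', mul_one, mul_zero, zero_add]

end Polygon

/-! ### Corner sums in codimension three -/

section Corner

variable {E : Type*} [NormedAddCommGroup E] [InnerProductSpace ℝ E]
variable {ι : Type*} [Fintype ι] {p : ι → E} {S U W X : Finset ι}
variable (hX : IsFace p X) (hr : faceRank p X = faceRank p S + 3)
include hX hr

lemma IsFlag.upper_flag (h : IsFlag p S U W) (hWX : W ⊆ X) : IsFlag p U W X :=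
  .of_subset h.upper hX (by rw [hr, h.lower.rank_eq]) hWX

variable [FiniteDimensional ℝ E]

lemma exists_isFlag_of_isCover (hU : IsCover p S U) (hUX : U ⊆ X) :
    ∃ W, IsFlag p S U W ∧ W ⊆ X := by
  have hss : U ⊂ X := hUX.ssubset_of_ne <| by
    rintro rfl
    have := hU.rank_eq
    omega
  obtain ⟨W, hW, hWX⟩ := exists_isCover_subset hU.isFace_right hX hss
  exact ⟨W, ⟨hU, hW⟩, hWX⟩

open Classical in
lemma IsFlag.coversIn_eq_pair (h : IsFlag p S U W) (hWX : W ⊆ X) :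
    coversIn p X U = {W, PolytopeRigidity.adjacent p U W X} := by
  have hup := h.upper_flag hX hr hWX
  ext T
  rw [mem_coversIn, Finset.mem_insert, Finset.mem_singleton]
  refine ⟨fun hT => hup.eq_or_eq hup.adjacent hup.ne_adjacent
    (IsFlag.upper_flag hX hr ⟨h.lower, hT.1⟩ hT.2), ?_⟩
  rintro (rfl | rfl)
  · exact ⟨h.upper, hWX⟩
  · exact ⟨hup.adjacent.lower, hup.adjacent.upper.subset⟩

lemma flagSum_eq_of_upper_symm {f g : Finset ι → Finset ι → ℝ}
    (h : ∀ U W, IsFlag p S U W → W ⊆ X →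
      f U W + f U (adjacent p U W X) = g U W + g U (adjacent p U W X)) :
    flagSum p X S f = flagSum p X S g := by
  classical
  refine Finset.sum_congr rfl fun U hU => ?_
  rw [mem_coversIn] at hU
  obtain ⟨W, hW, hWX⟩ := exists_isFlag_of_isCover hX hr hU.1 hU.2
  rw [hW.coversIn_eq_pair hX hr hWX, Finset.sum_pair (hW.upper_flag hX hr hWX).ne_adjacent,
    Finset.sum_pair (hW.upper_flag hX hr hWX).ne_adjacent, h U W hW hWX]

omit hX hr in
/-- The sum over all complete flags between `S` and `X` of the product of the components of the
vectors `a U`, `b U`, `c U` along the three successive normals of the flag. -/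
noncomputable def cornerSum (p : ι → E) (X S : Finset ι) (a b c : Finset ι → E) : ℝ :=
  flagSum p X S fun U W =>
    ⟪unitNormal p S U, a U⟫ * ⟪unitNormal p U W, b U⟫ * ⟪unitNormal p W X, c U⟫

lemma cornerSum_comm_right (a b c : Finset ι → E) :
    cornerSum p X S a b c = cornerSum p X S a c b := by
  refine flagSum_eq_of_upper_symm hX hr fun U W h hW => ?_
  have hup := h.upper_flag hX hr hW
  linear_combination ⟪unitNormal p S U, a U⟫ *
    hup.normals_bilinear_comm hup.adjacent hup.ne_adjacent (c U) (b U)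

end Corner

/-! ### Local slopes -/

section LocalSlope

variable {E : Type*} [NormedAddCommGroup E] [InnerProductSpace ℝ E] [FiniteDimensional ℝ E]
variable {ι : Type*} [Fintype ι] {p : ι → E} {S U W X : Finset ι} {Y : Finset ι → ℝ}
  {w : Finset ι → E}

/-- Inside the corner of the dual face of `S` at the dual face of `X`, the vector `w U` is the
translation that agrees with the variation `Y` at the facet `U` and at the facets of the corner
adjacent to `U`. -/
structure IsLocalSlope (p : ι → E) (X S : Finset ι) (Y : Finset ι → ℝ) (w : Finset ι → E) :
    Prop where
  mem_orthogonal : ∀ U, IsCover p S U → U ⊆ X → w U ∈ (faceSpan p S)ᗮ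
  mem_faceSpan : ∀ U, IsCover p S U → U ⊆ X → w U ∈ faceSpan p X
  inner_lower : ∀ U, IsCover p S U → U ⊆ X → ⟪unitNormal p S U, w U⟫ = Y U
  inner_upper : ∀ U W, IsFlag p S U W → W ⊆ X →
    ⟪unitNormal p U W, w U⟫ = inducedVelocity p S U W Y

/- In the orthonormal frame of a complete flag `S`, `U`, `W`, `X` the coordinates of `w U` are the
iterated induced velocities. -/
lemma exists_isLocalSlope (hX : IsFace p X) (hr : faceRank p X = faceRank p S + 3)
    (Y : Finset ι → ℝ) : ∃ w, IsLocalSlope p X S Y w := by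
  have hex : ∀ U, IsCover p S U ∧ U ⊆ X → ∃ w : E, w ∈ (faceSpan p S)ᗮ ∧ w ∈ faceSpan p X ∧
      ⟪unitNormal p S U, w⟫ = Y U ∧ ∀ W, IsFlag p S U W → W ⊆ X →
        ⟪unitNormal p U W, w⟫ = inducedVelocity p S U W Y := by
    rintro U ⟨hU, hUX⟩
    obtain ⟨W, h, hWX⟩ := exists_isFlag_of_isCover hX hr hU hUX
    have hup := h.upper_flag hX hr hWX
    have hnormal : ⟪unitNormal p S U, unitNormal p W X⟫ = 0 :=
      unitNormal_inner_eq_zero hup.upper_normal_mem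
    refine ⟨Y U • unitNormal p S U + inducedVelocity p S U W Y • unitNormal p U W +
      inducedVelocity p U W X (fun W => inducedVelocity p S U W Y) • unitNormal p W X,
      add_mem (add_mem (Submodule.smul_mem _ _ hU.unitNormal_mem_orthogonal)
        (Submodule.smul_mem _ _ h.upper_normal_mem)) (Submodule.smul_mem _ _
        (faceSpan_orthogonal_anti hU.subset hup.upper_normal_mem)),
      add_mem (add_mem (Submodule.smul_mem _ _ (faceSpan_mono hUX unitNormal_mem))
        (Submodule.smul_mem _ _ (faceSpan_mono hWX unitNormal_mem)))
        (Submodule.smul_mem _ _ unitNormal_mem), ?_, fun V hV hVX => ?_⟩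
    · simp [inner_add_right, inner_smul_right, h.inner_normals, hnormal, hU.norm_unitNormal]
    · obtain rfl | rfl := hup.eq_or_eq hup.adjacent hup.ne_adjacent (hV.upper_flag hX hr hVX)
      · simp [inner_add_right, inner_smul_right, h.inner_normals', hup.inner_normals,
          h.upper.norm_unitNormal]
      · refine hup.inner_unitNormal_adjacent_eq (Y := fun W => inducedVelocity p S U W Y) ?_ ?_
        · simp [inner_add_right, inner_smul_right, h.inner_normals', hup.inner_normals,
            h.upper.norm_unitNormal]
        · simp [inner_add_right, inner_smul_right, real_inner_comm, hnormal, hup.inner_normals',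
            hup.upper.norm_unitNormal]
  choose! w horth hmem hlower hupper using hex
  exact ⟨w, fun U hU hUX => horth U ⟨hU, hUX⟩, fun U hU hUX => hmem U ⟨hU, hUX⟩,
    fun U hU hUX => hlower U ⟨hU, hUX⟩,
    fun U W h hWX => hupper U ⟨h.lower, h.upper.subset.trans hWX⟩ W h hWX⟩

namespace IsLocalSlope

lemma const {v : E} (hv : v ∈ (faceSpan p S)ᗮ) (hvX : v ∈ faceSpan p X) :
    IsLocalSlope p X S (fun U => ⟪unitNormal p S U, v⟫) (fun _ => v) where
  mem_orthogonal _ _ _ := hv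
  mem_faceSpan _ _ _ := hvX
  inner_lower _ _ _ := rfl
  inner_upper _ _ h _ :=
    (h.inducedVelocity_eq_inner (Y := fun U => ⟪unitNormal p S U, v⟫) rfl rfl).symm

lemma sub {Z : Finset ι → ℝ} {v : Finset ι → E} (hw : IsLocalSlope p X S Y w)
    (hv : IsLocalSlope p X S Z v) : IsLocalSlope p X S (Y - Z) (w - v) where
  mem_orthogonal U hU hUX := sub_mem (hw.mem_orthogonal U hU hUX) (hv.mem_orthogonal U hU hUX)
  mem_faceSpan U hU hUX := sub_mem (hw.mem_faceSpan U hU hUX) (hv.mem_faceSpan U hU hUX)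
  inner_lower U hU hUX := by
    rw [Pi.sub_apply, inner_sub_right, hw.inner_lower U hU hUX, hv.inner_lower U hU hUX,
      Pi.sub_apply]
  inner_upper U W h hWX := by
    rw [Pi.sub_apply, inner_sub_right, hw.inner_upper U W h hWX, hv.inner_upper U W h hWX, map_sub]

lemma inner_adjacent (hw : IsLocalSlope p X S Y w) (h : IsFlag p S U W) (hWX : W ⊆ X) :
    ⟪unitNormal p S (adjacent p S U W), w U⟫ = Y (adjacent p S U W) :=
  h.inner_unitNormal_adjacent_eq (hw.inner_lower U h.lower (h.upper.subset.trans hWX))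
    (hw.inner_upper U W h hWX)

lemma inner_top (hw : IsLocalSlope p X S Y w) (hX : IsFace p X)
    (hr : faceRank p X = faceRank p S + 3) (h : IsFlag p S U W) (hWX : W ⊆ X) :
    ⟪unitNormal p W X, w U⟫ = inducedVelocity p U W X fun W => inducedVelocity p S U W Y := by
  have hup := h.upper_flag hX hr hWX
  exact (hup.inducedVelocity_eq_inner (hw.inner_upper U W h hWX).symm
    (hw.inner_upper U _ ⟨h.lower, hup.adjacent.lower⟩ hup.adjacent.upper.subset).symm).symm

/- Both vectors have the same components along the normals of all facets through the ridge `W`. -/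
lemma sub_adjacent_eq_smul (hw : IsLocalSlope p X S Y w) (hX : IsFace p X)
    (hr : faceRank p X = faceRank p S + 3) (h : IsFlag p S U W) (hWX : W ⊆ X) :
    w U - w (adjacent p S U W) =
      ⟪unitNormal p W X, w U - w (adjacent p S U W)⟫ • unitNormal p W X := by
  have hUX := h.upper.subset.trans hWX
  have hVX := h.adjacent.upper.subset.trans hWX
  have hV := hw.inner_adjacent h.adjacent hWX
  rw [h.adjacent_adjacent] at hV
  have hlower : ⟪unitNormal p S U, w U - w (adjacent p S U W)⟫ = 0 := by
    rw [inner_sub_right, hV, hw.inner_lower U h.lower hUX, sub_self]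
  have hupper : ⟪unitNormal p U W, w U - w (adjacent p S U W)⟫ = 0 := by
    have hadj := h.inner_unitNormal_adjacent (w U - w (adjacent p S U W))
    rw [hlower, inner_sub_right, hw.inner_adjacent h hWX,
      hw.inner_lower _ h.adjacent.lower hVX, sub_self, mul_zero, zero_add] at hadj
    exact (mul_eq_zero.1 hadj.symm).resolve_left h.sin_adjacent_pos.ne'
  have hmem := h.lower.mem_orthogonal_of_inner_eq_zero (sub_mem (hw.mem_orthogonal U h.lower hUX)
    (hw.mem_orthogonal _ h.adjacent.lower hVX)) hlower
  simpa only [hupper, zero_smul, zero_add] using (h.upper_flag hX hr hWX).eq_add_of_mem hmem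
    (sub_mem (hw.mem_faceSpan U h.lower hUX) (hw.mem_faceSpan _ h.adjacent.lower hVX))

/- Crossing the ridge `W` changes the slope only along the normal of `X` over `W`, which is
orthogonal to the two normals exchanged here. -/
lemma cornerSum_comm_left (hw : IsLocalSlope p X S Y w) (hX : IsFace p X)
    (hr : faceRank p X = faceRank p S + 3) (a c : E) :
    cornerSum p X S w (fun _ => a) (fun _ => c) =
      cornerSum p X S (fun _ => a) w (fun _ => c) := by
  refine flagSum_congr_of_symm fun U W h hWX => ?_
  have hup := h.adjacent.upper_flag hX hr hWX
  have hsub := hw.sub_adjacent_eq_smul hX hr h hWX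
  have hlower : ⟪unitNormal p S (adjacent p S U W), w U⟫ =
      ⟪unitNormal p S (adjacent p S U W), w (adjacent p S U W)⟫ := by
    rw [← sub_eq_zero, ← inner_sub_right, hsub, inner_smul_right,
      unitNormal_inner_eq_zero hup.upper_normal_mem, mul_zero]
  have hupper : ⟪unitNormal p (adjacent p S U W) W, w U⟫ =
      ⟪unitNormal p (adjacent p S U W) W, w (adjacent p S U W)⟫ := by
    rw [← sub_eq_zero, ← inner_sub_right, hsub, inner_smul_right, hup.inner_normals, mul_zero]
  have hcomm := h.normals_bilinear_comm h.adjacent h.ne_adjacent a (w U)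
  rw [hlower, hupper] at hcomm
  linear_combination ⟪unitNormal p W X, c⟫ * hcomm

end IsLocalSlope

/-! ### The corner defect -/

/-- The contribution of the codimension three face `X` to the difference between the forms at the
facets of the dual face of `S` and the form at `S` itself (see
`sum_height_mul_variationForm_sub`). -/
noncomputable def cornerDefect (p : ι → E) (X S : Finset ι) (Y : Finset ι → ℝ) : ℝ :=
  flagSum p X S fun U W => inducedVelocity p S U W Y *
    (height p S U * inducedVelocity p U W X (fun W => inducedVelocity p S U W Y) -
      ⟪unitNormal p W X, facePoint p X - facePoint p S⟫ * Y U)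

section Defect

variable (hX : IsFace p X) (hr : faceRank p X = faceRank p S + 3)
include hX hr

lemma IsLocalSlope.cornerDefect_eq_cornerSum_sub (hw : IsLocalSlope p X S Y w) :
    cornerDefect p X S Y = cornerSum p X S (fun _ => facePoint p X - facePoint p S) w w -
      cornerSum p X S w w (fun _ => facePoint p X - facePoint p S) := by
  rw [cornerSum, cornerSum, ← flagSum_sub]
  refine flagSum_congr fun U W h hWX => ?_
  have hUX := h.upper.subset.trans hWX
  rw [hw.inner_lower U h.lower hUX, hw.inner_upper U W h hWX, hw.inner_top hX hr h hWX,
    h.lower.inner_sub_facePoint hX hUX]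
  ring

lemma IsLocalSlope.cornerDefect_eq (hw : IsLocalSlope p X S Y w) :
    cornerDefect p X S Y = flagSum p X S fun U W => ⟪unitNormal p W X, w U⟫ *
      ((height p S U * Y (adjacent p S U W) - Y U * height p S (adjacent p S U W)) /
        dihedralSin p S U (adjacent p S U W) W) := by
  rw [hw.cornerDefect_eq_cornerSum_sub hX hr, cornerSum_comm_right hX hr w, cornerSum, cornerSum,
    ← flagSum_sub]
  refine flagSum_congr fun U W h hWX => ?_
  have hUX := h.upper.subset.trans hWX
  have hw_adj := h.inner_unitNormal_adjacent (w U)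
  have he_adj := h.inner_unitNormal_adjacent (facePoint p X - facePoint p S)
  rw [hw.inner_adjacent h hWX, hw.inner_lower U h.lower hUX] at hw_adj
  rw [h.adjacent.lower.inner_sub_facePoint hX (h.adjacent.upper.subset.trans hWX),
    h.lower.inner_sub_facePoint hX hUX] at he_adj
  rw [hw.inner_lower U h.lower hUX, h.lower.inner_sub_facePoint hX hUX]
  have hsin := h.sin_adjacent_pos.ne'
  field_simp
  linear_combination ⟪unitNormal p W X, w U⟫ * (Y U * he_adj - height p S U * hw_adj)

/- All the mixed terms of the expansion agree by the symmetries of the corner sum. -/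
lemma IsLocalSlope.cornerDefect_sub_inner (hw : IsLocalSlope p X S Y w) {v : E}
    (hv : v ∈ (faceSpan p S)ᗮ) (hvX : v ∈ faceSpan p X) :
    cornerDefect p X S (Y - fun U => ⟪unitNormal p S U, v⟫) = cornerDefect p X S Y := by
  rw [(hw.sub (.const hv hvX)).cornerDefect_eq_cornerSum_sub hX hr,
    hw.cornerDefect_eq_cornerSum_sub hX hr]
  set e : Finset ι → E := fun _ => facePoint p X - facePoint p S
  set v' : Finset ι → E := fun _ => v
  have hexpand : cornerSum p X S e (w - v') (w - v') - cornerSum p X S (w - v') (w - v') e =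
      cornerSum p X S e w w - cornerSum p X S w w e +
        (cornerSum p X S e v' v' - cornerSum p X S v' v' e) +
        (cornerSum p X S w v' e + cornerSum p X S v' w e -
          (cornerSum p X S e w v' + cornerSum p X S e v' w)) := by
    simp only [cornerSum, ← flagSum_sub, ← flagSum_add, Pi.sub_apply, inner_sub_right]
    exact flagSum_congr fun _ _ _ _ => by ring
  have hconst : cornerSum p X S e v' v' = cornerSum p X S v' v' e :=
    ((const hv hvX).cornerSum_comm_left hX hr _ _).symm.trans (cornerSum_comm_right hX hr _ _ _)
  have hwve : cornerSum p X S w v' e = cornerSum p X S v' w e :=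
    hw.cornerSum_comm_left hX hr _ _
  have hwev : cornerSum p X S w v' e = cornerSum p X S e w v' :=
    (cornerSum_comm_right hX hr _ _ _).trans (hw.cornerSum_comm_left hX hr _ _)
  linarith [cornerSum_comm_right hX hr e w v']

end Defect

end LocalSlope

/-! ### Nonnegativity of the corner defect -/

section CornerWeight

variable {E : Type*} [NormedAddCommGroup E] [InnerProductSpace ℝ E] [FiniteDimensional ℝ E]
variable {ι : Type*} [Fintype ι] {p : ι → E} {S U V W X U₀ : Finset ι}

lemma IsFlag.inner_smul_add_inner_smul (hU : IsFlag p S U W) (hV : IsFlag p S V W) (hne : U ≠ V)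
    {x : E} (hx : x ∈ (faceSpan p S)ᗮ) (hxW : x ∈ faceSpan p W) :
    ⟪unitNormal p V W, x⟫ • unitNormal p S U + ⟪unitNormal p U W, x⟫ • unitNormal p S V =
      dihedralSin p S U V W • x := by
  rw [hU.upper_unitNormal_eq hV hne, hU.unitNormal_eq hV, inner_sub_left, real_inner_smul_left,
    real_inner_smul_left]
  conv_rhs => rw [hU.eq_add_of_mem hx hxW]
  module

lemma inner_unitNormal_of_subset (hW : IsCover p W X) (hs : U₀ ⊆ W) :
    ⟪unitNormal p W X, unitNormal p S U₀⟫ = 0 :=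
  Submodule.inner_left_of_mem_orthogonal (faceSpan_mono hs unitNormal_mem)
    hW.unitNormal_mem_orthogonal

lemma inner_unitNormal_pos_of_not_subset (h₀ : IsCover p S U₀) (h₀X : U₀ ⊆ X)
    (hW : IsCover p W X) (hSW : S ⊆ W) (hs : ¬U₀ ⊆ W) :
    0 < ⟪unitNormal p W X, unitNormal p S U₀⟫ := by
  obtain ⟨i, hi, hiW⟩ := Finset.not_subset.1 hs
  have hpos := hW.inner_unitNormal_pos (h₀X hi) hiW
  rw [h₀.inner_eq_mul (faceSpan_orthogonal_anti hSW hW.unitNormal_mem_orthogonal) hi] at hpos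
  rw [real_inner_comm]
  exact (mul_pos_iff_of_pos_left (h₀.inner_unitNormal_pos hi fun h => hiW (hSW h))).1 hpos

/-- The weight attached to the ridge `W` between the facets `U` and `adjacent p S U W` of a corner
in which a base facet `U₀` is fixed. It is `0`, as a junk value, if `W` is a ridge of `U₀`. -/
noncomputable def cornerWeight (p : ι → E) (X S U₀ U W : Finset ι) : ℝ :=
  (dihedralSin p S U (adjacent p S U W) W * ⟪unitNormal p W X, unitNormal p S U₀⟫)⁻¹

/-- The height of the facet `U` of a corner of the dual face of `S` above the base point of the
dual face of `U₀`. -/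
noncomputable def cornerHeight (p : ι → E) (X S U₀ U : Finset ι) : ℝ :=
  ⟪unitNormal p S U, facePoint p X - facePoint p U₀⟫

lemma cornerHeight_pos (h₀ : IsCover p S U₀) (hX : IsFace p X) (hU : IsCover p S U) (hUX : U ⊆ X)
    (hne : U ≠ U₀) : 0 < cornerHeight p X S U₀ U := by
  rw [cornerHeight, inner_sub_right,
    inner_unitNormal_eq_of_active hU.isFace_right fun i hi => inner_facePoint_eq hX (hUX hi)]
  exact sub_pos.2 (hU.inner_unitNormal_lt h₀.isFace_right h₀.subset (hU.not_subset h₀ hne))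

lemma IsFlag.cornerHeight_pos (h : IsFlag p S U W) (h₀ : IsCover p S U₀) (hX : IsFace p X)
    (hWX : W ⊆ X) (hs : ¬U₀ ⊆ W) : 0 < cornerHeight p X S U₀ U :=
  PolytopeRigidity.cornerHeight_pos h₀ hX h.lower (h.upper.subset.trans hWX) <| by
    rintro rfl
    exact hs h.upper.subset

lemma IsFlag.cornerWeight_adjacent (h : IsFlag p S U W) :
    cornerWeight p X S U₀ (PolytopeRigidity.adjacent p S U W) W = cornerWeight p X S U₀ U W := by
  rw [cornerWeight, cornerWeight, h.adjacent_adjacent, h.sin_comm h.adjacent h.ne_adjacent]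

variable (hX : IsFace p X) (hr : faceRank p X = faceRank p S + 3)
include hX hr

lemma IsFlag.cornerWeight_eq_zero (h : IsFlag p S U W) (hWX : W ⊆ X) (hs : U₀ ⊆ W) :
    cornerWeight p X S U₀ U W = 0 := by
  rw [cornerWeight, inner_unitNormal_of_subset (h.upper_flag hX hr hWX).upper hs, mul_zero,
    inv_zero]

lemma IsFlag.cornerWeight_pos (h : IsFlag p S U W) (h₀ : IsCover p S U₀) (h₀X : U₀ ⊆ X)
    (hWX : W ⊆ X) (hs : ¬U₀ ⊆ W) : 0 < cornerWeight p X S U₀ U W :=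
  inv_pos.2 <| mul_pos h.sin_adjacent_pos <|
    inner_unitNormal_pos_of_not_subset h₀ h₀X (h.upper_flag hX hr hWX).upper h.subset hs

lemma IsFlag.cornerWeight_smul (h : IsFlag p S U W) (h₀ : IsCover p S U₀) (h₀X : U₀ ⊆ X)
    (hWX : W ⊆ X) (hs : ¬U₀ ⊆ W) :
    cornerWeight p X S U₀ U W • unitNormal p S (PolytopeRigidity.adjacent p S U W) =
      (cornerWeight p X S U₀ U W * dihedralCos p S U (PolytopeRigidity.adjacent p S U W)) •
        unitNormal p S U + ⟪unitNormal p W X, unitNormal p S U₀⟫⁻¹ • unitNormal p U W := by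
  have hsin := h.sin_adjacent_pos.ne'
  have hinner := (inner_unitNormal_pos_of_not_subset h₀ h₀X (h.upper_flag hX hr hWX).upper
    h.subset hs).ne'
  conv_lhs => rw [h.unitNormal_eq h.adjacent]
  rw [cornerWeight]
  match_scalars
  · ring
  · field_simp

/- The normals of the two facets adjacent to `U` span, modulo the normal of `U`, the same ray as
the normal of the base facet. -/
lemma exists_sum_cornerWeight_smul_eq (h₀ : IsCover p S U₀) (h₀X : U₀ ⊆ X) (hU : IsCover p S U)
    (hUX : U ⊆ X) (hs : ∀ W ∈ coversIn p X U, ¬U₀ ⊆ W) :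
    ∃ ρ σ : ℝ, 0 < σ ∧ ∑ W ∈ coversIn p X U,
      cornerWeight p X S U₀ U W • unitNormal p S (adjacent p S U W) =
        ρ • unitNormal p S U + σ • unitNormal p S U₀ := by
  classical
  obtain ⟨W, h, hWX⟩ := exists_isFlag_of_isCover hX hr hU hUX
  have hW := h.upper_flag hX hr hWX
  have hW' := hW.adjacent
  have h' : IsFlag p S U (adjacent p U W X) := ⟨hU, hW'.lower⟩
  have hsW := hs W (mem_coversIn.2 ⟨h.upper, hWX⟩)
  have hsW' := hs _ (mem_coversIn.2 ⟨hW'.lower, hW'.upper.subset⟩)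
  rw [h.coversIn_eq_pair hX hr hWX, Finset.sum_pair hW.ne_adjacent,
    h.cornerWeight_smul hX hr h₀ h₀X hWX hsW,
    h'.cornerWeight_smul hX hr h₀ h₀X hW'.upper.subset hsW']
  have hpos := inner_unitNormal_pos_of_not_subset h₀ h₀X hW.upper h.subset hsW
  have hpos' := inner_unitNormal_pos_of_not_subset h₀ h₀X hW'.upper h'.subset hsW'
  have hsin := hW.sin_adjacent_pos
  have hnormals : ∀ T, IsFlag p U T X → ⟪unitNormal p T X,
      unitNormal p S U₀ - ⟪unitNormal p S U, unitNormal p S U₀⟫ • unitNormal p S U⟫ =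
        ⟪unitNormal p T X, unitNormal p S U₀⟫ := fun T hT => by
    rw [inner_sub_right, inner_smul_right,
      inner_unitNormal_of_subset hT.upper hT.lower.subset, mul_zero, sub_zero]
  have hpair := hW.inner_smul_add_inner_smul hW' hW.ne_adjacent
    (hU.sub_smul_mem_orthogonal h₀.unitNormal_mem_orthogonal)
    (sub_mem (faceSpan_mono h₀X unitNormal_mem)
      (Submodule.smul_mem _ _ (faceSpan_mono hUX unitNormal_mem)))
  rw [hnormals _ hW, hnormals _ hW'] at hpair
  set b := ⟪unitNormal p W X, unitNormal p S U₀⟫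
  set b' := ⟪unitNormal p (adjacent p U W X) X, unitNormal p S U₀⟫
  have hscaled : b⁻¹ • unitNormal p U W + b'⁻¹ • unitNormal p U (adjacent p U W X) =
      (dihedralSin p U W (adjacent p U W X) X / (b * b')) • (unitNormal p S U₀ -
        ⟪unitNormal p S U, unitNormal p S U₀⟫ • unitNormal p S U) := by
    rw [div_eq_inv_mul, mul_smul, ← hpair, smul_add, smul_smul, smul_smul]
    congr 2 <;> field_simp
  refine ⟨cornerWeight p X S U₀ U W * dihedralCos p S U (adjacent p S U W) +
    cornerWeight p X S U₀ U (adjacent p U W X) *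
      dihedralCos p S U (adjacent p S U (adjacent p U W X)) -
    dihedralSin p U W (adjacent p U W X) X / (b * b') * ⟪unitNormal p S U, unitNormal p S U₀⟫,
    dihedralSin p U W (adjacent p U W X) X / (b * b'), by positivity, ?_⟩
  rw [add_add_add_comm, hscaled]
  module

end CornerWeight

section Nonneg

variable {E : Type*} [NormedAddCommGroup E] [InnerProductSpace ℝ E] [FiniteDimensional ℝ E]
variable {ι : Type*} [Fintype ι] {p : ι → E} {S U W X U₀ : Finset ι} {Y : Finset ι → ℝ}
  {w : Finset ι → E}

namespace IsLocalSlope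

variable (hw : IsLocalSlope p X S Y w) (hX : IsFace p X)
  (hr : faceRank p X = faceRank p S + 3) (h₀ : IsCover p S U₀)
include hw hX hr h₀

lemma vanish_of_subset (hw₀ : w U₀ = 0) (h : IsFlag p S U W) (hWX : W ⊆ X) (hs : U₀ ⊆ W) :
    Y U = 0 ∧ ⟪unitNormal p S U₀, w U⟫ = 0 := by
  have h₀W : IsFlag p S U₀ W := .of_subset h₀ h.upper.isFace_right h.rank_eq hs
  have hup := (h.upper_flag hX hr hWX).upper
  obtain ⟨c, hc⟩ : ∃ c : ℝ, w U = c • unitNormal p W X := by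
    by_cases hne : U = U₀
    · exact ⟨0, by rw [hne, hw₀, zero_smul]⟩
    · have hsub := hw.sub_adjacent_eq_smul hX hr h₀W hWX
      rw [← h₀W.eq_adjacent h hne, hw₀, zero_sub] at hsub
      exact ⟨-⟪unitNormal p W X, -w U⟫, by rw [neg_smul, ← hsub, neg_neg]⟩
  rw [← hw.inner_lower U h.lower (h.upper.subset.trans hWX), hc, inner_smul_right,
    inner_smul_right, real_inner_comm, inner_unitNormal_of_subset hup h.upper.subset,
    real_inner_comm, inner_unitNormal_of_subset hup hs]
  simp

variable (h₀X : U₀ ⊆ X) (hw₀ : w U₀ = 0)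
include h₀X hw₀

/- Symmetrized over the two facets at a ridge, the defect involves only the jump
`w U - w (adjacent p S U W)`, which is a multiple of the normal of `X` over `W`. -/
lemma cornerDefect_eq_flagSum_cornerWeight :
    cornerDefect p X S Y = flagSum p X S fun U W => cornerWeight p X S U₀ U W *
      (height p S U * Y (adjacent p S U W) - Y U * height p S (adjacent p S U W)) *
        ⟪unitNormal p S U₀, w U⟫ := by
  rw [hw.cornerDefect_eq hX hr]
  refine flagSum_congr_of_symm fun U W h hWX => ?_
  rw [h.adjacent_adjacent, ← h.sin_comm h.adjacent h.ne_adjacent, h.cornerWeight_adjacent]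
  set V := adjacent p S U W with hV
  by_cases hs : U₀ ⊆ W
  · rw [(hw.vanish_of_subset hX hr h₀ hw₀ h hWX hs).1,
      (hw.vanish_of_subset hX hr h₀ hw₀ h.adjacent hWX hs).1]
    ring
  · have hinner := (inner_unitNormal_pos_of_not_subset h₀ h₀X (h.upper_flag hX hr hWX).upper
      h.subset hs).ne'
    have hsin := h.sin_adjacent_pos.ne'
    have hjump := congrArg (⟪unitNormal p S U₀, ·⟫) (hw.sub_adjacent_eq_smul hX hr h hWX)
    simp only [inner_sub_right, inner_smul_right, ← hV,
      real_inner_comm (unitNormal p W X) (unitNormal p S U₀)] at hjump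
    rw [← hV] at hsin
    rw [cornerWeight, ← hV]
    field_simp
    linear_combination (height p S V * Y U - height p S U * Y V) * hjump

omit hw₀ in
lemma exists_sum_cornerWeight_mul_eq (hU : IsCover p S U) (hUX : U ⊆ X)
    (hs : ∀ W ∈ coversIn p X U, ¬U₀ ⊆ W) :
    ∃ ρ σ : ℝ, 0 < σ ∧
      ∑ W ∈ coversIn p X U, cornerWeight p X S U₀ U W * Y (adjacent p S U W) =
        ρ * Y U + σ * ⟪unitNormal p S U₀, w U⟫ ∧
      ∑ W ∈ coversIn p X U, cornerWeight p X S U₀ U W * height p S (adjacent p S U W) =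
        ρ * height p S U + σ * height p S U₀ ∧
      ∑ W ∈ coversIn p X U, cornerWeight p X S U₀ U W *
        cornerHeight p X S U₀ (adjacent p S U W) = ρ * cornerHeight p X S U₀ U := by
  obtain ⟨ρ, σ, hσ, hsum⟩ := exists_sum_cornerWeight_smul_eq hX hr h₀ h₀X hU hUX hs
  have hinner : ∀ x : E, ∑ W ∈ coversIn p X U,
      cornerWeight p X S U₀ U W * ⟪unitNormal p S (adjacent p S U W), x⟫ =
        ρ * ⟪unitNormal p S U, x⟫ + σ * ⟪unitNormal p S U₀, x⟫ := fun x => by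
    simpa only [sum_inner, inner_add_left, real_inner_smul_left] using congrArg (⟪·, x⟫) hsum
  have hflag : ∀ W ∈ coversIn p X U, IsFlag p S U W ∧ W ⊆ X := fun W hW =>
    ⟨⟨hU, (mem_coversIn.1 hW).1⟩, (mem_coversIn.1 hW).2⟩
  refine ⟨ρ, σ, hσ, ?_, ?_, ?_⟩
  · rw [← hw.inner_lower U hU hUX, ← hinner]
    exact Finset.sum_congr rfl fun W hW => by
      rw [hw.inner_adjacent (hflag W hW).1 (hflag W hW).2]
  · rw [← hU.inner_sub_facePoint hX hUX, ← h₀.inner_sub_facePoint hX h₀X, ← hinner]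
    exact Finset.sum_congr rfl fun W hW => by
      rw [(hflag W hW).1.adjacent.lower.inner_sub_facePoint hX
        ((hflag W hW).1.adjacent.upper.subset.trans (hflag W hW).2)]
  · simp only [cornerHeight, hinner]
    rw [Submodule.inner_right_of_mem_orthogonal unitNormal_mem
      (facePoint_sub_mem h₀.isFace_right hX h₀X), mul_zero, add_zero]

/- By `exists_sum_cornerWeight_mul_eq` everything cancels except a nonnegative multiple of
`⟪unitNormal p S U₀, w U⟫ ^ 2`. -/
lemma facet_sum_nonneg (hU : IsCover p S U) (hUX : U ⊆ X) :
    0 ≤ ∑ W ∈ coversIn p X U, (cornerWeight p X S U₀ U W *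
      (height p S U * Y (adjacent p S U W) - Y U * height p S (adjacent p S U W)) *
        ⟪unitNormal p S U₀, w U⟫ +
      height p S U₀ * (cornerWeight p X S U₀ U W * (Y U * Y (adjacent p S U W) -
        Y U ^ 2 * cornerHeight p X S U₀ (adjacent p S U W) / cornerHeight p X S U₀ U))) := by
  by_cases hex : ∃ W ∈ coversIn p X U, U₀ ⊆ W
  · obtain ⟨W, hW, hs⟩ := hex
    rw [mem_coversIn] at hW
    obtain ⟨hY, ht⟩ := hw.vanish_of_subset hX hr h₀ hw₀ ⟨hU, hW.1⟩ hW.2 hs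
    simp [hY, ht]
  push Not at hex
  obtain ⟨ρ, σ, hσ, hY, hheight, hcorner⟩ :=
    hw.exists_sum_cornerWeight_mul_eq hX hr h₀ h₀X hU hUX hex
  have hne : U ≠ U₀ := by
    rintro rfl
    obtain ⟨W, h, hWX⟩ := exists_isFlag_of_isCover hX hr hU hUX
    exact hex W (mem_coversIn.2 ⟨h.upper, hWX⟩) h.upper.subset
  have hpos := (cornerHeight_pos h₀ hX hU hUX hne).ne'
  set t := ⟪unitNormal p S U₀, w U⟫
  calc (0 : ℝ) ≤ σ * height p S U * t ^ 2 :=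
        mul_nonneg (mul_nonneg hσ.le hU.height_pos.le) (sq_nonneg t)
    _ = t * (height p S U * (ρ * Y U + σ * t) -
          Y U * (ρ * height p S U + σ * height p S U₀)) +
        height p S U₀ * (Y U * (ρ * Y U + σ * t) - Y U ^ 2 / cornerHeight p X S U₀ U *
          (ρ * cornerHeight p X S U₀ U)) := by
      field_simp
      ring
    _ = _ := by
      rw [← hY, ← hheight, ← hcorner]
      simp only [Finset.mul_sum, ← Finset.sum_sub_distrib, ← Finset.sum_add_distrib]
      exact Finset.sum_congr rfl fun W _ => by ring

end IsLocalSlope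

/-- The weighted Dirichlet energy of `Y` on the facets of a corner, relative to the ground state
`cornerHeight`. -/
noncomputable def cornerEnergy (p : ι → E) (X S U₀ : Finset ι) (Y : Finset ι → ℝ) : ℝ :=
  flagSum p X S fun U W => cornerWeight p X S U₀ U W *
    (cornerHeight p X S U₀ U * cornerHeight p X S U₀ (adjacent p S U W) *
      (Y U / cornerHeight p X S U₀ U -
        Y (adjacent p S U W) / cornerHeight p X S U₀ (adjacent p S U W)) ^ 2)

section Energy

variable (hX : IsFace p X) (hr : faceRank p X = faceRank p S + 3)
include hX hr

lemma IsFlag.cornerEnergy_term_nonneg (h : IsFlag p S U W) (h₀ : IsCover p S U₀) (h₀X : U₀ ⊆ X)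
    (hWX : W ⊆ X) (Y : Finset ι → ℝ) : 0 ≤ cornerWeight p X S U₀ U W *
      (cornerHeight p X S U₀ U * cornerHeight p X S U₀ (PolytopeRigidity.adjacent p S U W) *
        (Y U / cornerHeight p X S U₀ U - Y (PolytopeRigidity.adjacent p S U W) /
          cornerHeight p X S U₀ (PolytopeRigidity.adjacent p S U W)) ^ 2) := by
  by_cases hs : U₀ ⊆ W
  · rw [h.cornerWeight_eq_zero hX hr hWX hs, zero_mul]
  · exact mul_nonneg (h.cornerWeight_pos hX hr h₀ h₀X hWX hs).le
      (mul_nonneg (mul_nonneg (h.cornerHeight_pos h₀ hX hWX hs).le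
        (h.adjacent.cornerHeight_pos h₀ hX hWX hs).le) (sq_nonneg _))

lemma flagSum_cornerWeight_eq_cornerEnergy (h₀ : IsCover p S U₀) (Y : Finset ι → ℝ) :
    flagSum p X S (fun U W => cornerWeight p X S U₀ U W * (Y U * Y (adjacent p S U W) -
      Y U ^ 2 * cornerHeight p X S U₀ (adjacent p S U W) / cornerHeight p X S U₀ U)) =
    -(1 / 2) * cornerEnergy p X S U₀ Y := by
  rw [cornerEnergy, ← flagSum_const_mul]
  refine flagSum_congr_of_symm fun U W h hWX => ?_
  rw [h.adjacent_adjacent, h.cornerWeight_adjacent]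
  by_cases hs : U₀ ⊆ W
  · rw [h.cornerWeight_eq_zero hX hr hWX hs]
    ring
  · have hU := (h.cornerHeight_pos h₀ hX hWX hs).ne'
    have hV := (h.adjacent.cornerHeight_pos h₀ hX hWX hs).ne'
    field_simp
    ring

lemma IsLocalSlope.height_mul_cornerEnergy_le (hw : IsLocalSlope p X S Y w)
    (h₀ : IsCover p S U₀) (h₀X : U₀ ⊆ X) (hw₀ : w U₀ = 0) :
    height p S U₀ / 2 * cornerEnergy p X S U₀ Y ≤ cornerDefect p X S Y := by
  have hsum : 0 ≤ flagSum p X S fun U W => cornerWeight p X S U₀ U W *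
      (height p S U * Y (adjacent p S U W) - Y U * height p S (adjacent p S U W)) *
        ⟪unitNormal p S U₀, w U⟫ +
      height p S U₀ * (cornerWeight p X S U₀ U W * (Y U * Y (adjacent p S U W) -
        Y U ^ 2 * cornerHeight p X S U₀ (adjacent p S U W) / cornerHeight p X S U₀ U)) :=
    Finset.sum_nonneg fun U hU => hw.facet_sum_nonneg hX hr h₀ h₀X hw₀
      (mem_coversIn.1 hU).1 (mem_coversIn.1 hU).2
  rw [flagSum_add, flagSum_const_mul, flagSum_cornerWeight_eq_cornerEnergy hX hr h₀,
    ← hw.cornerDefect_eq_flagSum_cornerWeight hX hr h₀ h₀X hw₀] at hsum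
  linarith

/- If the energy vanishes, a zero of `Y` propagates across every ridge that is not one of `U₀`, and
at the ridges of `U₀` the variation vanishes anyway. -/
lemma IsLocalSlope.eq_zero_of_cornerEnergy_eq_zero (hw : IsLocalSlope p X S Y w)
    (h₀ : IsCover p S U₀) (h₀X : U₀ ⊆ X) (hw₀ : w U₀ = 0) (hE : cornerEnergy p X S U₀ Y = 0)
    (hU : IsCover p S U) (hUX : U ⊆ X) : Y U = 0 := by
  have hY₀ : Y U₀ = 0 := by rw [← hw.inner_lower U₀ h₀ h₀X, hw₀, inner_zero_right]
  refine adjacent_induction_subset h₀.isFace_left hX (fun U => Y U = 0)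
    (fun U W h hWX hYU => ?_) h₀ h₀X hY₀ hU hUX
  by_cases hs : U₀ ⊆ W
  · exact (hw.vanish_of_subset hX hr h₀ hw₀ h.adjacent hWX hs).1
  have hzero := eq_zero_of_flagSum_eq_zero
    (fun U W h hWX => h.cornerEnergy_term_nonneg hX hr h₀ h₀X hWX Y) hE h hWX
  have hV := (h.adjacent.cornerHeight_pos h₀ hX hWX hs).ne'
  simpa [hYU, hV, (h.cornerWeight_pos hX hr h₀ h₀X hWX hs).ne',
    (h.cornerHeight_pos h₀ hX hWX hs).ne'] using hzero

/- Subtract the translation that agrees with `Y` near a facet `U₀` of the corner. -/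
theorem exists_isLocalSlope_sub (hS : IsFace p S) (hSX : S ⊆ X) (Y : Finset ι → ℝ) :
    ∃ (U₀ : Finset ι) (v : E) (w : Finset ι → E), IsCover p S U₀ ∧ U₀ ⊆ X ∧
      v ∈ (faceSpan p S)ᗮ ∧ IsLocalSlope p X S (Y - fun U => ⟪unitNormal p S U, v⟫) w ∧
      w U₀ = 0 ∧
      cornerDefect p X S (Y - fun U => ⟪unitNormal p S U, v⟫) = cornerDefect p X S Y := by
  have hss : S ⊂ X := hSX.ssubset_of_ne fun h => by
    rw [h] at hr
    omega
  obtain ⟨U₀, h₀, h₀X⟩ := exists_isCover_subset hS hX hss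
  obtain ⟨w, hw⟩ := exists_isLocalSlope hX hr Y
  have hv := hw.mem_orthogonal U₀ h₀ h₀X
  have hvX := hw.mem_faceSpan U₀ h₀ h₀X
  exact ⟨U₀, w U₀, _, h₀, h₀X, hv, hw.sub (.const hv hvX), sub_self (w U₀),
    hw.cornerDefect_sub_inner hX hr hv hvX⟩

lemma cornerEnergy_nonneg (h₀ : IsCover p S U₀) (h₀X : U₀ ⊆ X) (Y : Finset ι → ℝ) :
    0 ≤ cornerEnergy p X S U₀ Y :=
  flagSum_nonneg fun _ _ h hWX => h.cornerEnergy_term_nonneg hX hr h₀ h₀X hWX Y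

theorem cornerDefect_nonneg (hS : IsFace p S) (hSX : S ⊆ X) (Y : Finset ι → ℝ) :
    0 ≤ cornerDefect p X S Y := by
  obtain ⟨U₀, v, w, h₀, h₀X, -, hw, hw₀, hY⟩ := exists_isLocalSlope_sub hX hr hS hSX Y
  rw [← hY]
  exact (mul_nonneg (half_pos h₀.height_pos).le
    (cornerEnergy_nonneg hX hr h₀ h₀X _)).trans (hw.height_mul_cornerEnergy_le hX hr h₀ h₀X hw₀)

theorem exists_eq_inner_of_cornerDefect_eq_zero (hS : IsFace p S) (hSX : S ⊆ X)
    (hY : cornerDefect p X S Y = 0) : ∃ v ∈ (faceSpan p S)ᗮ,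
      ∀ U, IsCover p S U → U ⊆ X → Y U = ⟪unitNormal p S U, v⟫ := by
  obtain ⟨U₀, v, w, h₀, h₀X, hv, hw, hw₀, hdefect⟩ := exists_isLocalSlope_sub hX hr hS hSX Y
  have hle := hw.height_mul_cornerEnergy_le hX hr h₀ h₀X hw₀
  rw [hdefect, hY] at hle
  have hE := (nonpos_of_mul_nonpos_right hle (half_pos h₀.height_pos)).antisymm
    (cornerEnergy_nonneg hX hr h₀ h₀X _)
  exact ⟨v, hv, fun U hU hUX => sub_eq_zero.1 <|
    hw.eq_zero_of_cornerEnergy_eq_zero hX hr h₀ h₀X hw₀ hE hU hUX⟩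

end Energy

end Nonneg

/-! ### Hyperbolicity of the second variation -/

section Spectral

/- An eigenvalue `l` satisfies `l ≤ l ^ 2` and `l ≤ 1`, so it is nonpositive or equal to `1`. -/
lemma inner_apply_self_nonpos_of_inner_eq_zero {F : Type*} [NormedAddCommGroup F]
    [InnerProductSpace ℝ F] [FiniteDimensional ℝ F] {T : F →ₗ[ℝ] F} (hT : T.IsSymmetric) {h y : F}
    (hsq : ∀ x, ⟪T x, x⟫ ≤ ⟪T x, T x⟫) (hle : ∀ x, ⟪T x, x⟫ ≤ ⟪x, x⟫)
    (hfix : ∀ x, T x = x → ∃ c : ℝ, x = c • h) (hy : ⟪y, h⟫ = 0) : ⟪T y, y⟫ ≤ 0 := by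
  set e := hT.eigenvectorBasis rfl with he
  set l := hT.eigenvalues rfl with hl
  have hTe : ∀ i, T (e i) = l i • e i := fun i => by
    rw [he, hT.apply_eigenvectorBasis, hl, RCLike.ofReal_real_eq_id, id]
  have hsum : ⟪T y, y⟫ = ∑ i, l i * ⟪e i, y⟫ ^ 2 := by
    rw [← e.sum_inner_mul_inner (T y) y]
    refine Finset.sum_congr rfl fun i _ => ?_
    rw [hT y (e i), hTe, inner_smul_right, real_inner_comm]
    ring
  rw [hsum]
  refine Finset.sum_nonpos fun i _ => ?_
  rcases le_or_gt (l i) 0 with hi | hi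
  · exact mul_nonpos_of_nonpos_of_nonneg hi (sq_nonneg _)
  have hone : ⟪e i, e i⟫ = (1 : ℝ) := by rw [real_inner_self_eq_norm_sq, e.norm_eq_one, one_pow]
  have hsqi := hsq (e i)
  have hlei := hle (e i)
  rw [hTe, real_inner_smul_left, hone, mul_one] at hlei
  rw [hTe, real_inner_smul_left, real_inner_smul_left, real_inner_smul_right, hone, mul_one] at hsqi
  have hfixi : l i = 1 := by nlinarith
  obtain ⟨c, hc⟩ := hfix (e i) (by rw [hTe, hfixi, one_smul])
  rw [hc, real_inner_smul_left, real_inner_comm, hy, mul_zero, zero_pow two_ne_zero, mul_zero]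

section Weighted

variable {κ : Type*} {b h y : κ → ℝ} {A : κ → Module.Dual ℝ (κ → ℝ)}

/- The previous lemma in the coordinates `√(b u) * y u`. -/
lemma sum_univ_mul_apply_nonpos [Fintype κ] (hb : ∀ u, 0 < b u)
    (hsymm : ∀ x z, ∑ u, x u * A u z = ∑ u, z u * A u x)
    (hsq : ∀ x, ∑ u, x u * A u x ≤ ∑ u, A u x ^ 2 / b u)
    (hle : ∀ x, ∑ u, x u * A u x ≤ ∑ u, b u * x u ^ 2)
    (hfix : ∀ x, (∀ u, A u x = b u * x u) → ∃ c : ℝ, x = c • h)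
    (hy : ∑ u, b u * h u * y u = 0) : ∑ u, y u * A u y ≤ 0 := by
  have hr : ∀ u, 0 < √(b u) := fun u => Real.sqrt_pos.2 (hb u)
  have hrr : ∀ u, √(b u) ^ 2 = b u := fun u => Real.sq_sqrt (hb u).le
  let D : (κ → ℝ) →ₗ[ℝ] κ → ℝ := LinearMap.pi fun u => (√(b u))⁻¹ • LinearMap.proj u
  let e := WithLp.linearEquiv 2 ℝ (κ → ℝ)
  let T : EuclideanSpace ℝ κ →ₗ[ℝ] EuclideanSpace ℝ κ :=
    e.symm.toLinearMap ∘ₗ D ∘ₗ LinearMap.pi A ∘ₗ D ∘ₗ e.toLinearMap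
  let f : (κ → ℝ) → EuclideanSpace ℝ κ := fun x => WithLp.toLp 2 fun u => √(b u) * x u
  have hD : ∀ v u, v u = √(b u) * D v u := fun v u => (mul_inv_cancel_left₀ (hr u).ne' _).symm
  have hDf : ∀ x, D (f x) = x := fun x => funext fun u => inv_mul_cancel_left₀ (hr u).ne' _
  have hT : ∀ v u, √(b u) * T v u = A u (D v) := fun v u => mul_inv_cancel_left₀ (hr u).ne' _
  have hinner : ∀ v w : EuclideanSpace ℝ κ, ⟪v, w⟫ = ∑ u, w u * v u := fun v w => rfl
  have hTinner : ∀ v w, ⟪T v, w⟫ = ∑ u, D w u * A u (D v) := fun v w => by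
    rw [hinner]
    refine Finset.sum_congr rfl fun u _ => ?_
    rw [hD w u, ← hT]
    ring
  have hTsymm : T.IsSymmetric := fun v w => by
    rw [hTinner, hsymm, ← hTinner, real_inner_comm]
  have hmain := inner_apply_self_nonpos_of_inner_eq_zero hTsymm (h := f h) (y := f y)
    (fun v => ?_) (fun v => ?_) (fun v hv => ?_) ?_
  · rwa [hTinner, hDf] at hmain
  · rw [hTinner, hinner]
    refine (hsq _).trans_eq (Finset.sum_congr rfl fun u _ => ?_)
    rw [← hT, mul_pow, hrr, mul_div_cancel_left₀ _ (hb u).ne', sq]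
  · rw [hTinner, hinner]
    refine (hle _).trans_eq (Finset.sum_congr rfl fun u _ => ?_)
    rw [hD v u, mul_mul_mul_comm, ← sq, ← sq, hrr]
  · obtain ⟨c, hc⟩ := hfix (D v) fun u => by rw [← hT, hv, hD v u, ← mul_assoc, ← sq, hrr]
    refine ⟨c, PiLp.ext fun u => ?_⟩
    rw [hD v u, hc]
    exact mul_left_comm _ _ _
  · rw [hinner, ← hy]
    refine Finset.sum_congr rfl fun u _ => ?_
    rw [← hrr]
    change √(b u) * h u * (√(b u) * y u) = _
    ring

lemma sum_mul_apply_nonpos [Finite κ] {s : Finset κ} (hb : ∀ u ∈ s, 0 < b u)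
    (hsymm : ∀ x z, ∑ u ∈ s, x u * A u z = ∑ u ∈ s, z u * A u x)
    (hsq : ∀ x, ∑ u ∈ s, x u * A u x ≤ ∑ u ∈ s, A u x ^ 2 / b u)
    (hle : ∀ x, ∑ u ∈ s, x u * A u x ≤ ∑ u ∈ s, b u * x u ^ 2)
    (hfix : ∀ x, (∀ u ∈ s, A u x = b u * x u) → ∃ c : ℝ, ∀ u ∈ s, x u = c * h u)
    (hy : ∑ u ∈ s, b u * h u * y u = 0) : ∑ u ∈ s, y u * A u y ≤ 0 := by
  classical
  cases nonempty_fintype κ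
  have hext : ∀ x z : κ → ℝ,
      ∑ u, x u * (if u ∈ s then A u else 0) z = ∑ u ∈ s, x u * A u z := fun x z => by
    simp [ite_apply, apply_ite, Finset.sum_ite_mem]
  have hmain := sum_univ_mul_apply_nonpos (b := fun u => if u ∈ s then b u else 1) (y := y)
    (h := fun u => if u ∈ s then h u else 0) (A := fun u => if u ∈ s then A u else 0)
    (fun u => ?_) (fun x z => ?_) (fun x => ?_) (fun x => ?_) (fun x hx => ?_) ?_
  · rwa [hext] at hmain
  · split_ifs with hu
    exacts [hb u hu, one_pos]
  · rw [hext, hext, hsymm]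
  · rw [hext]
    refine (hsq x).trans_eq ?_
    rw [← Finset.sum_subset (Finset.subset_univ s) fun u _ hu => by simp [hu]]
    exact Finset.sum_congr rfl fun u hu => by simp [hu]
  · rw [hext]
    refine (hle x).trans ?_
    rw [← Finset.sum_filter_add_sum_filter_not Finset.univ (· ∈ s), Finset.filter_univ_mem]
    refine (Finset.sum_congr rfl fun u hu => by simp [hu]).trans_le
      (le_add_of_nonneg_right (Finset.sum_nonneg fun u hu => ?_))
    rw [if_neg (Finset.mem_filter.1 hu).2, one_mul]
    exact sq_nonneg _
  · obtain ⟨c, hc⟩ := hfix x fun u hu => by simpa [hu] using hx u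
    refine ⟨c, funext fun u => ?_⟩
    by_cases hu : u ∈ s
    · simp [hu, hc]
    · simpa [hu] using (hx u).symm
  · refine Eq.trans ?_ hy
    rw [← Finset.sum_subset (Finset.subset_univ s) fun u _ hu => by simp [hu]]
    exact Finset.sum_congr rfl fun u hu => by simp [hu]

end Weighted

end Spectral

section Corners

variable {E : Type*} [NormedAddCommGroup E] [InnerProductSpace ℝ E] [FiniteDimensional ℝ E]
variable {ι : Type*} [Fintype ι] {p : ι → E} {S U V W X : Finset ι}

open Classical in
/-- The dual faces of codimension three in the dual face of `S`. -/
noncomputable def codimThreeFaces (p : ι → E) (S : Finset ι) : Finset (Finset ι) :=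
  Finset.univ.filter fun X => IsFace p X ∧ S ⊆ X ∧ faceRank p X = faceRank p S + 3

omit [FiniteDimensional ℝ E] in
lemma mem_codimThreeFaces :
    X ∈ codimThreeFaces p S ↔ IsFace p X ∧ S ⊆ X ∧ faceRank p X = faceRank p S + 3 := by
  simp [codimThreeFaces]

omit [FiniteDimensional ℝ E] in
lemma sum_codimThreeFaces (f : Finset ι → Finset ι → Finset ι → ℝ) :
    ∑ X ∈ codimThreeFaces p S, flagSum p X S (fun U W => f U W X) =
      flagSum p Finset.univ S fun U W => ∑ X ∈ coversIn p Finset.univ W, f U W X := by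
  classical
  simp only [flagSum_eq_sum_sigma]
  refine Finset.sum_comm' fun X x => ?_
  simp only [mem_sigma_coversIn, mem_codimThreeFaces, mem_coversIn_univ, Finset.subset_univ,
    and_true]
  constructor
  · rintro ⟨⟨hX, -, hr⟩, h, hxX⟩
    exact ⟨⟨h.upper.isFace_right, hX, hxX, by rw [hr, h.rank_eq]⟩, h⟩
  · rintro ⟨hX, h⟩
    exact ⟨⟨hX.isFace_right, h.subset.trans hX.subset, by rw [hX.rank_eq, h.rank_eq]⟩, h,
      hX.subset⟩

variable {m : ℕ} (hp : PositivelySpanning p) (hS : IsFace p S)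
  (hr : faceRank p S + (m + 3) = finrank ℝ E)
include hp hr

/- A Bochner formula, with the corner defects in the role of the curvature term. -/
theorem sum_height_mul_variationForm_sub (Y : Finset ι → ℝ) :
    ∑ U ∈ coversIn p Finset.univ S, height p S U *
        variationForm p (faceVolume p m) U (fun W => inducedVelocity p S U W Y)
          (fun W => inducedVelocity p S U W Y) -
      ((m : ℝ) + 1) * variationForm p (faceVolume p (m + 1)) S Y Y =
        ∑ X ∈ codimThreeFaces p S, faceVolume p m X * cornerDefect p X S Y := by
  have hfacets : ∑ U ∈ coversIn p Finset.univ S, height p S U *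
      variationForm p (faceVolume p m) U (fun W => inducedVelocity p S U W Y)
        (fun W => inducedVelocity p S U W Y) = flagSum p Finset.univ S fun U W =>
      height p S U * (inducedVelocity p S U W Y *
        facetVariation p (faceVolume p m) U W fun W => inducedVelocity p S U W Y) := by
    refine Finset.sum_congr rfl fun U _ => ?_
    rw [variationForm_apply, Finset.mul_sum]
  simp only [cornerDefect, ← flagSum_const_mul]
  rw [sum_codimThreeFaces fun U W X => faceVolume p m X * (inducedVelocity p S U W Y *
    (height p S U * inducedVelocity p U W X (fun W => inducedVelocity p S U W Y) -
      ⟪unitNormal p W X, facePoint p X - facePoint p S⟫ * Y U)), hfacets,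
    variationForm_eq_flagSum, ← flagSum_const_mul, ← flagSum_sub]
  refine flagSum_congr fun U W h _ => ?_
  have hcone := sum_faceVolume_mul_inner_sub hp (m := m) h.upper.isFace_right
    (by rw [h.rank_eq]; omega) (facePoint p S)
  rw [← mul_assoc ((m : ℝ) + 1), ← hcone, facetVariation_apply, Finset.mul_sum, Finset.mul_sum,
    Finset.sum_mul, ← Finset.sum_sub_distrib]
  exact Finset.sum_congr rfl fun X _ => by ring

include hS

lemma faceVolume_mul_cornerDefect_nonneg (Y : Finset ι → ℝ) (hX : X ∈ codimThreeFaces p S) :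
    0 ≤ faceVolume p m X * cornerDefect p X S Y := by
  obtain ⟨hX, hSX, hrX⟩ := mem_codimThreeFaces.1 hX
  exact mul_nonneg (faceVolume_pos hp hX (by omega)).le (cornerDefect_nonneg hX hrX hS hSX Y)

end Corners

section Induction

variable {E : Type*} [NormedAddCommGroup E] [InnerProductSpace ℝ E] [FiniteDimensional ℝ E]
variable {ι : Type*} [Fintype ι] {p : ι → E} {S U V W X : Finset ι} {m : ℕ}

lemma IsHyperbolic.variationForm_self_le (h : IsHyperbolic p m S) (hp : PositivelySpanning p)
    (hS : IsFace p S) (hr : faceRank p S + (m + 2) = finrank ℝ E) (Y : Finset ι → ℝ) :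
    variationForm p (faceVolume p m) S Y Y ≤
      ((m : ℝ) + 1) * (volumeVariation p m S Y ^ 2 / (((m : ℝ) + 2) * faceVolume p (m + 2) S)) := by
  have hK : 0 < ((m : ℝ) + 2) * faceVolume p (m + 2) S := by
    have := faceVolume_pos hp hS hr
    positivity
  rw [← volumeVariation_height] at hK ⊢
  set K := volumeVariation p m S (height p S)
  set L := volumeVariation p m S Y with hL
  have hle := h (Y + (-(L / K)) • height p S) (by
    rw [map_add, map_smul, smul_eq_mul]
    field_simp
    ring)
  rw [variationForm_add_smul, variationForm_height_right hp hr, variationForm_height_right hp hr,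
    ← hL] at hle
  refine sub_nonpos.1 (hle.trans_eq' ?_)
  field_simp
  ring

/- The form `(m + 1) * L Y ^ 2 / L H - Q Y Y` is nonnegative and vanishes at `Y`, which is therefore
in its kernel. -/
lemma IsHyperbolic.variationForm_eq_zero (h : IsHyperbolic p m S) (hp : PositivelySpanning p)
    (hS : IsFace p S) (hr : faceRank p S + (m + 2) = finrank ℝ E) {Y : Finset ι → ℝ}
    (hY : volumeVariation p m S Y = 0) (hYY : variationForm p (faceVolume p m) S Y Y = 0)
    (Z : Finset ι → ℝ) : variationForm p (faceVolume p m) S Y Z = 0 := by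
  set K := ((m : ℝ) + 2) * faceVolume p (m + 2) S
  set L := volumeVariation p m S Z with hL
  set Q := variationForm p (faceVolume p m) S
  have hdiscrim := discrim_le_zero (a := ((m : ℝ) + 1) * (L ^ 2 / K) - Q Z Z) (b := -2 * Q Y Z)
    (c := 0) fun c => by
      have hle := h.variationForm_self_le hp hS hr (Y + c • Z)
      rw [variationForm_add_smul, hYY, map_add, map_smul, hY, ← hL, smul_eq_mul] at hle
      linarith [show ((m : ℝ) + 1) * ((0 + c * L) ^ 2 / K) = ((m : ℝ) + 1) * (L ^ 2 / K) * (c * c)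
        by ring]
  rw [discrim] at hdiscrim
  exact pow_eq_zero_iff two_ne_zero |>.1 (le_antisymm (by linarith) (sq_nonneg _))

lemma facetVariation_eq_variationForm_single [DecidableEq ι] {g : Finset ι → ℝ}
    (hU : IsCover p S U) (Y : Finset ι → ℝ) :
    facetVariation p g S U Y = variationForm p g S (Pi.single U 1) Y := by
  rw [variationForm_apply, Finset.sum_eq_single_of_mem U (mem_coversIn_univ.2 hU)
    fun V _ hV => by rw [Pi.single_eq_of_ne hV, zero_mul], Pi.single_eq_same, one_mul]

section GroundState

variable {g F Y : Finset ι → ℝ} (hF : ∀ U, IsCover p S U → 0 < F U)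
  (hg : ∀ U W, IsFlag p S U W → 0 < g W)
include hF hg

lemma IsFlag.groundState_term_nonneg (h : IsFlag p S U W) (Y : Finset ι → ℝ) : 0 ≤ g W *
    (F U * F (PolytopeRigidity.adjacent p S U W) /
      dihedralSin p S U (PolytopeRigidity.adjacent p S U W) W *
        (Y U / F U - Y (PolytopeRigidity.adjacent p S U W) /
          F (PolytopeRigidity.adjacent p S U W)) ^ 2) := by
  have hU := hF U h.lower
  have hV := hF _ h.adjacent.lower
  have hsin := h.sin_adjacent_pos
  have hW := hg U W h
  positivity

lemma variationForm_self_le_sum_sq (Y : Finset ι → ℝ) : variationForm p g S Y Y ≤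
    ∑ U ∈ coversIn p Finset.univ S, (Y U / F U) ^ 2 * (F U * facetVariation p g S U F) := by
  rw [variationForm_self_eq fun U hU => (hF U hU).ne']
  linarith [flagSum_nonneg (p := p) (S := S) (X := Finset.univ)
    fun U W h _ => h.groundState_term_nonneg hF hg Y]

lemma IsFlag.div_adjacent_eq (heq : variationForm p g S Y Y =
      ∑ U ∈ coversIn p Finset.univ S, (Y U / F U) ^ 2 * (F U * facetVariation p g S U F))
    (h : IsFlag p S U W) : Y (PolytopeRigidity.adjacent p S U W) /
      F (PolytopeRigidity.adjacent p S U W) = Y U / F U := by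
  rw [variationForm_self_eq fun U hU => (hF U hU).ne', add_eq_right] at heq
  have hzero := eq_zero_of_flagSum_eq_zero
    (fun U W h _ => h.groundState_term_nonneg hF hg Y) (by linarith) h (Finset.subset_univ _)
  have hU := (hF U h.lower).ne'
  have hV := (hF _ h.adjacent.lower).ne'
  simp only [mul_eq_zero, (hg U W h).ne', div_eq_zero_iff, hU, hV, h.sin_adjacent_pos.ne', or_self,
    false_or, ne_eq, OfNat.ofNat_ne_zero, not_false_eq_true, pow_eq_zero_iff, sub_eq_zero] at hzero
  exact hzero.symm

end GroundState

lemma volumeVariation_inducedVelocity (S U : Finset ι) (Y : Finset ι → ℝ) :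
    volumeVariation p m U (fun W => inducedVelocity p S U W Y) =
      facetVariation p (faceVolume p (m + 1)) S U Y := by
  rw [volumeVariation_apply, facetVariation_apply]

variable (hp : PositivelySpanning p) (hS : IsFace p S)
  (hr : faceRank p S + (m + 3) = finrank ℝ E)
include hp hS hr

lemma variationForm_self_le_sum_facetVariation_sq (h : ∀ U, IsCover p S U → IsHyperbolic p m U)
    (Y : Finset ι → ℝ) : variationForm p (faceVolume p (m + 1)) S Y Y ≤
      ∑ U ∈ coversIn p Finset.univ S, facetVariation p (faceVolume p (m + 1)) S U Y ^ 2 /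
        (((m : ℝ) + 2) * faceVolume p (m + 2) U / height p S U) := by
  have hbochner := sum_height_mul_variationForm_sub hp hr Y
  have hnonneg := Finset.sum_nonneg fun X => faceVolume_mul_cornerDefect_nonneg hp hS hr Y (X := X)
  have hfacet : ∀ U ∈ coversIn p Finset.univ S, height p S U *
      variationForm p (faceVolume p m) U (fun W => inducedVelocity p S U W Y)
        (fun W => inducedVelocity p S U W Y) ≤ ((m : ℝ) + 1) *
          (facetVariation p (faceVolume p (m + 1)) S U Y ^ 2 /
            (((m : ℝ) + 2) * faceVolume p (m + 2) U / height p S U)) := by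
    intro U hU
    rw [mem_coversIn_univ] at hU
    refine (mul_le_mul_of_nonneg_left ((h U hU).variationForm_self_le hp hU.isFace_right
      (by rw [hU.rank_eq]; omega) _) hU.height_pos.le).trans_eq ?_
    rw [volumeVariation_inducedVelocity, div_div_eq_mul_div]
    ring
  have hsum := Finset.sum_le_sum hfacet
  rw [← Finset.mul_sum] at hsum
  exact le_of_mul_le_mul_left (by linarith) (by positivity : (0 : ℝ) < m + 1)

lemma exists_eq_mul_height_of_variationForm_self_eq {Y : Finset ι → ℝ}
    (heq : variationForm p (faceVolume p (m + 1)) S Y Y = ∑ U ∈ coversIn p Finset.univ S,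
      (Y U / height p S U) ^ 2 *
        (height p S U * facetVariation p (faceVolume p (m + 1)) S U (height p S))) :
    ∃ c : ℝ, ∀ U ∈ coversIn p Finset.univ S, Y U = c * height p S U := by
  obtain ⟨U₀, h₀⟩ := exists_isCover hp hS (by omega)
  refine ⟨Y U₀ / height p S U₀, fun U hU => ?_⟩
  rw [mem_coversIn_univ] at hU
  rw [← div_eq_iff hU.height_pos.ne']
  refine adjacent_induction hp hS (by omega)
    (fun U => Y U / height p S U = Y U₀ / height p S U₀) (fun U W h hU => ?_) h₀ rfl hU
  exact (h.div_adjacent_eq (fun U hU => hU.height_pos)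
    (fun U W h => faceVolume_pos hp h.upper.isFace_right (by rw [h.rank_eq]; omega)) heq).trans hU

/- With the weights `b U = (m + 2) vol U / H U` the operator of `variationForm` satisfies
`T ≤ T ^ 2`, by hyperbolicity of the facets, and `T ≤ 1`, with equality only at `H`. -/
theorem IsHyperbolic.of_facets (h : ∀ U, IsCover p S U → IsHyperbolic p m U) :
    IsHyperbolic p (m + 1) S := by
  intro Y hY
  have hb : ∀ U ∈ coversIn p Finset.univ S,
      0 < ((m : ℝ) + 2) * faceVolume p (m + 2) U / height p S U := fun U hU => by
    rw [mem_coversIn_univ] at hU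
    have := hU.height_pos
    have := faceVolume_pos hp (m := m + 2) hU.isFace_right (by rw [hU.rank_eq]; omega)
    positivity
  have hground : ∀ Z : Finset ι → ℝ, ∑ U ∈ coversIn p Finset.univ S, (Z U / height p S U) ^ 2 *
      (height p S U * facetVariation p (faceVolume p (m + 1)) S U (height p S)) =
        ∑ U ∈ coversIn p Finset.univ S,
          ((m : ℝ) + 2) * faceVolume p (m + 2) U / height p S U * Z U ^ 2 := fun Z => by
    refine Finset.sum_congr rfl fun U hU => ?_
    rw [mem_coversIn_univ] at hU
    have := hU.height_pos
    rw [facetVariation_faceVolume_height hp (by omega) hU]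
    push_cast
    field_simp
    ring
  simp only [variationForm_apply]
  refine sum_mul_apply_nonpos (h := height p S) hb (fun x z => ?_) (fun x => ?_) (fun x => ?_)
    (fun x hx => ?_) ?_
  · rw [← variationForm_apply, ← variationForm_apply, variationForm_comm]
  · rw [← variationForm_apply]
    exact variationForm_self_le_sum_facetVariation_sq hp hS hr h x
  · rw [← variationForm_apply, ← hground]
    exact variationForm_self_le_sum_sq (fun U hU => hU.height_pos)
      (fun U W h => faceVolume_pos hp h.upper.isFace_right (by rw [h.rank_eq]; omega)) x
  · refine exists_eq_mul_height_of_variationForm_self_eq hp hS hr ?_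
    rw [hground, variationForm_apply]
    exact Finset.sum_congr rfl fun U hU => by rw [hx U hU]; ring
  · rw [volumeVariation_apply] at hY
    rw [← mul_zero ((m : ℝ) + 2), ← hY, Finset.mul_sum]
    refine Finset.sum_congr rfl fun U hU => ?_
    have := (mem_coversIn_univ.1 hU).height_pos
    field_simp

end Induction

/-! ### The kernel of the second variation -/

section Kernel

variable {E : Type*} [NormedAddCommGroup E] [InnerProductSpace ℝ E] [FiniteDimensional ℝ E]
variable {ι : Type*} [Fintype ι] {p : ι → E} {S U V W X : Finset ι} {m : ℕ}
variable {Y : Finset ι → ℝ} {v w : E}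

/-- The vector `w` describes the translation of the dual face of `S` that moves the facet `U` with
its velocity `Y U` and the ridges of `U` with the velocities induced by `Y`. -/
structure IsFacetTranslation (p : ι → E) (S U : Finset ι) (Y : Finset ι → ℝ) (w : E) : Prop where
  mem_orthogonal : w ∈ (faceSpan p S)ᗮ
  inner_facet : ⟪unitNormal p S U, w⟫ = Y U
  inner_ridge : ∀ W, IsCover p U W → ⟪unitNormal p U W, w⟫ = inducedVelocity p S U W Y

lemma HasTranslationKernel.exists_isFacetTranslation (h : HasTranslationKernel p m U)
    (hU : IsCover p S U) (hY : ∀ W, IsCover p U W →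
      facetVariation p (faceVolume p m) U W (fun W => inducedVelocity p S U W Y) = 0) :
    ∃ w, IsFacetTranslation p S U Y w := by
  obtain ⟨w, hw, hwY⟩ := h _ hY
  refine ⟨w + Y U • unitNormal p S U, add_mem (faceSpan_orthogonal_anti hU.subset hw)
    (Submodule.smul_mem _ _ hU.unitNormal_mem_orthogonal), ?_, fun W hW => ?_⟩
  · rw [inner_add_right, inner_smul_right, hU.inner_unitNormal_self, unitNormal_inner_eq_zero hw,
      mul_one, zero_add]
  · rw [inner_add_right, inner_smul_right, IsFlag.inner_normals' ⟨hU, hW⟩, mul_zero, add_zero,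
      hwY W hW]

namespace IsFacetTranslation

lemma inner_unitNormal_eq (hw : IsFacetTranslation p S U Y w) (h : IsFlag p S U W)
    (hX : IsCover p W X) (hv : ∀ V, IsCover p S V → V ⊆ X → Y V = ⟪unitNormal p S V, v⟫) :
    ⟪unitNormal p W X, w⟫ = ⟪unitNormal p W X, v⟫ := by
  have hUX : IsFlag p U W X := ⟨h.upper, hX⟩
  have hvU : ∀ W', IsFlag p U W' X → inducedVelocity p S U W' Y = ⟪unitNormal p U W', v⟫ :=
    fun W' h' => by
      have hflag : IsFlag p S U W' := ⟨h.lower, h'.lower⟩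
      have hadj := hflag.adjacent
      exact hflag.inducedVelocity_eq_inner
        (hv U h.lower (hflag.upper.subset.trans h'.upper.subset))
        (hv _ hadj.lower (hadj.upper.subset.trans h'.upper.subset))
  rw [← hUX.inducedVelocity_eq_inner (Y := fun W => inducedVelocity p S U W Y)
      (hw.inner_ridge W hUX.lower).symm (hw.inner_ridge _ hUX.adjacent.lower).symm,
    hUX.inducedVelocity_eq_inner (hvU W hUX) (hvU _ hUX.adjacent)]

lemma sub_mem_orthogonal_of_adjacent (hv : IsFacetTranslation p S U Y v) (h : IsFlag p S U W)
    (hw : IsFacetTranslation p S (adjacent p S U W) Y w) : w - v ∈ (faceSpan p W)ᗮ := by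
  have hadj := h.inner_unitNormal_adjacent_eq hv.inner_facet (hv.inner_ridge W h.upper)
  have hU := h.adjacent.inner_unitNormal_adjacent_eq hw.inner_facet
    (hw.inner_ridge W h.adjacent.upper)
  rw [h.adjacent_adjacent] at hU
  have hUzero : ⟪unitNormal p S U, w - v⟫ = 0 := by
    rw [inner_sub_right, hU, hv.inner_facet, sub_self]
  have hsum := h.inner_unitNormal_adjacent (w - v)
  rw [hUzero, mul_zero, zero_add, inner_sub_right, hw.inner_facet, hadj, sub_self, eq_comm,
    mul_eq_zero, or_iff_right h.sin_adjacent_pos.ne'] at hsum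
  exact h.upper.mem_orthogonal_of_inner_eq_zero (h.lower.mem_orthogonal_of_inner_eq_zero
    (sub_mem hw.mem_orthogonal hv.mem_orthogonal) hUzero) hsum

/- The corners of codimension three are rigid, so the translations of adjacent facets agree. -/
lemma eq_of_adjacent (hp : PositivelySpanning p) (hS : IsFace p S)
    (hD : ∀ X ∈ codimThreeFaces p S, cornerDefect p X S Y = 0)
    (hv : IsFacetTranslation p S U Y v) (h : IsFlag p S U W)
    (hw : IsFacetTranslation p S (adjacent p S U W) Y w) : w = v := by
  refine sub_eq_zero.1 (eq_zero_of_forall_inner_le_zero hp h.upper.isFace_right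
    (hv.sub_mem_orthogonal_of_adjacent h hw) fun X hX => ?_)
  have hSX : S ⊆ X := h.subset.trans hX.subset
  have hrX : faceRank p X = faceRank p S + 3 := by rw [hX.rank_eq, h.rank_eq]
  obtain ⟨x, -, hx⟩ := exists_eq_inner_of_cornerDefect_eq_zero hX.isFace_right hrX hS hSX
    (hD X (mem_codimThreeFaces.2 ⟨hX.isFace_right, hSX, hrX⟩))
  rw [inner_sub_right, hv.inner_unitNormal_eq h hX hx, hw.inner_unitNormal_eq h.adjacent hX hx,
    sub_self]

end IsFacetTranslation

section Step

variable (hp : PositivelySpanning p) (hS : IsFace p S)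
  (hr : faceRank p S + (m + 3) = finrank ℝ E)
  (hhyp : ∀ U, IsCover p S U → IsHyperbolic p m U)
  (hY : ∀ U, IsCover p S U → facetVariation p (faceVolume p (m + 1)) S U Y = 0)
include hp hS hr hhyp hY

/- In the Bochner formula all terms have the same sign, so they vanish. -/
lemma variationForm_eq_zero_and_cornerDefect_eq_zero :
    (∀ U, IsCover p S U → variationForm p (faceVolume p m) U
      (fun W => inducedVelocity p S U W Y) (fun W => inducedVelocity p S U W Y) = 0) ∧
    ∀ X ∈ codimThreeFaces p S, cornerDefect p X S Y = 0 := by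
  have hbochner := sum_height_mul_variationForm_sub hp hr Y
  have hform : variationForm p (faceVolume p (m + 1)) S Y Y = 0 := by
    rw [variationForm_apply]
    exact Finset.sum_eq_zero fun U hU => by rw [hY U (mem_coversIn_univ.1 hU), mul_zero]
  have hfacet : ∀ U ∈ coversIn p Finset.univ S, height p S U *
      variationForm p (faceVolume p m) U (fun W => inducedVelocity p S U W Y)
        (fun W => inducedVelocity p S U W Y) ≤ 0 := fun U hU => by
    rw [mem_coversIn_univ] at hU
    exact mul_nonpos_of_nonneg_of_nonpos hU.height_pos.le
      (hhyp U hU _ ((volumeVariation_inducedVelocity S U Y).trans (hY U hU)))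
  have hcorner := fun X => faceVolume_mul_cornerDefect_nonneg hp hS hr Y (X := X)
  rw [hform, mul_zero, sub_zero] at hbochner
  refine ⟨fun U hU => ?_, fun X hX => ?_⟩
  · have hzero := (Finset.sum_eq_zero_iff_of_nonpos hfacet).1
      ((Finset.sum_nonpos hfacet).antisymm (hbochner ▸ Finset.sum_nonneg hcorner)) U
      (mem_coversIn_univ.2 hU)
    exact (mul_eq_zero.1 hzero).resolve_left hU.height_pos.ne'
  · have hzero := (Finset.sum_eq_zero_iff_of_nonneg hcorner).1
      ((hbochner ▸ Finset.sum_nonpos hfacet).antisymm (Finset.sum_nonneg hcorner)) X hX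
    obtain ⟨hX, -, hrX⟩ := mem_codimThreeFaces.1 hX
    exact (mul_eq_zero.1 hzero).resolve_left (faceVolume_pos hp hX (by omega)).ne'

lemma facetVariation_inducedVelocity_eq_zero (h : IsFlag p S U W) :
    facetVariation p (faceVolume p m) U W (fun W => inducedVelocity p S U W Y) = 0 := by
  classical
  rw [facetVariation_eq_variationForm_single h.upper, variationForm_comm]
  exact (hhyp U h.lower).variationForm_eq_zero hp h.lower.isFace_right
    (by rw [h.lower.rank_eq]; omega)
    ((volumeVariation_inducedVelocity S U Y).trans (hY U h.lower))
    ((variationForm_eq_zero_and_cornerDefect_eq_zero hp hS hr hhyp hY).1 U h.lower) _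

end Step

theorem HasTranslationKernel.of_facets (hp : PositivelySpanning p) (hS : IsFace p S)
    (hr : faceRank p S + (m + 3) = finrank ℝ E)
    (hhyp : ∀ U, IsCover p S U → IsHyperbolic p m U)
    (hker : ∀ U, IsCover p S U → HasTranslationKernel p m U) :
    HasTranslationKernel p (m + 1) S := by
  intro Y hY
  have hD := (variationForm_eq_zero_and_cornerDefect_eq_zero hp hS hr hhyp hY).2
  have hexists : ∀ U, IsCover p S U → ∃ w, IsFacetTranslation p S U Y w := fun U hU =>
    (hker U hU).exists_isFacetTranslation hU fun W hW =>
      facetVariation_inducedVelocity_eq_zero hp hS hr hhyp hY ⟨hU, hW⟩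
  obtain ⟨U₀, h₀⟩ := exists_isCover hp hS (by omega)
  obtain ⟨w, hw⟩ := hexists U₀ h₀
  refine ⟨w, hw.mem_orthogonal, fun U hU => IsFacetTranslation.inner_facet ?_ |>.symm⟩
  refine adjacent_induction hp hS (by omega) (fun U => IsFacetTranslation p S U Y w)
    (fun U W h hU => ?_) h₀ hw hU
  obtain ⟨v, hv⟩ := hexists _ h.adjacent.lower
  exact hU.eq_of_adjacent hp hS hD h hv ▸ hv

theorem isHyperbolic_and_hasTranslationKernel (hp : PositivelySpanning p) (hS : IsFace p S)
    (hr : faceRank p S + (m + 2) = finrank ℝ E) :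
    IsHyperbolic p m S ∧ HasTranslationKernel p m S := by
  induction m generalizing S with
  | zero => exact ⟨isHyperbolic_zero hp hS hr, hasTranslationKernel_zero hp hS hr⟩
  | succ m ih =>
    have hfacets : ∀ U, IsCover p S U → IsHyperbolic p m U ∧ HasTranslationKernel p m U :=
      fun U hU => ih hU.isFace_right (by rw [hU.rank_eq]; omega)
    exact ⟨.of_facets hp hS (by omega) fun U hU => (hfacets U hU).1,
      .of_facets hp hS (by omega) (fun U hU => (hfacets U hU).1) fun U hU => (hfacets U hU).2⟩

end Kernel

/-! ### The stress matrix of a polytope -/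

section Vertices

variable {E : Type*} [NormedAddCommGroup E] [InnerProductSpace ℝ E]
variable {ι : Type*} [Fintype ι] {p : ι → E} {U W : Finset ι} {i j : ι}

omit [Fintype ι] in
lemma faceRank_empty : faceRank p ∅ = 0 := by
  rw [faceRank, faceSpan, Finset.coe_empty, Set.image_empty, Submodule.span_empty, finrank_bot]

omit [Fintype ι] in
lemma mem_faceSpan_empty_orthogonal (w : E) : w ∈ (faceSpan p ∅)ᗮ := by
  simp [faceSpan]

lemma IsFace.ne_zero (h : IsFace p {i}) : p i ≠ 0 := fun h0 => by
  simpa [h0] using inner_facePoint_eq h (Finset.mem_singleton_self i)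

lemma faceRank_singleton (h : IsFace p {i}) : faceRank p {i} = 1 := by
  rw [faceRank, faceSpan, Finset.coe_singleton, Set.image_singleton]
  exact finrank_span_singleton h.ne_zero

lemma isCover_empty_singleton (h : IsFace p {i}) : IsCover p ∅ {i} :=
  ⟨isFace_empty, h, Finset.empty_subset _, by rw [faceRank_singleton h, faceRank_empty]⟩

variable [FiniteDimensional ℝ E]

lemma unitNormal_empty_singleton (h : IsFace p {i}) :
    unitNormal p ∅ {i} = ‖p i‖⁻¹ • p i := by
  have hcov := isCover_empty_singleton h
  have hpos := hcov.inner_unitNormal_pos (Finset.mem_singleton_self i) (Finset.notMem_empty i)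
  have hsmul : p i = ⟪p i, unitNormal p ∅ {i}⟫ • unitNormal p ∅ {i} := ext_inner_right ℝ fun w => by
    rw [real_inner_smul_left,
      ← hcov.inner_eq_mul (mem_faceSpan_empty_orthogonal w) (Finset.mem_singleton_self i)]
  have hnorm := congrArg norm hsmul
  rw [norm_smul, hcov.norm_unitNormal, mul_one, Real.norm_of_nonneg hpos.le] at hnorm
  rw [hnorm, eq_inv_smul_iff₀ hpos.ne', ← hsmul]

lemma inner_unitNormal_empty_singleton (h : IsFace p {i}) (w : E) :
    ⟪unitNormal p ∅ {i}, w⟫ = ‖p i‖⁻¹ * ⟪p i, w⟫ := by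
  rw [unitNormal_empty_singleton h, real_inner_smul_left]

variable (hf : ∀ i, IsFace p {i})
include hf

lemma exists_eq_singleton (hU : IsCover p ∅ U) : ∃ i, U = {i} := by
  obtain ⟨i, hi, -⟩ := Finset.exists_of_ssubset hU.ssubset
  refine ⟨i, (eq_of_faceRank_le (hf i) hU.isFace_right (Finset.singleton_subset_iff.2 hi) ?_).symm⟩
  rw [hU.rank_eq, faceRank_empty, faceRank_singleton (hf i)]

lemma sum_coversIn_empty (f : Finset ι → ℝ) :
    ∑ U ∈ coversIn p Finset.univ ∅, f U = ∑ i, f {i} := by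
  classical
  have himage : coversIn p Finset.univ ∅ = Finset.univ.image fun i : ι => ({i} : Finset ι) := by
    ext U
    rw [mem_coversIn_univ, Finset.mem_image]
    constructor
    · intro h
      obtain ⟨i, rfl⟩ := exists_eq_singleton hf h
      exact ⟨i, Finset.mem_univ _, rfl⟩
    · rintro ⟨i, -, rfl⟩
      exact isCover_empty_singleton (hf i)
  rw [himage, Finset.sum_image fun _ _ _ _ h => Finset.singleton_injective h]

omit hf [FiniteDimensional ℝ E] in
lemma isFlag_empty_singleton (hi : IsFace p {i}) (hW : IsCover p {i} W) : IsFlag p ∅ {i} W :=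
  ⟨isCover_empty_singleton hi, hW⟩

lemma exists_adjacent_eq_singleton (hW : IsCover p {i} W) : ∃ j, adjacent p ∅ {i} W = {j} :=
  exists_eq_singleton hf (isFlag_empty_singleton (hf i) hW).adjacent.lower

end Vertices

section StressMatrix

variable {E : Type*} [NormedAddCommGroup E] [InnerProductSpace ℝ E]
variable {ι : Type*} {p : ι → E} {i j : ι}

/-- The velocities of the facets of the polar body when its constraints `⟪p i, z⟫ ≤ 1` are relaxed
to `⟪p i, z⟫ ≤ 1 + t * y i`. Only the values on singletons matter, because these are the faces that
index facets of the polar body. -/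
noncomputable def normalVelocity (p : ι → E) : (ι → ℝ) →ₗ[ℝ] (Finset ι → ℝ) where
  toFun y U := ∑ i ∈ U, ‖p i‖⁻¹ * y i
  map_add' y z := funext fun U => by simp [mul_add, Finset.sum_add_distrib]
  map_smul' c y := funext fun U => by
    simp only [Pi.smul_apply, smul_eq_mul, RingHom.id_apply, Finset.mul_sum, mul_left_comm]

omit [InnerProductSpace ℝ E] in
lemma normalVelocity_singleton (y : ι → ℝ) (i : ι) :
    normalVelocity p y {i} = ‖p i‖⁻¹ * y i :=
  Finset.sum_singleton _ _

variable [Fintype ι] [FiniteDimensional ℝ E] {W : Finset ι} {g : Finset ι → ℝ}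

open Classical in
/-- The matrix of `variationForm p g ∅` in the support numbers of the polar body. For `g` the volume
of ridges it is the Hessian of the volume of the polar body. -/
noncomputable def stressMatrix (p : ι → E) (g : Finset ι → ℝ) : Matrix ι ι ℝ :=
  LinearMap.toMatrix' <| LinearMap.pi fun i =>
    ‖p i‖⁻¹ • facetVariation p g ∅ {i} ∘ₗ normalVelocity p

lemma stressMatrix_mulVec (g : Finset ι → ℝ) (y : ι → ℝ) (i : ι) :
    (stressMatrix p g *ᵥ y) i = ‖p i‖⁻¹ * facetVariation p g ∅ {i} (normalVelocity p y) := by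
  classical
  rw [stressMatrix, LinearMap.toMatrix'_mulVec]
  rfl

lemma stressMatrix_apply [DecidableEq ι] (g : Finset ι → ℝ) (i j : ι) : stressMatrix p g i j =
    ‖p i‖⁻¹ * facetVariation p g ∅ {i} (normalVelocity p (Pi.single j 1)) := by
  rw [← stressMatrix_mulVec, Matrix.mulVec_single_one, Matrix.col_apply]

/-- The faces of rank two that cover both `{i}` and `{j}`; they index the ridges that the facets `i`
and `j` of the polar body have in common. -/
noncomputable def sharedRidges (p : ι → E) (i j : ι) : Finset (Finset ι) := by
  classical exact {W ∈ coversIn p Finset.univ {i} | adjacent p ∅ {i} W = {j}}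

lemma mem_sharedRidges :
    W ∈ sharedRidges p i j ↔ IsCover p {i} W ∧ adjacent p ∅ {i} W = {j} := by
  simp [sharedRidges]

variable (hf : ∀ i, IsFace p {i})
include hf

lemma dotProduct_stressMatrix_mulVec (g : Finset ι → ℝ) (y z : ι → ℝ) :
    y ⬝ᵥ stressMatrix p g *ᵥ z = variationForm p g ∅ (normalVelocity p y) (normalVelocity p z) := by
  rw [variationForm_apply, sum_coversIn_empty hf]
  refine Finset.sum_congr rfl fun i _ => ?_
  rw [stressMatrix_mulVec, normalVelocity_singleton]
  ring

lemma stressMatrix_isSymm (g : Finset ι → ℝ) : (stressMatrix p g).IsSymm := by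
  classical
  refine Matrix.IsSymm.ext fun i j => ?_
  have happly : ∀ i j, stressMatrix p g i j = variationForm p g ∅
      (normalVelocity p (Pi.single i 1)) (normalVelocity p (Pi.single j 1)) := fun i j => by
    rw [← dotProduct_stressMatrix_mulVec hf, single_one_dotProduct, Matrix.mulVec_single_one,
      Matrix.col_apply]
  rw [happly, happly, variationForm_comm]

lemma stressMatrix_apply_of_ne (g : Finset ι → ℝ) (hij : i ≠ j) :
    stressMatrix p g i j = ∑ W ∈ sharedRidges p i j,
      g W / (‖p i‖ * ‖p j‖ * dihedralSin p ∅ {i} {j} W) := by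
  classical
  rw [stressMatrix_apply, facetVariation_apply, Finset.mul_sum, sharedRidges, Finset.sum_filter]
  refine Finset.sum_congr rfl fun W hW => ?_
  obtain ⟨k, hk⟩ := exists_adjacent_eq_singleton hf (mem_coversIn_univ.1 hW)
  rw [inducedVelocity_apply, hk, normalVelocity_singleton, normalVelocity_singleton,
    Pi.single_eq_of_ne hij]
  split_ifs with hkj
  · rw [Finset.singleton_injective hkj, Pi.single_eq_same]
    field_simp
    ring
  · rw [Pi.single_eq_of_ne fun h => hkj (congrArg singleton h)]
    ring

omit hf in
lemma div_mul_dihedralSin_pos (hi : IsFace p {i}) (hj : IsFace p {j}) (hW : W ∈ sharedRidges p i j)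
    (hg : 0 < g W) : 0 < g W / (‖p i‖ * ‖p j‖ * dihedralSin p ∅ {i} {j} W) := by
  obtain ⟨hcov, hadj⟩ := mem_sharedRidges.1 hW
  have hsin := (isFlag_empty_singleton hi hcov).sin_adjacent_pos
  rw [hadj] at hsin
  have := norm_pos_iff.2 hi.ne_zero
  have := norm_pos_iff.2 hj.ne_zero
  positivity

lemma stressMatrix_mulVec_inner (g : Finset ι → ℝ) (w : E) (i : ι) :
    (stressMatrix p g *ᵥ fun j => ⟪p j, w⟫) i =
      ‖p i‖⁻¹ * ∑ W ∈ coversIn p Finset.univ {i}, g W * ⟪unitNormal p {i} W, w⟫ := by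
  have hcov := isCover_empty_singleton (hf i)
  rw [stressMatrix_mulVec, ← facetVariation_inner hcov]
  congr 1
  refine facetVariation_congr (fun U hU => ?_) hcov
  obtain ⟨j, rfl⟩ := exists_eq_singleton hf hU
  rw [normalVelocity_singleton, inner_unitNormal_empty_singleton (hf j)]

variable {m : ℕ} (hp : PositivelySpanning p) (hm : finrank ℝ E = m + 2)
include hp hm

omit hf hp [FiniteDimensional ℝ E] in
lemma faceRank_singleton_add (hi : IsFace p {i}) : faceRank p {i} + (m + 1) = finrank ℝ E := by
  rw [faceRank_singleton hi, hm]
  omega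

lemma faceVolume_pos_of_mem_sharedRidges (hW : W ∈ sharedRidges p i j) : 0 < faceVolume p m W := by
  obtain ⟨hcov, -⟩ := mem_sharedRidges.1 hW
  refine faceVolume_pos hp hcov.isFace_right ?_
  have := faceRank_singleton_add hm (hf i)
  rw [hcov.rank_eq]
  omega

lemma stressMatrix_faceVolume_nonneg (hij : i ≠ j) :
    0 ≤ stressMatrix p (faceVolume p m) i j := by
  rw [stressMatrix_apply_of_ne hf _ hij]
  exact Finset.sum_nonneg fun W hW => (div_mul_dihedralSin_pos (hf i) (hf j) hW
    (faceVolume_pos_of_mem_sharedRidges hf hp hm hW)).le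

lemma stressMatrix_faceVolume_ne_zero_iff (hij : i ≠ j) :
    stressMatrix p (faceVolume p m) i j ≠ 0 ↔ (sharedRidges p i j).Nonempty := by
  have hpos : ∀ W ∈ sharedRidges p i j, _ := fun W hW => div_mul_dihedralSin_pos (hf i) (hf j) hW
    (faceVolume_pos_of_mem_sharedRidges hf hp hm hW)
  rw [stressMatrix_apply_of_ne hf _ hij]
  refine ⟨fun h => ?_, fun h => (Finset.sum_pos hpos h).ne'⟩
  obtain ⟨W, hW, -⟩ := Finset.exists_ne_zero_of_sum_ne_zero h
  exact ⟨W, hW⟩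

lemma sum_stressMatrix_faceVolume (i : ι) : ∑ j, stressMatrix p (faceVolume p m) i j =
    ‖p i‖⁻¹ * (((m : ℝ) + 1) * faceVolume p (m + 1) {i}) := by
  have hcov := isCover_empty_singleton (hf i)
  have hr : faceRank p ∅ + (m + 2) = finrank ℝ E := by rw [faceRank_empty, hm, zero_add]
  have hone : ∀ U, IsCover p ∅ U → normalVelocity p 1 U =
      (height p ∅ + fun V => ⟪unitNormal p ∅ V, facePoint p ∅⟫) U := fun U hU => by
    obtain ⟨j, rfl⟩ := exists_eq_singleton hf hU
    rw [normalVelocity_singleton, Pi.add_apply, height, inner_sub_right, sub_add_cancel,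
      inner_unitNormal_empty_singleton (hf j),
      inner_facePoint_eq (hf j) (Finset.mem_singleton_self j), Pi.one_apply]
  have hrow : ∑ j, stressMatrix p (faceVolume p m) i j =
      (stressMatrix p (faceVolume p m) *ᵥ 1) i := by
    simp only [Matrix.mulVec, dotProduct, Pi.one_apply, mul_one]
  rw [hrow, stressMatrix_mulVec, facetVariation_congr hone hcov,
    map_add, facetVariation_faceVolume_height hp hr hcov,
    facetVariation_faceVolume_inner hp hr hcov, add_zero]

lemma stressMatrix_faceVolume_mulVec_inner (w : E) :
    (stressMatrix p (faceVolume p m) *ᵥ fun j => ⟪p j, w⟫) = 0 := by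
  ext i
  rw [stressMatrix_mulVec_inner hf, minkowski_relation hp (hf i) (faceRank_singleton_add hm (hf i)),
    mul_zero, Pi.zero_apply]

lemma stressMatrix_faceVolume_nonpos {y : ι → ℝ}
    (hy : ∑ i, (∑ j, stressMatrix p (faceVolume p m) i j) * y i = 0) :
    y ⬝ᵥ stressMatrix p (faceVolume p m) *ᵥ y ≤ 0 := by
  rw [dotProduct_stressMatrix_mulVec hf]
  refine (isHyperbolic_and_hasTranslationKernel hp isFace_empty
    (by rw [faceRank_empty, hm, zero_add])).1 _ ?_
  have hterm : ∀ i ∈ Finset.univ, (∑ j, stressMatrix p (faceVolume p m) i j) * y i =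
      ((m : ℝ) + 1) * (faceVolume p (m + 1) {i} * normalVelocity p y {i}) := fun i _ => by
    rw [sum_stressMatrix_faceVolume hf hp hm, normalVelocity_singleton]
    ring
  rw [Finset.sum_congr rfl hterm, ← Finset.mul_sum] at hy
  rw [volumeVariation_apply, sum_coversIn_empty hf]
  exact (mul_eq_zero.1 hy).resolve_left (by positivity)

lemma exists_eq_inner_of_stressMatrix_faceVolume_mulVec_eq_zero {y : ι → ℝ}
    (hy : stressMatrix p (faceVolume p m) *ᵥ y = 0) : ∃ w, ∀ i, y i = ⟪p i, w⟫ := by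
  have hnorm : ∀ i, ‖p i‖⁻¹ ≠ 0 := fun i => inv_ne_zero (norm_ne_zero_iff.2 (hf i).ne_zero)
  obtain ⟨w, -, hw⟩ := (isHyperbolic_and_hasTranslationKernel hp isFace_empty
    (by rw [faceRank_empty, hm, zero_add])).2 (normalVelocity p y) fun U hU => by
      obtain ⟨i, rfl⟩ := exists_eq_singleton hf hU
      have := congrFun hy i
      rw [stressMatrix_mulVec] at this
      exact (mul_eq_zero.1 this).resolve_left (hnorm i)
  refine ⟨w, fun i => mul_left_cancel₀ (hnorm i) ?_⟩
  rw [← normalVelocity_singleton, hw _ (isCover_empty_singleton (hf i)),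
    inner_unitNormal_empty_singleton (hf i)]

omit hm in
lemma eq_zero_of_inner_eq_zero_of_sharedRidges {w : E} (hi : ⟪p i, w⟫ = 0)
    (hj : ∀ j, j ≠ i → (sharedRidges p i j).Nonempty → ⟪p j, w⟫ = 0) : w = 0 := by
  refine eq_zero_of_forall_inner_le_zero hp (hf i) (w := w)
    (mem_faceSpan_orthogonal.2 fun k hk => by rwa [Finset.mem_singleton.1 hk]) fun W hW => ?_
  obtain ⟨j, hadj⟩ := exists_adjacent_eq_singleton hf hW
  have hflag := isFlag_empty_singleton (hf i) hW
  have hji : j ≠ i := by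
    rintro rfl
    exact hflag.ne_adjacent hadj.symm
  have hsplit := hflag.inner_unitNormal_adjacent w
  rw [hadj, inner_unitNormal_empty_singleton (hf i), inner_unitNormal_empty_singleton (hf j), hi,
    hj j hji ⟨W, mem_sharedRidges.2 ⟨hW, hadj⟩⟩] at hsplit
  have hsin := hflag.sin_adjacent_pos
  rw [hadj] at hsin
  nlinarith

omit hp hm in
lemma exists_supporting_of_sharedRidges_nonempty (h : (sharedRidges p i j).Nonempty) :
    ∃ z, ⟪p i, z⟫ = 1 ∧ ⟪p j, z⟫ = 1 ∧ ∀ k, k ≠ i → k ≠ j → ⟪p k, z⟫ < 1 := by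
  obtain ⟨W, hW⟩ := h
  obtain ⟨hcov, hadj⟩ := mem_sharedRidges.1 hW
  have hflag := isFlag_empty_singleton (hf i) hcov
  have hjW : j ∈ W := (hadj ▸ hflag.adjacent).upper.subset (Finset.mem_singleton_self j)
  refine ⟨facePoint p W, inner_facePoint_eq hcov.isFace_right
    (hcov.subset (Finset.mem_singleton_self i)), inner_facePoint_eq hcov.isFace_right hjW,
    fun k hki hkj => inner_facePoint_lt hcov.isFace_right fun hkW => hkj ?_⟩
  have hk := hflag.eq_adjacent (.of_subset (isCover_empty_singleton (hf k)) hcov.isFace_right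
    hflag.rank_eq (Finset.singleton_subset_iff.2 hkW)) fun h => hki (Finset.singleton_injective h)
  exact Finset.singleton_injective (hk.trans hadj)

end StressMatrix

section MomentMatrix

variable {E : Type*} [NormedAddCommGroup E] [InnerProductSpace ℝ E] [FiniteDimensional ℝ E]
variable {ι : Type*} [Fintype ι] {p : ι → E} {i j : ι} {m : ℕ}

open Classical in
/-- The first-order change of the stress matrix of `p` when the origin moves in direction `x`. -/
noncomputable def momentMatrix (p : ι → E) (m : ℕ) : E →ₗ[ℝ] Matrix ι ι ℝ where
  toFun x := ((m : ℝ) + 1) • (stressMatrix p (fun W => ⟪x, faceMoment p m W⟫) +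
    Matrix.diagonal fun i => faceVolume p (m + 1) {i} * ⟪x, p i⟫ / ‖p i‖ ^ 3)
  map_add' x y := by
    ext i j
    simp only [Matrix.smul_apply, Matrix.add_apply, stressMatrix_apply, Matrix.diagonal_apply,
      facetVariation_apply, inner_add_left, add_mul, Finset.sum_add_distrib, smul_eq_mul]
    split_ifs <;> ring
  map_smul' c x := by
    ext i j
    simp only [Matrix.smul_apply, Matrix.add_apply, stressMatrix_apply, Matrix.diagonal_apply,
      facetVariation_apply, real_inner_smul_left, mul_assoc, ← Finset.mul_sum, smul_eq_mul,
      RingHom.id_apply]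
    split_ifs <;> ring

open Classical in
lemma momentMatrix_apply (m : ℕ) (x : E) : momentMatrix p m x =
    ((m : ℝ) + 1) • (stressMatrix p (fun W => ⟪x, faceMoment p m W⟫) +
      Matrix.diagonal fun i => faceVolume p (m + 1) {i} * ⟪x, p i⟫ / ‖p i‖ ^ 3) :=
  rfl

variable (hf : ∀ i, IsFace p {i})
include hf

lemma momentMatrix_isSymm (m : ℕ) (x : E) : (momentMatrix p m x).IsSymm := by
  classical
  exact ((stressMatrix_isSymm hf _).add (Matrix.isSymm_diagonal _)).smul _

lemma momentMatrix_eq_zero_of_sharedRidges (m : ℕ) (x : E) (hij : i ≠ j)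
    (h : ¬(sharedRidges p i j).Nonempty) : momentMatrix p m x i j = 0 := by
  classical
  rw [momentMatrix_apply, Matrix.smul_apply, Matrix.add_apply, stressMatrix_apply_of_ne hf _ hij,
    Finset.not_nonempty_iff_eq_empty.1 h, Finset.sum_empty, Matrix.diagonal_apply_ne _ hij,
    add_zero, smul_zero]

lemma momentMatrix_mulVec_inner (hp : PositivelySpanning p) (hm : finrank ℝ E = m + 2) (x w : E)
    (i : ι) : (momentMatrix p m x *ᵥ fun j => ⟪p j, w⟫) i =
      (∑ j, stressMatrix p (faceVolume p m) i j) * ⟪x, w⟫ := by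
  classical
  have hcov := isCover_empty_singleton (hf i)
  have hmoment := sum_inner_faceMoment_mul_inner_unitNormal hp x (hf i)
    (faceRank_singleton_add hm (hf i))
    (hcov.sub_smul_mem_orthogonal (mem_faceSpan_empty_orthogonal w))
  have hterm : ∀ W ∈ coversIn p Finset.univ {i}, ⟪x, faceMoment p m W⟫ * ⟪unitNormal p {i} W,
      w - ⟪unitNormal p ∅ {i}, w⟫ • unitNormal p ∅ {i}⟫ =
      ⟪x, faceMoment p m W⟫ * ⟪unitNormal p {i} W, w⟫ := fun W hW => by
    rw [inner_sub_right, inner_smul_right,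
      (isFlag_empty_singleton (hf i) (mem_coversIn_univ.1 hW)).inner_normals', mul_zero, sub_zero]
  rw [Finset.sum_congr rfl hterm, inner_sub_right, inner_smul_right,
    inner_unitNormal_empty_singleton (hf i), unitNormal_empty_singleton (hf i),
    inner_smul_right] at hmoment
  rw [sum_stressMatrix_faceVolume hf hp hm, momentMatrix_apply, Matrix.smul_mulVec,
    Matrix.add_mulVec, Pi.smul_apply, Pi.add_apply, stressMatrix_mulVec_inner hf, hmoment,
    Matrix.mulVec_diagonal, smul_eq_mul]
  have := norm_ne_zero_iff.2 (hf i).ne_zero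
  field_simp
  ring

end MomentMatrix

section StressSystem

variable {E : Type*} [NormedAddCommGroup E] [InnerProductSpace ℝ E]
variable {ι : Type*} [Fintype ι] {p : ι → E}

/-- The properties of the stress matrix `M` of a polytope with vertices `p`, and of its first-order
change `N` under motions of the origin, from which the rigidity of `p` follows. -/
structure IsStressSystem (p : ι → E) (M : Matrix ι ι ℝ) (N : E →ₗ[ℝ] Matrix ι ι ℝ) : Prop where
  isSymm : M.IsSymm
  nonneg : ∀ ⦃i j⦄, i ≠ j → 0 ≤ M i j
  sum_pos : ∀ i, 0 < ∑ j, M i j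
  mulVec_inner : ∀ w, (M *ᵥ fun j => ⟪p j, w⟫) = 0
  nonpos : ∀ y : ι → ℝ, ∑ i, (∑ j, M i j) * y i = 0 → y ⬝ᵥ M *ᵥ y ≤ 0
  kernel : ∀ y : ι → ℝ, M *ᵥ y = 0 → ∃ w, ∀ i, y i = ⟪p i, w⟫
  eq_zero : ∀ i w, ⟪p i, w⟫ = 0 → (∀ j, j ≠ i → M i j ≠ 0 → ⟪p j, w⟫ = 0) → w = 0
  variation_isSymm : ∀ x, (N x).IsSymm
  variation_eq_zero : ∀ x ⦃i j⦄, i ≠ j → M i j = 0 → N x i j = 0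
  variation_mulVec_inner : ∀ x w i, (N x *ᵥ fun j => ⟪p j, w⟫) i = (∑ j, M i j) * ⟪x, w⟫

theorem isStressSystem [FiniteDimensional ℝ E] (hp : PositivelySpanning p)
    (hf : ∀ i, IsFace p {i}) {m : ℕ} (hm : finrank ℝ E = m + 2) :
    IsStressSystem p (stressMatrix p (faceVolume p m)) (momentMatrix p m) where
  isSymm := stressMatrix_isSymm hf _
  nonneg _ _ := stressMatrix_faceVolume_nonneg hf hp hm
  sum_pos i := by
    have := faceVolume_pos hp (hf i) (faceRank_singleton_add hm (hf i))
    have := norm_pos_iff.2 (hf i).ne_zero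
    rw [sum_stressMatrix_faceVolume hf hp hm]
    positivity
  mulVec_inner := stressMatrix_faceVolume_mulVec_inner hf hp hm
  nonpos _ := stressMatrix_faceVolume_nonpos hf hp hm
  kernel _ := exists_eq_inner_of_stressMatrix_faceVolume_mulVec_eq_zero hf hp hm
  eq_zero i w hi hj := eq_zero_of_inner_eq_zero_of_sharedRidges hf hp hi fun j hji h =>
    hj j hji ((stressMatrix_faceVolume_ne_zero_iff hf hp hm hji.symm).2 h)
  variation_isSymm := momentMatrix_isSymm hf m
  variation_eq_zero x i j hij h := momentMatrix_eq_zero_of_sharedRidges hf m x hij fun hne =>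
    (stressMatrix_faceVolume_ne_zero_iff hf hp hm hij).2 hne h
  variation_mulVec_inner := momentMatrix_mulVec_inner hf hp hm

end StressSystem

/-! ### Stress energy -/

section StressEnergy

variable {E : Type*} [NormedAddCommGroup E] [InnerProductSpace ℝ E]
variable {ι : Type*} [Fintype ι] {K L : Matrix ι ι ℝ} {p q s t : ι → E}

/-- The energy of the configuration `s` under the stress `K`, written with inner products instead of
squared lengths so that the row sums of `K` act as stresses on the segments from the origin. -/
def stressEnergy (K : Matrix ι ι ℝ) (s : ι → E) : ℝ :=
  ∑ i, ∑ j, K i j * ⟪s i, s j⟫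

lemma stressEnergy_add_left (K L : Matrix ι ι ℝ) (s : ι → E) :
    stressEnergy (K + L) s = stressEnergy K s + stressEnergy L s := by
  simp only [stressEnergy, Matrix.add_apply, add_mul, Finset.sum_add_distrib]

lemma stressEnergy_smul (K : Matrix ι ι ℝ) (c : ℝ) (s : ι → E) :
    stressEnergy K (c • s) = c ^ 2 * stressEnergy K s := by
  simp only [stressEnergy, Pi.smul_apply, real_inner_smul_left, real_inner_smul_right,
    Finset.mul_sum]
  exact Finset.sum_congr rfl fun i _ => Finset.sum_congr rfl fun j _ => by ring

lemma continuous_stressEnergy (K : Matrix ι ι ℝ) : Continuous (stressEnergy K : (ι → E) → ℝ) := by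
  unfold stressEnergy
  fun_prop

lemma stressEnergy_eq_sum_inner (K : Matrix ι ι ℝ) (s : ι → E) :
    stressEnergy K s = ∑ i, ⟪s i, ∑ j, K i j • s j⟫ := by
  simp only [stressEnergy, inner_sum, real_inner_smul_right]

lemma stressEnergy_add (hK : K.IsSymm) (t s : ι → E) :
    stressEnergy K (t + s) =
      stressEnergy K t + 2 * ∑ i, ⟪s i, ∑ j, K i j • t j⟫ + stressEnergy K s := by
  have hcross : ∑ i, ∑ j, K i j * ⟪t i, s j⟫ = ∑ i, ∑ j, K i j * ⟪s i, t j⟫ := by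
    rw [Finset.sum_comm]
    exact Finset.sum_congr rfl fun i _ => Finset.sum_congr rfl fun j _ => by
      rw [hK.apply, real_inner_comm]
  simp only [stressEnergy, Pi.add_apply, inner_add_left, inner_add_right, mul_add,
    Finset.sum_add_distrib, inner_sum, real_inner_smul_right, hcross]
  ring

lemma stressEnergy_eq_sum_norm_sq (hK : K.IsSymm) (q : ι → E) :
    stressEnergy K q = ∑ i, (∑ j, K i j) * ‖q i‖ ^ 2 -
      (1 / 2) * ∑ i, ∑ j, K i j * ‖q i - q j‖ ^ 2 := by
  have hterm : ∀ i j, K i j * ‖q i - q j‖ ^ 2 =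
      K i j * ‖q i‖ ^ 2 + K i j * ‖q j‖ ^ 2 - 2 * (K i j * ⟪q i, q j⟫) := fun i j => by
    rw [norm_sub_sq_real]
    ring
  have hswap : ∑ i, ∑ j, K i j * ‖q j‖ ^ 2 = ∑ i, ∑ j, K i j * ‖q i‖ ^ 2 := by
    rw [Finset.sum_comm]
    exact Finset.sum_congr rfl fun i _ => Finset.sum_congr rfl fun j _ => by rw [hK.apply]
  simp only [hterm, Finset.sum_sub_distrib, Finset.sum_add_distrib, hswap, ← Finset.mul_sum,
    Finset.sum_mul, stressEnergy]
  ring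

lemma stressEnergy_sub_stressEnergy (hK : K.IsSymm) (p q : ι → E) :
    stressEnergy K q - stressEnergy K p = ∑ i, (∑ j, K i j) * (‖q i‖ ^ 2 - ‖p i‖ ^ 2) +
      (1 / 2) * ∑ i, ∑ j, K i j * (‖p i - p j‖ ^ 2 - ‖q i - q j‖ ^ 2) := by
  rw [stressEnergy_eq_sum_norm_sq hK, stressEnergy_eq_sum_norm_sq hK]
  simp only [mul_sub, Finset.sum_sub_distrib]
  ring

lemma stressEnergy_le_sum_abs_mul (K : Matrix ι ι ℝ) (s : ι → E) :
    stressEnergy K s ≤ (∑ i, ∑ j, |K i j|) * ‖s‖ ^ 2 := by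
  simp only [stressEnergy, Finset.sum_mul]
  refine Finset.sum_le_sum fun i _ => Finset.sum_le_sum fun j _ => ?_
  calc K i j * ⟪s i, s j⟫ ≤ |K i j| * |⟪s i, s j⟫| := abs_mul (K i j) _ ▸ le_abs_self _
    _ ≤ |K i j| * (‖s i‖ * ‖s j‖) := by gcongr; exact abs_real_inner_le_norm _ _
    _ ≤ |K i j| * (‖s‖ * ‖s‖) := by gcongr <;> exact norm_le_pi_norm s _
    _ = |K i j| * ‖s‖ ^ 2 := by rw [sq]

/-- The deformation `q` of `p` shortens no norm and lengthens none of the differences `p i - p j`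
that carry a nonzero stress. -/
structure IsAdmissible (K : Matrix ι ι ℝ) (p q : ι → E) : Prop where
  norm_le : ∀ i, ‖p i‖ ≤ ‖q i‖
  norm_sub_le : ∀ ⦃i j⦄, i ≠ j → K i j ≠ 0 → ‖q i - q j‖ ≤ ‖p i - p j‖

/-- Symmetry and the sign conditions under which admissible deformations increase the energy. -/
structure IsTensegrityStress (K : Matrix ι ι ℝ) : Prop where
  isSymm : K.IsSymm
  nonneg : ∀ ⦃i j⦄, i ≠ j → 0 ≤ K i j
  sum_nonneg : ∀ i, 0 ≤ ∑ j, K i j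

namespace IsTensegrityStress

variable (hK : IsTensegrityStress K) (hq : IsAdmissible K p q)
include hK hq

omit [InnerProductSpace ℝ E] in
lemma sum_mul_norm_sq_sub_nonneg (i : ι) : 0 ≤ (∑ j, K i j) * (‖q i‖ ^ 2 - ‖p i‖ ^ 2) :=
  mul_nonneg (hK.sum_nonneg i) (sub_nonneg.2 (pow_le_pow_left₀ (norm_nonneg _) (hq.norm_le i) 2))

omit [InnerProductSpace ℝ E] in
lemma mul_norm_sub_sq_sub_nonneg (i j : ι) :
    0 ≤ K i j * (‖p i - p j‖ ^ 2 - ‖q i - q j‖ ^ 2) := by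
  by_cases hij : i = j
  · simp [hij]
  by_cases h : K i j = 0
  · simp [h]
  exact mul_nonneg (hK.nonneg hij)
    (sub_nonneg.2 (pow_le_pow_left₀ (norm_nonneg _) (hq.norm_sub_le hij h) 2))

lemma stressEnergy_le : stressEnergy K p ≤ stressEnergy K q := by
  have hvertex := Finset.sum_nonneg fun i (_ : i ∈ Finset.univ) =>
    hK.sum_mul_norm_sq_sub_nonneg hq i
  have hedge := Finset.sum_nonneg fun i (_ : i ∈ Finset.univ) =>
    Finset.sum_nonneg fun j (_ : j ∈ Finset.univ) => hK.mul_norm_sub_sq_sub_nonneg hq i j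
  linarith [stressEnergy_sub_stressEnergy hK.isSymm p q]

lemma inner_eq_of_stressEnergy_eq (hpos : ∀ i, 0 < ∑ j, K i j)
    (heq : stressEnergy K q = stressEnergy K p) :
    (∀ i, ‖q i‖ = ‖p i‖) ∧ ∀ i j, K i j ≠ 0 → ⟪q i, q j⟫ = ⟪p i, p j⟫ := by
  have hvertex := fun i (_ : i ∈ Finset.univ) => hK.sum_mul_norm_sq_sub_nonneg hq i
  have hedge := fun i j (_ : j ∈ Finset.univ) => hK.mul_norm_sub_sq_sub_nonneg hq i j
  have hedges := fun i (_ : i ∈ Finset.univ) => Finset.sum_nonneg (hedge i)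
  have hsum := stressEnergy_sub_stressEnergy hK.isSymm p q
  rw [heq, sub_self] at hsum
  have hvertex₀ := (Finset.sum_eq_zero_iff_of_nonneg hvertex).1
    (by linarith [Finset.sum_nonneg hvertex, Finset.sum_nonneg hedges])
  have hedge₀ := (Finset.sum_eq_zero_iff_of_nonneg hedges).1
    (by linarith [Finset.sum_nonneg hvertex, Finset.sum_nonneg hedges])
  have hnorm : ∀ i, ‖q i‖ ^ 2 = ‖p i‖ ^ 2 := fun i => sub_eq_zero.1 <|
    (mul_eq_zero.1 (hvertex₀ i (Finset.mem_univ i))).resolve_left (hpos i).ne'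
  refine ⟨fun i => (sq_eq_sq₀ (norm_nonneg _) (norm_nonneg _)).1 (hnorm i), fun i j hij => ?_⟩
  have hlength := (mul_eq_zero.1 ((Finset.sum_eq_zero_iff_of_nonneg (hedge i)).1
    (hedge₀ i (Finset.mem_univ i)) j (Finset.mem_univ j))).resolve_left hij
  rw [norm_sub_sq_real, norm_sub_sq_real] at hlength
  linarith [hnorm i, hnorm j]

end IsTensegrityStress

lemma stressEnergy_eq_sum_dotProduct {κ : Type*} [Fintype κ] (K : Matrix ι ι ℝ) (s : ι → E)
    (b : OrthonormalBasis κ ℝ E) :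
    stressEnergy K s = ∑ k, (fun i => ⟪s i, b k⟫) ⬝ᵥ K *ᵥ fun i => ⟪s i, b k⟫ := by
  simp only [stressEnergy, Matrix.mulVec, dotProduct, Finset.mul_sum]
  rw [Finset.sum_comm (s := (Finset.univ : Finset κ))]
  refine Finset.sum_congr rfl fun i _ => ?_
  rw [Finset.sum_comm]
  refine Finset.sum_congr rfl fun j _ => ?_
  rw [← b.sum_inner_mul_inner (s i) (s j), Finset.mul_sum]
  refine Finset.sum_congr rfl fun k _ => ?_
  rw [real_inner_comm (s j)]
  ring

variable [FiniteDimensional ℝ E]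

lemma stressEnergy_nonneg (hK : K.PosSemidef) (s : ι → E) : 0 ≤ stressEnergy K s := by
  rw [stressEnergy_eq_sum_dotProduct K s (stdOrthonormalBasis ℝ E)]
  exact Finset.sum_nonneg fun k _ => by simpa using hK.dotProduct_mulVec_nonneg _

lemma sum_smul_eq_zero_of_stressEnergy_eq_zero (hK : K.PosSemidef) (hs : stressEnergy K s = 0)
    (i : ι) : ∑ j, K i j • s j = 0 := by
  set b := stdOrthonormalBasis ℝ E
  rw [stressEnergy_eq_sum_dotProduct K s b, Finset.sum_eq_zero_iff_of_nonneg fun k _ => by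
    simpa using hK.dotProduct_mulVec_nonneg _] at hs
  refine InnerProductSpace.ext_inner_right_basis (𝕜 := ℝ) b.toBasis fun k => ?_
  have hk := hK.dotProduct_mulVec_zero_iff _ |>.1 (by simpa using hs k (Finset.mem_univ k))
  simpa [Matrix.mulVec, dotProduct, sum_inner, real_inner_smul_left] using congrFun hk i

end StressEnergy

/-! ### Linear fits -/

section LinearFit

variable {E : Type*} [NormedAddCommGroup E] [InnerProductSpace ℝ E]
variable {ι : Type*} [Fintype ι] {p q s : ι → E}

/-- The configurations orthogonal, as matrices, to all linear images of `p`. -/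
def linearComplement (p : ι → E) : Submodule ℝ (ι → E) where
  carrier := {s | ∀ w, ∑ i, ⟪p i, w⟫ • s i = 0}
  zero_mem' w := by simp
  add_mem' hs ht w := by simp [smul_add, Finset.sum_add_distrib, hs w, ht w]
  smul_mem' c s hs w := by simp [smul_comm _ c, ← Finset.smul_sum, hs w]

lemma eq_zero_of_mem_linearComplement (hs : s ∈ linearComplement p)
    (h : ∀ v, ∃ w, ∀ i, ⟪s i, v⟫ = ⟪p i, w⟫) : s = 0 := by
  have hzero : ∀ v, ∑ i, ⟪s i, v⟫ * ⟪s i, v⟫ = 0 := fun v => by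
    obtain ⟨w, hw⟩ := h v
    have := congrArg (fun u => ⟪u, v⟫) (hs w)
    simpa only [← hw, sum_inner, real_inner_smul_left, inner_zero_left] using this
  refine funext fun i => ext_inner_right ℝ fun v => ?_
  simpa using (Finset.sum_eq_zero_iff_of_nonneg fun i _ => mul_self_nonneg _).1 (hzero v) i
    (Finset.mem_univ i)

variable [FiniteDimensional ℝ E]

/- Least squares: the normal equations express the optimal linear map by the inverse of the Gram
operator `w ↦ ∑ i, ⟪p i, w⟫ • p i`. -/
lemma exists_linearFit (hp : ∀ w, (∀ i, ⟪p i, w⟫ = 0) → w = 0) :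
    ∃ B : (ι → E) → E →L[ℝ] E, Continuous B ∧ B p = .id ℝ E ∧
      ∀ q, (q - fun i => B q (p i)) ∈ linearComplement p := by
  let R : E →ₗ[ℝ] E := ∑ i, (innerₛₗ ℝ (p i)).smulRight (p i)
  have hR : ∀ w, R w = ∑ i, ⟪p i, w⟫ • p i := fun w => by simp [R]
  have hinj : Function.Injective R := by
    refine (injective_iff_map_eq_zero R).2 fun w hw => hp w fun i => ?_
    have hsum : ∑ i, ⟪p i, w⟫ * ⟪p i, w⟫ = 0 := by
      have := congrArg (fun v => ⟪v, w⟫) hw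
      simpa only [hR, sum_inner, real_inner_smul_left, inner_zero_left] using this
    simpa using (Finset.sum_eq_zero_iff_of_nonneg fun i _ => mul_self_nonneg _).1 hsum i
      (Finset.mem_univ i)
  let R' := (LinearEquiv.ofInjectiveEndo R hinj).toContinuousLinearEquiv
  have hR' : ∀ w, R'.symm (∑ i, ⟪p i, w⟫ • p i) = w := fun w => by
    rw [← hR]
    exact R'.symm_apply_apply w
  let B (q : ι → E) : E →L[ℝ] E :=
    ∑ i, ((innerSL ℝ (p i)).comp R'.symm.toContinuousLinearMap).smulRight (q i)
  have hB : ∀ q v, B q v = ∑ i, ⟪p i, R'.symm v⟫ • q i := fun q v => by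
    simp [B]
  refine ⟨B, continuous_finsetSum _ fun i _ => ?_, ?_, fun q w => ?_⟩
  · exact (ContinuousLinearMap.smulRightL ℝ E E _).continuous.comp (continuous_apply i)
  · ext v
    rw [hB, ← hR]
    exact R'.apply_symm_apply v
  · simp only [Pi.sub_apply, smul_sub, Finset.sum_sub_distrib, ← map_smul]
    rw [← map_sum, hB, hR', sub_self]

end LinearFit

section Coercive

/- By homogeneity the constant is the minimum of `G` on the unit sphere. -/
lemma exists_pos_mul_norm_sq_le {F : Type*} [NormedAddCommGroup F] [NormedSpace ℝ F]
    [FiniteDimensional ℝ F] {G : F → ℝ} (hG : Continuous G)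
    (hsmul : ∀ (c : ℝ) s, G (c • s) = c ^ 2 * G s) (hpos : ∀ s, s ≠ 0 → 0 < G s) :
    ∃ κ > 0, ∀ s, κ * ‖s‖ ^ 2 ≤ G s := by
  have := FiniteDimensional.proper_real F
  have hzero : G 0 = 0 := by simpa using hsmul 0 0
  rcases subsingleton_or_nontrivial F with _ | _
  · exact ⟨1, one_pos, fun s => by simp [Subsingleton.elim s 0, hzero]⟩
  obtain ⟨u, hu, hmin⟩ := (isCompact_sphere (0 : F) 1).exists_isMinOn
    (NormedSpace.sphere_nonempty.2 zero_le_one) hG.continuousOn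
  refine ⟨G u, hpos u (ne_zero_of_mem_unit_sphere ⟨u, hu⟩), fun s => ?_⟩
  rcases eq_or_ne s 0 with rfl | hs
  · simp [hzero]
  have hs' := norm_ne_zero_iff.2 hs
  have hle : G u ≤ G (‖s‖⁻¹ • s) := hmin (by simp [norm_smul, hs'])
  calc G u * ‖s‖ ^ 2 ≤ G (‖s‖⁻¹ • s) * ‖s‖ ^ 2 := by gcongr
    _ = G s := by rw [hsmul]; field_simp

end Coercive

/-! ### Rigidity from a stress system -/

namespace IsStressSystem

variable {E : Type*} [NormedAddCommGroup E] [InnerProductSpace ℝ E]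
variable {ι : Type*} [Fintype ι] {p q s : ι → E} {M : Matrix ι ι ℝ} {N : E →ₗ[ℝ] Matrix ι ι ℝ}

section
variable (h : IsStressSystem p M N)
include h

lemma isTensegrityStress : IsTensegrityStress M where
  isSymm := h.isSymm
  nonneg := h.nonneg
  sum_nonneg i := (h.sum_pos i).le

lemma sum_add_smul (x : E) (i : ι) : ∑ j, (M + N x) i j • p j = (∑ j, M i j) • x := by
  refine ext_inner_right ℝ fun w => ?_
  have hM := congrFun (h.mulVec_inner w) i
  have hN := h.variation_mulVec_inner x w i
  simp only [Matrix.mulVec, dotProduct, Pi.zero_apply] at hM hN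
  simp only [sum_inner, real_inner_smul_left, Matrix.add_apply, add_mul, Finset.sum_add_distrib,
    hM, hN, zero_add]

lemma sum_sum_smul : ∑ i, (∑ j, M i j) • p i = 0 := by
  simp only [Finset.sum_smul]
  rw [Finset.sum_comm]
  refine Finset.sum_eq_zero fun j _ => ?_
  simpa [h.isSymm.apply] using h.sum_add_smul 0 j

lemma stressEnergy_add_linear (B : E →ₗ[ℝ] E) (x : E) :
    stressEnergy (M + N x) (fun i => B (p i)) = 0 := by
  have hterm : ∀ i ∈ Finset.univ, ⟪B (p i), ∑ j, (M + N x) i j • B (p j)⟫ =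
      ⟪B ((∑ j, M i j) • p i), B x⟫ := fun i _ => by
    simp only [← map_smul, ← map_sum, h.sum_add_smul]
    simp only [map_smul, real_inner_smul_left, real_inner_smul_right]
  rw [stressEnergy_eq_sum_inner, Finset.sum_congr rfl hterm, ← sum_inner, ← map_sum,
    h.sum_sum_smul, map_zero, inner_zero_left]

lemma stressEnergy_add_linear_add (B : E →ₗ[ℝ] E) (x : E) (s : ι → E) :
    stressEnergy (M + N x) ((fun i => B (p i)) + s) =
      2 * ⟪∑ i, (∑ j, M i j) • s i, B x⟫ + stressEnergy M s + stressEnergy (N x) s := by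
  have hterm : ∀ i ∈ Finset.univ, ⟪s i, ∑ j, (M + N x) i j • B (p j)⟫ =
      ⟪(∑ j, M i j) • s i, B x⟫ := fun i _ => by
    simp only [← map_smul, ← map_sum, h.sum_add_smul]
    simp only [map_smul, real_inner_smul_left, real_inner_smul_right]
  rw [stressEnergy_add (h.isSymm.add (h.variation_isSymm x)), h.stressEnergy_add_linear,
    Finset.sum_congr rfl hterm, ← sum_inner, stressEnergy_add_left]
  ring

lemma total_pos [Nonempty ι] : 0 < ∑ i, ∑ j, M i j :=
  Finset.sum_pos (fun i _ => h.sum_pos i) Finset.univ_nonempty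

lemma norm_sum_smul_le (s : ι → E) :
    ‖∑ i, (∑ j, M i j) • s i‖ ≤ (∑ i, ∑ j, M i j) * ‖s‖ := by
  rw [Finset.sum_mul]
  refine norm_sum_le_of_le _ fun i _ => ?_
  have := (h.sum_pos i).le
  rw [norm_smul, Real.norm_of_nonneg this]
  gcongr
  exact norm_le_pi_norm s i

/- The projection of `y` to the hyperplane on which `M` is nonpositive subtracts the constant
`(α ⬝ᵥ y) / ∑ α`, where `α` is the vector of row sums. -/
lemma posSemidef_sub [Nonempty ι] :
    ((∑ i, ∑ j, M i j)⁻¹ • Matrix.vecMulVec (M *ᵥ 1) (M *ᵥ 1) - M).PosSemidef := by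
  set A := ∑ i, ∑ j, M i j with hA
  set α := M *ᵥ 1 with hα
  have hsum : ∀ i, ∑ j, M i j = α i := fun i => by
    simp only [hα, Matrix.mulVec, dotProduct, Pi.one_apply, mul_one]
  have hA₀ : A ≠ 0 := h.total_pos.ne'
  have hone : (1 : ι → ℝ) ⬝ᵥ α = A := by simp only [one_dotProduct, hA, hsum]
  have hsymm : ∀ y, (1 : ι → ℝ) ⬝ᵥ M *ᵥ y = α ⬝ᵥ y := fun y => by
    rw [Matrix.dotProduct_mulVec, ← Matrix.mulVec_transpose, h.isSymm.eq]
  refine .of_dotProduct_mulVec_nonneg ?_ fun y => ?_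
  · ext i j
    simp [Matrix.vecMulVec_apply, h.isSymm.apply i j, mul_comm (α i)]
  set c := (α ⬝ᵥ y) / A with hc
  have hproj : ∑ i, (∑ j, M i j) * (y - c • 1 : ι → ℝ) i = 0 := by
    simp only [hsum]
    change α ⬝ᵥ (y - c • 1) = 0
    rw [dotProduct_sub, dotProduct_smul, dotProduct_comm α 1, hone, smul_eq_mul, hc,
      div_mul_cancel₀ _ hA₀, sub_self]
  have hneg := h.nonpos _ hproj
  rw [Matrix.mulVec_sub, Matrix.mulVec_smul, sub_dotProduct, smul_dotProduct, dotProduct_sub,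
    dotProduct_sub, dotProduct_smul, dotProduct_smul, hsymm, ← hα, hone, dotProduct_comm y α,
    smul_eq_mul, smul_eq_mul, smul_eq_mul] at hneg
  rw [star_trivial, Matrix.sub_mulVec, Matrix.smul_mulVec, Matrix.vecMulVec_mulVec,
    dotProduct_sub, dotProduct_smul, op_smul_eq_smul, dotProduct_smul, dotProduct_comm y α,
    smul_eq_mul, smul_eq_mul]
  calc 0 ≤ -(y ⬝ᵥ M *ᵥ y - c * (α ⬝ᵥ y) - c * (α ⬝ᵥ y - c * A)) := by linarith
    _ = A⁻¹ * ((α ⬝ᵥ y) * (α ⬝ᵥ y)) - y ⬝ᵥ M *ᵥ y := by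
      rw [hc]
      field_simp
      ring

omit h in
lemma stressEnergy_rankOne (a : ℝ) (s : ι → E) :
    stressEnergy (a • Matrix.vecMulVec (M *ᵥ 1) (M *ᵥ 1)) s =
      a * ‖∑ i, (∑ j, M i j) • s i‖ ^ 2 := by
  have hterm : ∀ i j, (a • Matrix.vecMulVec (M *ᵥ 1) (M *ᵥ 1)) i j * ⟪s i, s j⟫ =
      a * ⟪(∑ k, M i k) • s i, (∑ k, M j k) • s j⟫ := fun i j => by
    simp only [Matrix.smul_apply, Matrix.vecMulVec_apply, Matrix.mulVec, dotProduct,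
      Pi.one_apply, mul_one, smul_eq_mul, real_inner_smul_left, real_inner_smul_right]
    ring
  simp only [stressEnergy, hterm, ← Finset.mul_sum, ← inner_sum, ← sum_inner,
    real_inner_self_eq_norm_sq]

/- Together with `hs`, the hypothesis leaves no room in `posSemidef_sub`: the barycenter of `s`
vanishes and `M` annihilates `s`. -/
lemma eq_zero_of_stressEnergy_ge [FiniteDimensional ℝ E] [Nonempty ι]
    (hs : s ∈ linearComplement p)
    (hle : 2 * (∑ i, ∑ j, M i j)⁻¹ * ‖∑ i, (∑ j, M i j) • s i‖ ^ 2 ≤ stressEnergy M s) :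
    s = 0 := by
  set A := ∑ i, ∑ j, M i j
  set c := ∑ i, (∑ j, M i j) • s i with hc
  set P := A⁻¹ • Matrix.vecMulVec (M *ᵥ 1) (M *ᵥ 1) - M with hP
  have hPsd : P.PosSemidef := h.posSemidef_sub
  have hsplit : stressEnergy P s + stressEnergy M s = A⁻¹ * ‖c‖ ^ 2 := by
    rw [← stressEnergy_add_left, hP, sub_add_cancel, stressEnergy_rankOne]
  have hnonneg := stressEnergy_nonneg hPsd s
  have hc₀ : c = 0 := by
    have := h.total_pos
    by_contra hne
    have : 0 < A⁻¹ * ‖c‖ ^ 2 := by positivity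
    linarith
  have hPs := sum_smul_eq_zero_of_stressEnergy_eq_zero hPsd (s := s)
    (by simp only [hc₀, norm_zero] at hsplit hle; linarith)
  have hMs : ∀ i, ∑ j, M i j • s j = 0 := fun i => by
    have hrank : ∑ j, (A⁻¹ • Matrix.vecMulVec (M *ᵥ 1) (M *ᵥ 1)) i j • s j =
        (A⁻¹ * ∑ j, M i j) • c := by
      simp only [Matrix.smul_apply, Matrix.vecMulVec_apply, Matrix.mulVec, dotProduct,
        Pi.one_apply, mul_one, smul_eq_mul, ← mul_assoc, hc, Finset.smul_sum, smul_smul]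
    have hi := hPs i
    simp only [hP, Matrix.sub_apply, sub_smul, Finset.sum_sub_distrib] at hi
    rwa [hrank, hc₀, smul_zero, zero_sub, neg_eq_zero] at hi
  refine eq_zero_of_mem_linearComplement hs fun v => h.kernel _ (funext fun i => ?_)
  simpa [Matrix.mulVec, dotProduct, sum_inner, real_inner_smul_left] using
    congrArg (fun u => ⟪u, v⟫) (hMs i)

lemma exists_coercive [FiniteDimensional ℝ E] [Nonempty ι] :
    ∃ κ > 0, ∀ s ∈ linearComplement p, κ * ‖s‖ ^ 2 ≤
      2 * (∑ i, ∑ j, M i j)⁻¹ * ‖∑ i, (∑ j, M i j) • s i‖ ^ 2 - stressEnergy M s := by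
  have hcont : Continuous fun s : ι → E =>
      2 * (∑ i, ∑ j, M i j)⁻¹ * ‖∑ i, (∑ j, M i j) • s i‖ ^ 2 - stressEnergy M s :=
    .sub (by fun_prop) (continuous_stressEnergy M)
  obtain ⟨κ, hκ, hle⟩ := exists_pos_mul_norm_sq_le
    (hcont.comp (continuous_subtype_val (p := (· ∈ linearComplement p))))
    (fun c s => by
      simp only [Function.comp_apply, Submodule.coe_smul, stressEnergy_smul, Pi.smul_apply,
        smul_comm _ c, ← Finset.smul_sum, norm_smul, mul_pow, Real.norm_eq_abs, sq_abs]
      ring)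
    (fun s hs => sub_pos.2 <| lt_of_not_ge fun hle =>
      hs (Subtype.ext (h.eq_zero_of_stressEnergy_ge s.2 hle)))
  exact ⟨κ, hκ, fun s hs => hle ⟨s, hs⟩⟩

/- Small motions of the origin preserve the signs, because they preserve the zero entries. -/
lemma eventually_isTensegrityStress [FiniteDimensional ℝ E] :
    ∀ᶠ x in 𝓝 (0 : E), IsTensegrityStress (M + N x) := by
  have hcont : Continuous N := N.continuous_of_finiteDimensional
  have hentry : ∀ i j, Continuous fun x => (M + N x) i j := fun i j => by
    simp only [Matrix.add_apply]
    exact continuous_const.add (hcont.matrix_elem i j)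
  have hoff : ∀ i j, ∀ᶠ x in 𝓝 (0 : E), i ≠ j → 0 ≤ (M + N x) i j := fun i j => by
    rcases eq_or_ne i j with hij | hij
    · exact .of_forall fun x hne => absurd hij hne
    by_cases hM : M i j = 0
    · exact .of_forall fun x _ => by simp [hM, h.variation_eq_zero x hij hM]
    · have hpos := (h.nonneg hij).lt_of_ne' hM
      filter_upwards [(hentry i j).continuousAt.eventually_const_lt (u := 0) (by simpa using hpos)]
        with x hx _ using hx.le
  have hrow : ∀ i, ∀ᶠ x in 𝓝 (0 : E), 0 < ∑ j, (M + N x) i j := fun i =>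
    (continuous_finsetSum _ fun j _ => hentry i j).continuousAt.eventually_const_lt
      (by simpa using h.sum_pos i)
  filter_upwards [Filter.eventually_all.2 fun i => Filter.eventually_all.2 (hoff i),
    Filter.eventually_all.2 hrow] with x hoff hrow
  exact ⟨h.isSymm.add (h.variation_isSymm x), fun i j => hoff i j, fun i => (hrow i).le⟩

/- Moving the origin against the barycenter of `s` makes the cross term in the energy cancel the
positive direction of `M`. -/
lemma eq_zero_of_stressEnergy_nonneg [Nonempty ι] {κ : ℝ} {B : E →L[ℝ] E} {x : E}
    (hκ : κ * ‖s‖ ^ 2 ≤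
      2 * (∑ i, ∑ j, M i j)⁻¹ * ‖∑ i, (∑ j, M i j) • s i‖ ^ 2 - stressEnergy M s)
    (hx : x = -((∑ i, ∑ j, M i j)⁻¹ • ∑ i, (∑ j, M i j) • s i))
    (hsmall : 2 * (∑ i, ∑ j, M i j) * ‖B - .id ℝ E‖ + ∑ i, ∑ j, |N x i j| < κ)
    (hnonneg : 0 ≤ stressEnergy (M + N x) ((fun i => B (p i)) + s)) : s = 0 := by
  have hA := h.total_pos
  replace hnonneg := hnonneg.trans_eq (h.stressEnergy_add_linear_add B x s)
  rw [ContinuousLinearMap.coe_coe] at hnonneg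
  have hc := h.norm_sum_smul_le s
  set A := ∑ i, ∑ j, M i j
  set c := ∑ i, (∑ j, M i j) • s i
  have hx' : ‖x‖ ≤ ‖s‖ := by
    rw [hx, norm_neg, norm_smul, norm_inv, Real.norm_of_nonneg hA.le, inv_mul_le_iff₀ hA]
    exact hc
  have hcross : ⟪c, B x⟫ ≤ -(A⁻¹ * ‖c‖ ^ 2) + A * ‖B - .id ℝ E‖ * ‖s‖ ^ 2 := by
    calc ⟪c, B x⟫ = ⟪c, x⟫ + ⟪c, (B - .id ℝ E) x⟫ := by
          rw [← inner_add_right]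
          simp
      _ ≤ -(A⁻¹ * ‖c‖ ^ 2) + (A * ‖s‖) * (‖B - .id ℝ E‖ * ‖s‖) := by
          gcongr
          · rw [hx, inner_neg_right, real_inner_smul_right, real_inner_self_eq_norm_sq]
          · refine (real_inner_le_norm _ _).trans ?_
            gcongr
            exact (B - .id ℝ E).le_of_opNorm_le_of_le le_rfl hx'
      _ = _ := by ring
  have hN := stressEnergy_le_sum_abs_mul (N x) s
  by_contra hs
  have := mul_lt_mul_of_pos_right hsmall (pow_pos (norm_pos_iff.2 hs) 2)
  linarith

lemma eq_zero_of_forall_inner_eq_zero [Nonempty ι] {w : E} (hw : ∀ i, ⟪p i, w⟫ = 0) : w = 0 :=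
  h.eq_zero (Classical.arbitrary ι) w (hw _) fun j _ _ => hw j

/- Linear images of `p` have zero energy, so all constraints are tight, and they determine the
linear map because each `p i` spans the space together with its neighbours. -/
lemma exists_linearIsometryEquiv_of_linear [FiniteDimensional ℝ E] [Nonempty ι] {B : E →ₗ[ℝ] E}
    (hB : IsAdmissible M p fun i => B (p i)) : ∃ T : E ≃ₗᵢ[ℝ] E, ∀ v, T v = B v := by
  have henergy : ∀ L : E →ₗ[ℝ] E, stressEnergy M (fun i => L (p i)) = 0 := fun L => by
    simpa using h.stressEnergy_add_linear L 0
  obtain ⟨hnorm, hinner⟩ := h.isTensegrityStress.inner_eq_of_stressEnergy_eq hB h.sum_pos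
    ((henergy B).trans (henergy .id).symm)
  have hvertex : ∀ i, LinearMap.adjoint B (B (p i)) = p i := fun i => by
    refine sub_eq_zero.1 (h.eq_zero i _ ?_ fun j _ hij => ?_)
    · rw [inner_sub_right, LinearMap.adjoint_inner_right, real_inner_self_eq_norm_sq,
        real_inner_self_eq_norm_sq, hnorm, sub_self]
    · rw [inner_sub_right, LinearMap.adjoint_inner_right, real_inner_comm, hinner i j hij,
        real_inner_comm, sub_self]
  have hadjoint : ∀ v, LinearMap.adjoint B (B v) = v := fun v =>
    sub_eq_zero.1 <| h.eq_zero_of_forall_inner_eq_zero fun i => by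
      rw [inner_sub_right, LinearMap.adjoint_inner_right, ← LinearMap.adjoint_inner_left, hvertex,
        sub_self]
  have hisometry : ∀ v, ‖B v‖ = ‖v‖ := fun v => by
    rw [← sq_eq_sq₀ (norm_nonneg _) (norm_nonneg _), ← real_inner_self_eq_norm_sq,
      ← LinearMap.adjoint_inner_left, hadjoint, real_inner_self_eq_norm_sq]
  exact ⟨LinearIsometry.toLinearIsometryEquiv ⟨B, hisometry⟩ rfl, fun v => rfl⟩

theorem eventually_exists_linearIsometryEquiv [FiniteDimensional ℝ E] :
    ∀ᶠ q in 𝓝 p, IsAdmissible M p q → ∃ T : E ≃ₗᵢ[ℝ] E, ∀ i, T (p i) = q i := by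
  rcases isEmpty_or_nonempty ι with _ | _
  · exact .of_forall fun q _ => ⟨.refl ℝ E, fun i => isEmptyElim i⟩
  obtain ⟨κ, hκ, hcoercive⟩ := h.exists_coercive
  obtain ⟨B, hBcont, hBp, hfit⟩ := exists_linearFit (p := p)
    fun w => h.eq_zero_of_forall_inner_eq_zero
  set s : (ι → E) → ι → E := fun q => q - fun i => B q (p i) with hs
  set x : (ι → E) → E := fun q => -((∑ i, ∑ j, M i j)⁻¹ • ∑ i, (∑ j, M i j) • s q i) with hx
  have hxcont : Continuous x := by
    simp only [hx, hs, Pi.sub_apply]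
    fun_prop
  have hxp : x p = 0 := by simp [hx, hs, hBp]
  have hNcont : Continuous N := N.continuous_of_finiteDimensional
  have hsmall : ∀ᶠ q in 𝓝 p, 2 * (∑ i, ∑ j, M i j) * ‖B q - .id ℝ E‖ +
      ∑ i, ∑ j, |N (x q) i j| < κ := by
    refine (Continuous.tendsto ?_ p).eventually_lt_const (by simpa [hBp, hxp] using hκ)
    exact ((hBcont.sub continuous_const).norm.const_mul _).add <| continuous_finsetSum _ fun i _ =>
      continuous_finsetSum _ fun j _ => ((hNcont.comp hxcont).matrix_elem i j).abs
  have hstress := hxcont.continuousAt.eventually (hxp.symm ▸ h.eventually_isTensegrityStress)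
  filter_upwards [hsmall, hstress] with q hsmall hstress hq
  have hdecomp : (fun i => B q (p i)) + s q = q := add_sub_cancel _ _
  have hadmissible : IsAdmissible (M + N (x q)) p q := ⟨hq.norm_le, fun i j hij hne =>
    hq.norm_sub_le hij fun hM => hne (by simp [hM, h.variation_eq_zero _ hij hM])⟩
  have henergy : 0 ≤ stressEnergy (M + N (x q)) ((fun i => B q (p i)) + s q) := by
    rw [hdecomp, ← h.stressEnergy_add_linear .id (x q)]
    exact hstress.stressEnergy_le hadmissible
  have hszero := h.eq_zero_of_stressEnergy_nonneg (hcoercive _ (hfit q)) rfl hsmall henergy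
  have hlinear : q = fun i => B q (p i) := sub_eq_zero.1 hszero
  obtain ⟨T, hT⟩ := h.exists_linearIsometryEquiv_of_linear (B := B q) (by
    rw [hlinear] at hq
    exact hq)
  exact ⟨T, fun i => (hT _).trans (congrFun hlinear i).symm⟩

end

end IsStressSystem

/-! ### Faces of the convex hull -/

section ConvexHull

lemma isExtreme_convexHull_of_lt {E : Type*} [AddCommGroup E] [Module ℝ E] {s F : Set E}
    {f : E →ₗ[ℝ] ℝ} {c : ℝ} (hF : Convex ℝ F) (hsub : F ⊆ convexHull ℝ s) (heq : ∀ y ∈ F, f y = c)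
    (hlt : ∀ y ∈ s, y ∉ F → f y < c) : IsExtreme ℝ (convexHull ℝ s) F := by
  have hle : ∀ {y}, (y ∉ F → f y < c) → f y ≤ c := fun {y} hy => by
    by_cases h : y ∈ F
    exacts [(heq y h).le, (hy h).le]
  have hcomb : ∀ {x y : E} {a b : ℝ}, 0 < a → 0 < b → a + b = 1 → f x < c → f y ≤ c →
      f (a • x + b • y) < c := fun {x y a b} ha hb hab hx hy => by
    rw [map_add, map_smul, map_smul, smul_eq_mul, smul_eq_mul]
    calc a * f x + b * f y < a * c + b * c :=
        add_lt_add_of_lt_of_le (mul_lt_mul_of_pos_left hx ha) (mul_le_mul_of_nonneg_left hy hb.le)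
      _ = c := by rw [← add_mul, hab, one_mul]
  have hhull : convexHull ℝ s ⊆ {y | y ∉ F → f y < c} := by
    refine convexHull_min hlt (convex_iff_forall_pos.2 fun x hx y hy a b ha hb hab hmem => ?_)
    by_cases hxF : x ∈ F
    · have hyF : y ∉ F := fun hyF => hmem (hF hxF hyF ha.le hb.le hab)
      rw [add_comm]
      exact hcomb hb ha (by rwa [add_comm]) (hy hyF) (hle hx)
    · exact hcomb ha hb hab (hx hxF) (hle hy)
  refine ⟨hsub, fun x hx y hy w hw hmem => ?_⟩
  obtain ⟨a, b, ha, hb, hab, rfl⟩ := hmem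
  by_contra hxF
  exact (hcomb ha hb hab (hhull hx hxF) (hle (hhull hy))).ne (heq _ hw)

variable {E : Type*} [NormedAddCommGroup E] [InnerProductSpace ℝ E] {ι : Type*} {p : ι → E}

lemma isExtreme_segment {i j : ι} {z : E} (hi : ⟪p i, z⟫ = 1) (hj : ⟪p j, z⟫ = 1)
    (hlt : ∀ k, k ≠ i → k ≠ j → ⟪p k, z⟫ < 1) :
    IsExtreme ℝ (convexHull ℝ (Set.range p)) (segment ℝ (p i) (p j)) := by
  refine isExtreme_convexHull_of_lt (f := innerₗ E z) (c := 1) (convex_segment _ _)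
    (segment_subset_convexHull ⟨i, rfl⟩ ⟨j, rfl⟩) ?_ ?_
  · rintro _ ⟨a, b, -, -, hab, rfl⟩
    rw [innerₗ_apply_apply, real_inner_comm, inner_add_left, real_inner_smul_left,
      real_inner_smul_left, hi, hj, mul_one, mul_one, hab]
  · rintro _ ⟨k, rfl⟩ hk
    rw [innerₗ_apply_apply, real_inner_comm]
    refine hlt k ?_ ?_ <;> rintro rfl
    exacts [hk (left_mem_segment ℝ _ _), hk (right_mem_segment ℝ _ _)]

lemma positivelySpanning_of_zero_mem_interior
    (h0 : (0 : E) ∈ interior (convexHull ℝ (Set.range p))) : PositivelySpanning p := by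
  intro w hw
  by_contra! hle
  have hhull : convexHull ℝ (Set.range p) ⊆ {y | ⟪w, y⟫ ≤ 0} := by
    refine convexHull_min ?_ (convex_halfSpace_le (innerₗ E w).isLinear 0)
    rintro _ ⟨i, rfl⟩
    exact (real_inner_comm _ _).trans_le (hle i)
  have hsmall : ∀ᶠ t : ℝ in 𝓝 0, t • w ∈ convexHull ℝ (Set.range p) :=
    (show ContinuousAt (fun t : ℝ => t • w) 0 by fun_prop) (by
      simpa using mem_interior_iff_mem_nhds.1 h0)
  obtain ⟨t, hmem, ht⟩ := ((hsmall.filter_mono nhdsWithin_le_nhds).and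
    (self_mem_nhdsWithin (s := Set.Ioi (0 : ℝ)))).exists
  have hnonpos : ⟪w, t • w⟫ ≤ 0 := hhull hmem
  rw [real_inner_smul_right] at hnonpos
  exact hnonpos.not_gt (mul_pos ht (real_inner_self_pos.2 hw))

lemma PositivelySpanning.nontrivial [Nontrivial E] (hp : PositivelySpanning p) : Nontrivial ι := by
  obtain ⟨w, hw⟩ := exists_ne (0 : E)
  obtain ⟨i, hi⟩ := hp w hw
  obtain ⟨j, hj⟩ := hp (-w) (neg_ne_zero.2 hw)
  refine ⟨i, j, ?_⟩
  rintro rfl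
  rw [inner_neg_right] at hj
  linarith

lemma exists_inner_lt_of_mem_extremePoints [Finite ι] [CompleteSpace E]
    (hinj : Function.Injective p) {i : ι}
    (hi : p i ∈ Set.extremePoints ℝ (convexHull ℝ (Set.range p))) :
    ∃ z : E, ∀ j, j ≠ i → ⟪p j, z⟫ < ⟪p i, z⟫ := by
  have hsub : convexHull ℝ (p '' {i}ᶜ) ⊆ convexHull ℝ (Set.range p) \ {p i} := by
    refine convexHull_min ?_ ((convex_convexHull ℝ _).mem_extremePoints_iff_convex_sdiff.1 hi).2
    rintro _ ⟨j, hj, rfl⟩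
    exact ⟨subset_convexHull ℝ _ ⟨j, rfl⟩, fun h => hj (hinj h)⟩
  obtain ⟨f, u, hlt, hu⟩ := geometric_hahn_banach_closed_point (convex_convexHull ℝ (p '' {i}ᶜ))
    ((Set.toFinite _).isCompact_convexHull ℝ).isClosed fun h => (hsub h).2 rfl
  refine ⟨(InnerProductSpace.toDual ℝ E).symm f, fun j hj => ?_⟩
  rw [real_inner_comm, real_inner_comm _ (p i), InnerProductSpace.toDual_symm_apply,
    InnerProductSpace.toDual_symm_apply]
  exact (hlt _ (subset_convexHull ℝ _ ⟨j, hj, rfl⟩)).trans hu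

lemma isFace_singleton_of_mem_extremePoints [Fintype ι] [CompleteSpace E] [Nontrivial E]
    (hinj : Function.Injective p) (hp : PositivelySpanning p) {i : ι}
    (hi : p i ∈ Set.extremePoints ℝ (convexHull ℝ (Set.range p))) : IsFace p {i} := by
  obtain ⟨z, hlt⟩ := exists_inner_lt_of_mem_extremePoints hinj hi
  have := hp.nontrivial
  obtain ⟨j, hj⟩ := exists_ne i
  have hz : z ≠ 0 := by
    rintro rfl
    simpa using hlt j hj
  obtain ⟨k, hk⟩ := hp z hz
  have hpos : 0 < ⟪p i, z⟫ := by
    rcases eq_or_ne k i with rfl | hki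
    exacts [hk, hk.trans (hlt k hki)]
  have hscaled : ∀ l, l ≠ i → ⟪p l, ⟪p i, z⟫⁻¹ • z⟫ < 1 := fun l hl => by
    rw [real_inner_smul_right, inv_mul_lt_one₀ hpos]
    exact hlt l hl
  have hone : ⟪p i, ⟪p i, z⟫⁻¹ • z⟫ = 1 := by
    rw [real_inner_smul_right, inv_mul_cancel₀ hpos.ne']
  refine ⟨⟪p i, z⟫⁻¹ • z, fun l => ?_, ?_⟩
  · rcases eq_or_ne l i with rfl | hl
    exacts [hone.le, (hscaled l hl).le]
  · ext l
    rw [mem_activeSet, Finset.mem_singleton]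
    refine ⟨fun hl => ?_, fun hl => hl ▸ hone⟩
    by_contra hne
    exact (hscaled l hne).ne hl

end ConvexHull

/-! ### Dimension one -/

section DimensionOne

variable {E : Type*} [NormedAddCommGroup E] [InnerProductSpace ℝ E]

lemma abs_real_inner_eq_of_finrank_eq_one (hE : finrank ℝ E = 1) (v w : E) :
    |⟪v, w⟫| = ‖v‖ * ‖w‖ := by
  rcases eq_or_ne w 0 with rfl | hw
  · simp
  · obtain ⟨c, rfl⟩ := exists_smul_eq_of_finrank_eq_one hE hw v
    rw [real_inner_smul_left, real_inner_self_eq_norm_sq, abs_mul, abs_sq, norm_smul,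
      Real.norm_eq_abs, mul_assoc, sq]

lemma eq_of_norm_le_of_norm_sub_le (hE : finrank ℝ E = 1) {x y x' y' z : E} (hx : 0 < ⟪x, z⟫)
    (hy : ⟪y, z⟫ < 0) (hx' : 0 < ⟪x', z⟫) (hy' : ⟪y', z⟫ < 0) (hxx' : ‖x‖ ≤ ‖x'‖)
    (hyy' : ‖y‖ ≤ ‖y'‖) (hsub : ‖x' - y'‖ ≤ ‖x - y‖) : x' = x := by
  have hmono : ∀ {v w : E}, ‖v‖ ≤ ‖w‖ → |⟪v, z⟫| ≤ |⟪w, z⟫| := fun {v w} h => by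
    rw [abs_real_inner_eq_of_finrank_eq_one hE, abs_real_inner_eq_of_finrank_eq_one hE]
    gcongr
  have hX := hmono hxx'
  have hY := hmono hyy'
  have hXY := hmono hsub
  rw [abs_of_pos hx, abs_of_pos hx'] at hX
  rw [abs_of_neg hy, abs_of_neg hy'] at hY
  rw [inner_sub_left, inner_sub_left, abs_of_pos (by linarith), abs_of_pos (by linarith)] at hXY
  have hz : z ≠ 0 := by
    rintro rfl
    simp at hx
  have hdiff : ‖x' - x‖ * ‖z‖ = 0 := by
    rw [← abs_real_inner_eq_of_finrank_eq_one hE, inner_sub_left, abs_eq_zero]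
    linarith
  exact sub_eq_zero.1 (norm_eq_zero.1 ((mul_eq_zero_iff_right (norm_ne_zero_iff.2 hz)).1 hdiff))

variable {ι : Type*} [Fintype ι] {p : ι → E}

lemma exists_convexHull_eq_segment (hE : finrank ℝ E = 1) (hp : PositivelySpanning p)
    (hf : ∀ i, IsFace p {i}) (i : ι) : ∃ z j, 0 < ⟪p i, z⟫ ∧ ⟪p j, z⟫ < 0 ∧
      convexHull ℝ (Set.range p) = segment ℝ (p i) (p j) := by
  have hsupport : ∀ i, ∃ z, ⟪p i, z⟫ = 1 ∧ ∀ k, ⟪p k, z⟫ ≤ 1 := fun i => by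
    obtain ⟨z, hz, hactive⟩ := hf i
    exact ⟨z, mem_activeSet.1 (hactive ▸ Finset.mem_singleton_self i), hz⟩
  obtain ⟨z, hiz, hle⟩ := hsupport i
  have hz : z ≠ 0 := by
    rintro rfl
    simp at hiz
  obtain ⟨j, hj⟩ := hp (-z) (neg_ne_zero.2 hz)
  rw [inner_neg_right, neg_pos] at hj
  obtain ⟨z', hjz, hge⟩ := hsupport j
  obtain ⟨b, rfl⟩ := exists_smul_eq_of_finrank_eq_one hE hz z'
  simp only [real_inner_smul_right] at hjz hge
  have hmin : ∀ k, ⟪p j, z⟫ ≤ ⟪p k, z⟫ := fun k => by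
    have hb : b < 0 := by nlinarith
    exact (mul_le_mul_left_of_neg hb).1 (hjz ▸ hge k)
  refine ⟨z, j, hiz ▸ one_pos, hj, (convexHull_min ?_ (convex_segment _ _)).antisymm
    (segment_subset_convexHull ⟨i, rfl⟩ ⟨j, rfl⟩)⟩
  rintro _ ⟨k, rfl⟩
  have hinj : Function.Injective (innerₗ E z) := (injective_iff_map_eq_zero _).2 fun v hv => by
    have := abs_real_inner_eq_of_finrank_eq_one hE z v
    rw [← innerₗ_apply_apply, hv, abs_zero] at this
    exact norm_eq_zero.1 ((mul_eq_zero_iff_left (norm_ne_zero_iff.2 hz)).1 this.symm)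
  rw [← hinj.mem_set_image, segment_symm, ← LinearMap.coe_toAffineMap, image_segment]
  simp only [LinearMap.coe_toAffineMap, innerₗ_apply_apply, real_inner_comm _ z]
  rw [segment_eq_Icc (hmin i)]
  exact ⟨hmin k, (hle k).trans_eq hiz.symm⟩

lemma eventually_eq_of_finrank_eq_one (hE : finrank ℝ E = 1) (hp : PositivelySpanning p)
    (hf : ∀ i, IsFace p {i}) : ∀ᶠ q in 𝓝 p,
      (∀ i j, i ≠ j → IsExtreme ℝ (convexHull ℝ (Set.range p)) (segment ℝ (p i) (p j)) →
        ‖q i - q j‖ ≤ ‖p i - p j‖) →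
      (∀ i, ‖p i‖ ≤ ‖q i‖) → ∀ i, p i = q i := by
  suffices h : ∀ i, ∀ᶠ q in 𝓝 p,
      (∀ i j, i ≠ j → IsExtreme ℝ (convexHull ℝ (Set.range p)) (segment ℝ (p i) (p j)) →
        ‖q i - q j‖ ≤ ‖p i - p j‖) →
      (∀ i, ‖p i‖ ≤ ‖q i‖) → p i = q i by
    filter_upwards [Filter.eventually_all.2 h] with q hq hedge hnorm i using hq i hedge hnorm
  intro i
  obtain ⟨z, j, hi, hj, hhull⟩ := exists_convexHull_eq_segment hE hp hf i
  have hij : i ≠ j := by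
    rintro rfl
    linarith
  have hcont : ∀ k, Continuous fun q : ι → E => ⟪q k, z⟫ := fun k => by fun_prop
  filter_upwards [(hcont i).tendsto p |>.eventually_const_lt hi,
    (hcont j).tendsto p |>.eventually_lt_const hj] with q hqi hqj hedge hnorm
  exact (eq_of_norm_le_of_norm_sub_le hE hi hj hqi hqj (hnorm i) (hnorm j)
    (hedge i j hij (hhull ▸ .rfl))).symm

end DimensionOne

/-! ### Local rigidity of polytopes -/

section Polytope

variable {E : Type*} [NormedAddCommGroup E] [InnerProductSpace ℝ E] [FiniteDimensional ℝ E]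
variable {ι : Type*} {p : ι → E}

lemma eventually_exists_linearIsometryEquiv_of_two_le_finrank [Fintype ι]
    (hE : 2 ≤ finrank ℝ E) (hp : PositivelySpanning p) (hf : ∀ i, IsFace p {i}) : ∀ᶠ q in 𝓝 p,
      (∀ i j, i ≠ j → IsExtreme ℝ (convexHull ℝ (Set.range p)) (segment ℝ (p i) (p j)) →
        ‖q i - q j‖ ≤ ‖p i - p j‖) →
      (∀ i, ‖p i‖ ≤ ‖q i‖) → ∃ T : E ≃ₗᵢ[ℝ] E, ∀ i, T (p i) = q i := by
  obtain ⟨m, hm⟩ := Nat.exists_eq_add_of_le' hE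
  filter_upwards [(isStressSystem hp hf hm).eventually_exists_linearIsometryEquiv]
    with q hq hedge hnorm
  refine hq ⟨hnorm, fun i j hij hstress => hedge i j hij ?_⟩
  obtain ⟨z, hi, hj, hlt⟩ := exists_supporting_of_sharedRidges_nonempty hf
    ((stressMatrix_faceVolume_ne_zero_iff hf hp hm hij).1 hstress)
  exact isExtreme_segment hi hj hlt

lemma eventually_exists_linearIsometryEquiv [Finite ι] (hinj : Function.Injective p)
    (hvert : ∀ i, p i ∈ Set.extremePoints ℝ (convexHull ℝ (Set.range p)))
    (h0 : (0 : E) ∈ interior (convexHull ℝ (Set.range p))) : ∀ᶠ q in 𝓝 p,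
      (∀ i j, i ≠ j → IsExtreme ℝ (convexHull ℝ (Set.range p)) (segment ℝ (p i) (p j)) →
        ‖q i - q j‖ ≤ ‖p i - p j‖) →
      (∀ i, ‖p i‖ ≤ ‖q i‖) → ∃ T : E ≃ₗᵢ[ℝ] E, ∀ i, T (p i) = q i := by
  have := Fintype.ofFinite ι
  rcases subsingleton_or_nontrivial E with _ | _
  · exact .of_forall fun q _ _ => ⟨.refl ℝ E, fun i => Subsingleton.elim _ _⟩
  have hp := positivelySpanning_of_zero_mem_interior h0
  have hf := fun i => isFace_singleton_of_mem_extremePoints hinj hp (hvert i)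
  rcases (Nat.succ_le_of_lt (Module.finrank_pos (R := ℝ) (M := E))).eq_or_lt with hE | hE
  · filter_upwards [eventually_eq_of_finrank_eq_one hE.symm hp hf] with q hq hedge hnorm
    exact ⟨.refl ℝ E, hq hedge hnorm⟩
  · exact eventually_exists_linearIsometryEquiv_of_two_le_finrank hE hp hf

end Polytope

end PolytopeRigidity

theorem local_version_general {E : Type*} [NormedAddCommGroup E] [InnerProductSpace ℝ E]
    [FiniteDimensional ℝ E] {ι : Type*} [Finite ι] {p : ι → E} (hinj : Function.Injective p)
    (hvert : ∀ i, p i ∈ Set.extremePoints ℝ (convexHull ℝ (Set.range p)))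
    (h0 : (0 : E) ∈ interior (convexHull ℝ (Set.range p))) :
    ∃ ε > (0 : ℝ), ∀ q : ι → E, (∀ i, ‖q i - p i‖ < ε) →
      (∀ i j, i ≠ j → IsExtreme ℝ (convexHull ℝ (Set.range p)) (segment ℝ (p i) (p j)) →
        ‖q i - q j‖ ≤ ‖p i - p j‖) →
      (∀ i, ‖p i‖ ≤ ‖q i‖) → ∃ T : E ≃ₗᵢ[ℝ] E, ∀ i, T (p i) = q i := by
  have := Fintype.ofFinite ι
  obtain ⟨ε, hε, h⟩ := Metric.eventually_nhds_iff.1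
    (PolytopeRigidity.eventually_exists_linearIsometryEquiv hinj hvert h0)
  refine ⟨ε, hε, fun q hq => h ((dist_pi_lt_iff hε).2 fun i => ?_)⟩
  rw [dist_eq_norm]
  exact hq i

theorem local_version {n d : ℕ}
    (p : Fin n → EuclideanSpace ℝ (Fin d)) (hinj : Function.Injective p)
    (hvert : ∀ i, p i ∈ Set.extremePoints ℝ (convexHull ℝ (Set.range p)))
    (h0 : (0 : EuclideanSpace ℝ (Fin d)) ∈ interior (convexHull ℝ (Set.range p))) :
    ∃ ε > (0 : ℝ), ∀ q : Fin n → EuclideanSpace ℝ (Fin d),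
      (∀ i, ‖q i - p i‖ < ε) →
      (∀ i j, IsEdge p i j → ‖q i - q j‖ ≤ ‖p i - p j‖) →
      (∀ i, ‖p i‖ ≤ ‖q i‖) →
      ∃ T : EuclideanSpace ℝ (Fin d) ≃ₗᵢ[ℝ] EuclideanSpace ℝ (Fin d),
        ∀ i, T (p i) = q i := by
  obtain ⟨ε, hε, h⟩ := local_version_general hinj hvert h0
  exact ⟨ε, hε, fun q hq hedge => h q hq fun i j hij hext => hedge i j ⟨hij, hext⟩⟩
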